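/- Let m ≥ 1 and n ≥ 2 be integers, let 1 ≤ p < n/(n-1), and let 𝒦 be a finite collection of open boxes (products of m bounded open intervals) in ℝ^m with union W. There exists a constant C = C(m,n,p,𝒦) > 0 with the following property. Let U ⊆ ℝ^m be open with W ⊆ U, let a_j : U → ℂ, j = 1,…,n, be (n−1)-times continuously differentiable with all partial derivatives of order n−1 Lipschitz on W, let V be a relatively compact open subset of U whose closure is covered by 𝒦, and let λ : V → ℂ be continuous with λ(x)^n + Σ_{j=1}^n a_j(x) λ(x)^{n-j} = 0 for all x ∈ V. Then there exist functions g_1,…,g_m ∈ L^p(V, ℂ) such that for each i and every smooth compactly supported φ : V → ℝ one has ∫_V λ · ∂_i φ dx = −∫_V g_i φ dx, and (Σ_i ‖g_i‖_{L^p(V)}^p)^{1/p} ≤ C · max_{1≤j≤n} ‖a_j‖_{C^{n-1,1}(W̄)}^{1/j}, where ‖a_j‖_{C^{n-1,1}(W̄)} denotes the supremum over W of all partial derivatives of a_j of order ≤ n−1 plus the maximum of the Lipschitz constants on W of the partial derivatives of order n−1. -/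

import Mathlib

open Set MeasureTheory Real

noncomputable section

/-- The union of the open boxes `∏_i (k.1 i, k.2 i)`, `k ∈ 𝒦`. -/
def boxUnion {m : ℕ} (𝒦 : Finset ((Fin m → ℝ) × (Fin m → ℝ))) : Set (Fin m → ℝ) :=
  ⋃ k ∈ 𝒦, univ.pi fun i => Ioo (k.1 i) (k.2 i)

/-- The `C^{n-1,1}(W̄)`-norm of a function whose iterated partial derivatives are given
by `D` (indexed by lists of coordinate directions): the supremum over `W` of all partial
derivatives of order `≤ n-1` plus the maximum of the Lipschitz constants on `W` of the
partial derivatives of order `n-1`. -/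
def CNormMulti {m : ℕ} (n : ℕ) (W : Set (Fin m → ℝ))
    (D : List (Fin m) → (Fin m → ℝ) → ℂ) : ℝ :=
  sSup {r : ℝ | ∃ L : List (Fin m), L.length ≤ n - 1 ∧ ∃ x ∈ W, r = ‖D L x‖} +
  sSup {r : ℝ | ∃ L : List (Fin m), L.length = n - 1 ∧
    ∃ x ∈ W, ∃ y ∈ W, x ≠ y ∧ r = ‖D L x - D L y‖ / dist x y}

namespace RS

/-- derivative chains on the unit interval -/
def Chain {E : Type} [NormedAddCommGroup E] [NormedSpace ℝ E] (k : ℕ) (M : ℝ)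
    (F : ℕ → ℝ → E) : Prop :=
  (∀ s < k, ∀ x ∈ Ioo (0:ℝ) 1, HasDerivAt (F s) (F (s+1) x) x) ∧
  (∀ s ≤ k, ∀ x ∈ Ioo (0:ℝ) 1, ‖F s x‖ ≤ M) ∧
  ∀ x ∈ Ioo (0:ℝ) 1, ∀ y ∈ Ioo (0:ℝ) 1, ‖F k x - F k y‖ ≤ M * |x - y|

/-- the class `C^{k,1}` on the unit interval with bound `M` -/
def LC {E : Type} [NormedAddCommGroup E] [NormedSpace ℝ E] (k : ℕ) (M : ℝ)
    (f : ℝ → E) : Prop := ∃ F : ℕ → ℝ → E, F 0 = f ∧ Chain k M F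

section
variable {E F G : Type} [NormedAddCommGroup E] [NormedSpace ℝ E]
  [NormedAddCommGroup F] [NormedSpace ℝ F] [NormedAddCommGroup G] [NormedSpace ℝ G]

lemma half_mem : (1/2 : ℝ) ∈ Ioo (0:ℝ) 1 := by constructor <;> norm_num

lemma LC.bound {k : ℕ} {M : ℝ} {f : ℝ → E} (h : LC k M f) : ∀ x ∈ Ioo (0:ℝ) 1, ‖f x‖ ≤ M := by
  obtain ⟨H, rfl, hH⟩ := h
  exact hH.2.1 0 (by omega)

lemma LC.nonneg {k : ℕ} {M : ℝ} {f : ℝ → E} (h : LC k M f) : 0 ≤ M :=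
  (norm_nonneg _).trans (h.bound _ half_mem)

lemma LC_zero_iff {M : ℝ} {f : ℝ → E} : LC 0 M f ↔ (∀ x ∈ Ioo (0:ℝ) 1, ‖f x‖ ≤ M) ∧
    ∀ x ∈ Ioo (0:ℝ) 1, ∀ y ∈ Ioo (0:ℝ) 1, ‖f x - f y‖ ≤ M * |x - y| := by
  constructor
  · rintro ⟨H, rfl, h1, h2, h3⟩
    exact ⟨h2 0 le_rfl, h3⟩
  · rintro ⟨h1, h2⟩
    refine ⟨fun _ => f, rfl, by simp, ?_, h2⟩
    intro s _
    exact h1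

lemma LC_succ_iff {k : ℕ} {M : ℝ} {f : ℝ → E} : LC (k+1) M f ↔
    (∀ x ∈ Ioo (0:ℝ) 1, ‖f x‖ ≤ M) ∧
    ∃ f' : ℝ → E, (∀ x ∈ Ioo (0:ℝ) 1, HasDerivAt f (f' x) x) ∧ LC k M f' := by
  constructor
  · rintro ⟨H, rfl, h1, h2, h3⟩
    refine ⟨h2 0 (by omega), H 1, h1 0 (by omega), fun s => H (s+1), rfl, ?_, ?_, h3⟩
    · intro s hs; exact h1 (s+1) (by omega)
    · intro s hs; exact h2 (s+1) (by omega)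
  · rintro ⟨h0, f', hd, H, rfl, h1, h2, h3⟩
    refine ⟨fun s => match s with | 0 => f | (s+1) => H s, rfl, ?_, ?_, h3⟩
    · intro s hs
      match s with
      | 0 => exact hd
      | s+1 => exact h1 s (by omega)
    · intro s hs
      match s with
      | 0 => exact h0
      | s+1 => exact h2 s (by omega)

lemma lip_of_deriv {f f' : ℝ → E} {M : ℝ} (hd : ∀ x ∈ Ioo (0:ℝ) 1, HasDerivAt f (f' x) x)
    (hb : ∀ x ∈ Ioo (0:ℝ) 1, ‖f' x‖ ≤ M) :
    ∀ x ∈ Ioo (0:ℝ) 1, ∀ y ∈ Ioo (0:ℝ) 1, ‖f x - f y‖ ≤ M * |x - y| := by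
  intro x hx y hy
  have := (convex_Ioo (0:ℝ) 1).norm_image_sub_le_of_norm_hasDerivWithin_le
    (fun x hx => (hd x hx).hasDerivWithinAt) hb hy hx
  simpa using this

lemma LC.of_succ {k : ℕ} {M : ℝ} {f : ℝ → E} (h : LC (k+1) M f) : LC k M f := by
  obtain ⟨H, rfl, h1, h2, h3⟩ := h
  exact ⟨H, rfl, fun s hs => h1 s (by omega), fun s hs => h2 s (by omega),
    lip_of_deriv (h1 k (by omega)) (h2 (k+1) (by omega))⟩

lemma LC.mono {k : ℕ} {M M' : ℝ} {f : ℝ → E} (h : LC k M f) (hM : M ≤ M') : LC k M' f := by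
  obtain ⟨H, rfl, h1, h2, h3⟩ := h
  refine ⟨H, rfl, h1, fun s hs x hx => (h2 s hs x hx).trans hM, fun x hx y hy =>
    (h3 x hx y hy).trans (by gcongr)⟩

lemma LC.congr {k : ℕ} {M : ℝ} {f g : ℝ → E} (h : LC k M f)
    (hfg : ∀ x ∈ Ioo (0:ℝ) 1, f x = g x) : LC k M g := by
  cases k with
  | zero =>
    rw [LC_zero_iff] at *
    refine ⟨fun x hx => by rw [← hfg x hx]; exact h.1 x hx, fun x hx y hy => ?_⟩
    rw [← hfg x hx, ← hfg y hy]; exact h.2 x hx y hy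
  | succ k =>
    rw [LC_succ_iff] at *
    obtain ⟨h1, f', h2, h3⟩ := h
    refine ⟨fun x hx => by rw [← hfg x hx]; exact h1 x hx, f', fun x hx => ?_, h3⟩
    refine (h2 x hx).congr_of_eventuallyEq ?_
    filter_upwards [isOpen_Ioo.mem_nhds hx] with y hy using (hfg y hy).symm

lemma LC.add {k : ℕ} {M M' : ℝ} {f g : ℝ → E} (h : LC k M f) (h' : LC k M' g) :
    LC k (M + M') (fun x => f x + g x) := by
  obtain ⟨H, rfl, h1, h2, h3⟩ := h
  obtain ⟨H', rfl, h1', h2', h3'⟩ := h'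
  refine ⟨fun s x => H s x + H' s x, rfl, fun s hs x hx => (h1 s hs x hx).add (h1' s hs x hx),
    fun s hs x hx => (norm_add_le _ _).trans (add_le_add (h2 s hs x hx) (h2' s hs x hx)),
    fun x hx y hy => ?_⟩
  calc ‖H k x + H' k x - (H k y + H' k y)‖ = ‖(H k x - H k y) + (H' k x - H' k y)‖ := by
        congr 1; abel
    _ ≤ _ := (norm_add_le _ _).trans (add_le_add (h3 x hx y hy) (h3' x hx y hy))
    _ = _ := by ring

lemma LC.clm {k : ℕ} {M : ℝ} {f : ℝ → E} (L : E →L[ℝ] F) (h : LC k M f) :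
    LC k (‖L‖ * M) (fun x => L (f x)) := by
  obtain ⟨H, rfl, h1, h2, h3⟩ := h
  refine ⟨fun s x => L (H s x), rfl, fun s hs x hx => L.hasFDerivAt.comp_hasDerivAt x (h1 s hs x hx),
    fun s hs x hx => L.le_opNorm_of_le (h2 s hs x hx), fun x hx y hy => ?_⟩
  rw [← map_sub, mul_assoc]
  exact L.le_opNorm_of_le (h3 x hx y hy)

lemma LC.pi {ι : Type} [Fintype ι] {k : ℕ} {M : ℝ} (hM : 0 ≤ M) {f : ℝ → ι → E}
    (h : ∀ i, LC k M (fun x => f x i)) : LC k M f := by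
  choose H h0 h1 h2 h3 using h
  refine ⟨fun s x i => H i s x, ?_, ?_, ?_, ?_⟩
  · ext x i; exact congrFun (h0 i) x
  · intro s hs x hx
    rw [hasDerivAt_pi]
    exact fun i => h1 i s hs x hx
  · intro s hs x hx
    rw [pi_norm_le_iff_of_nonneg hM]
    exact fun i => h2 i s hs x hx
  · intro x hx y hy
    rw [pi_norm_le_iff_of_nonneg (by positivity)]
    exact fun i => h3 i x hx y hy

lemma LC.bilin (B : E →L[ℝ] F →L[ℝ] G) (k : ℕ) : ∀ M M' : ℝ, ∃ C : ℝ, ∀ (f : ℝ → E) (g : ℝ → F),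
    LC k M f → LC k M' g → LC k C (fun x => B (f x) (g x)) := by
  have hb : ∀ {M M' : ℝ} {u : E} {v : F}, 0 ≤ M → ‖u‖ ≤ M → ‖v‖ ≤ M' → ‖B u v‖ ≤ ‖B‖ * M * M' := by
    intro M M' u v hM hu hv
    refine (B.le_opNorm₂ u v).trans ?_
    gcongr
  induction k with
  | zero =>
    intro M M'
    refine ⟨‖B‖ * M * M' + ‖B‖ * M * M', fun f g hf hg => ?_⟩
    have hM := hf.nonneg
    have hM' := hg.nonneg
    have p1 : 0 ≤ ‖B‖ * M * M' := by positivity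
    rw [LC_zero_iff] at *
    refine ⟨fun x hx => (hb hM (hf.1 x hx) (hg.1 x hx)).trans (by linarith), fun x hx y hy => ?_⟩
    have e : B (f x) (g x) - B (f y) (g y) = B (f x - f y) (g x) + B (f y) (g x - g y) := by
      simp
    rw [e]
    refine (norm_add_le _ _).trans ?_
    have q1 := hb (by positivity) (hf.2 x hx y hy) (hg.1 x hx)
    have q2 := hb hM (hf.1 y hy) (hg.2 x hx y hy)
    linarith
  | succ k ih =>
    intro M M'
    obtain ⟨C, hC⟩ := ih M M'
    refine ⟨max (‖B‖ * M * M') (C + C), fun f g hf hg => ?_⟩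
    have hM := hf.nonneg
    have hfk := hf.of_succ
    have hgk := hg.of_succ
    rw [LC_succ_iff] at *
    obtain ⟨f0, f', f1, f2⟩ := hf
    obtain ⟨g0, g', g1, g2⟩ := hg
    refine ⟨fun x hx => (hb hM (f0 x hx) (g0 x hx)).trans (le_max_left _ _),
      fun x => B (f x) (g' x) + B (f' x) (g x), fun x hx => ?_, ?_⟩
    · exact B.hasDerivAt_of_bilinear (fun _ => f1 x hx) (fun _ => g1 x hx)
    · exact ((hC f g' hfk g2).add (hC f' g f2 hgk)).mono (le_max_right _ _)

end

lemma LC.comp_aux {E : Type} [NormedAddCommGroup E] [NormedSpace ℝ E] [ProperSpace E] (k : ℕ) :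
    ∀ (F : Type) [NormedAddCommGroup F] [NormedSpace ℝ F] (Ψ : E → F) (c : E) (r R : ℝ), r < R →
    ContDiffOn ℝ (k+1 : ℕ) Ψ (Metric.ball c R) → ∀ M : ℝ, ∃ C : ℝ, ∀ f : ℝ → E, LC k M f →
    (∀ x ∈ Ioo (0:ℝ) 1, f x ∈ Metric.closedBall c r) → LC k C (fun x => Ψ (f x)) := by
  have hbd : ∀ (F : Type) [NormedAddCommGroup F] [NormedSpace ℝ F] (Ψ : E → F) (c : E) (r R : ℝ),
      r < R → ContinuousOn Ψ (Metric.ball c R) →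
      ∃ C : ℝ, 0 ≤ C ∧ ∀ x ∈ Metric.closedBall c r, ‖Ψ x‖ ≤ C := by
    intro F _ _ Ψ c r R hr hΨ
    obtain ⟨C, hC⟩ := (isCompact_closedBall c r).exists_bound_of_continuousOn
      (hΨ.mono (Metric.closedBall_subset_ball hr))
    exact ⟨max C 0, le_max_right _ _, fun x hx => (hC x hx).trans (le_max_left _ _)⟩
  induction k with
  | zero =>
    intro F _ _ Ψ c r R hr hΨ M
    obtain ⟨C1, h10, hC1⟩ := hbd F Ψ c r R hr hΨ.continuousOn
    have hcd : ContinuousOn (fderiv ℝ Ψ) (Metric.ball c R) :=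
      hΨ.continuousOn_fderiv_of_isOpen Metric.isOpen_ball (by simp)
    obtain ⟨C2, h20, hC2⟩ := hbd _ (fderiv ℝ Ψ) c r R hr hcd
    refine ⟨max C1 (C2 * M), fun f hf hfb => ?_⟩
    rw [LC_zero_iff] at *
    refine ⟨fun x hx => (hC1 _ (hfb x hx)).trans (le_max_left _ _), fun x hx y hy => ?_⟩
    have hdiff : ∀ z ∈ Metric.closedBall c r, DifferentiableAt ℝ Ψ z := fun z hz =>
      (hΨ.differentiableOn (by simp)).differentiableAt
        (Metric.isOpen_ball.mem_nhds (Metric.closedBall_subset_ball hr hz))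
    have := (convex_closedBall c r).norm_image_sub_le_of_norm_fderiv_le hdiff hC2
      (hfb y hy) (hfb x hx)
    refine this.trans ?_
    calc C2 * ‖f x - f y‖ ≤ C2 * (M * |x - y|) := by gcongr; exact hf.2 x hx y hy
      _ = (C2 * M) * |x - y| := by ring
      _ ≤ _ := by gcongr; exact le_max_right _ _
  | succ k ih =>
    intro F _ _ Ψ c r R hr hΨ M
    obtain ⟨C1, h10, hC1⟩ := hbd F Ψ c r R hr hΨ.continuousOn
    have hcd : ContDiffOn ℝ (k+1 : ℕ) (fderiv ℝ Ψ) (Metric.ball c R) :=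
      hΨ.fderiv_of_isOpen Metric.isOpen_ball (by norm_cast)
    obtain ⟨C2, hC2⟩ := ih _ (fderiv ℝ Ψ) c r R hr hcd M
    obtain ⟨C3, hC3⟩ := LC.bilin (ContinuousLinearMap.id ℝ (E →L[ℝ] F)) k C2 M
    refine ⟨max C1 C3, fun f hf hfb => ?_⟩
    have hfk := hf.of_succ
    rw [LC_succ_iff] at *
    obtain ⟨f0, f', f1, f2⟩ := hf
    refine ⟨fun x hx => (hC1 _ (hfb x hx)).trans (le_max_left _ _),
      fun x => fderiv ℝ Ψ (f x) (f' x), fun x hx => ?_, ?_⟩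
    · have hd : DifferentiableAt ℝ Ψ (f x) := (hΨ.differentiableOn (by simp)).differentiableAt
        (Metric.isOpen_ball.mem_nhds (Metric.closedBall_subset_ball hr (hfb x hx)))
      exact hd.hasFDerivAt.comp_hasDerivAt x (f1 x hx)
    · exact (hC3 _ _ (hC2 f hfk hfb) f2).mono (le_max_right _ _)

section
variable {E : Type} [NormedAddCommGroup E] [NormedSpace ℝ E]

lemma landau_two {f f' : ℝ → E} {A K h : ℝ} (h0 : 0 < h) (h1 : h < 1/2)
    (hd : ∀ x ∈ Ioo (0:ℝ) 1, HasDerivAt f (f' x) x)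
    (hA : ∀ x ∈ Ioo (0:ℝ) 1, ‖f x‖ ≤ A)
    (hK : ∀ x ∈ Ioo (0:ℝ) 1, ∀ y ∈ Ioo (0:ℝ) 1, ‖f' x - f' y‖ ≤ K * |x - y|) :
    ∀ x ∈ Ioo (0:ℝ) 1, ‖f' x‖ ≤ 2 * A / h + h * K := by
  intro x hx
  have hK0 : 0 ≤ K := by
    have := hK (1/2) half_mem (1/4) (by constructor <;> norm_num)
    have h2 := (norm_nonneg _).trans this
    norm_num at h2
    exact h2
  obtain ⟨y, hy, hxy⟩ : ∃ y ∈ Ioo (0:ℝ) 1, |y - x| = h := by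
    by_cases hh : x < 1/2
    · exact ⟨x + h, ⟨by linarith [hx.1], by linarith⟩, by simp [abs_of_pos h0]⟩
    · exact ⟨x - h, ⟨by linarith [hx.1], by linarith [hx.2]⟩, by simp [abs_of_pos h0]⟩
  have hsub : uIcc x y ⊆ Ioo (0:ℝ) 1 := (convex_Ioo (0:ℝ) 1).ordConnected.uIcc_subset hx hy
  have key := (convex_uIcc x y).norm_image_sub_le_of_norm_hasDerivWithin_le
    (f := fun t => f t - t • f' x) (f' := fun t => f' t - f' x) (C := K * h)
    (fun t ht => by
      have := (hd t (hsub ht)).fun_sub ((hasDerivAt_id t).smul_const (f' x))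
      simpa using this.hasDerivWithinAt)
    (fun t ht => by
      refine (hK t (hsub ht) x hx).trans ?_
      gcongr
      rw [← hxy]
      have := Set.abs_sub_left_of_mem_uIcc ht
      exact this)
    left_mem_uIcc right_mem_uIcc
  rw [Real.norm_eq_abs, hxy] at key
  have e : f y - y • f' x - (f x - x • f' x) = (f y - f x) - (y - x) • f' x := by
    rw [sub_smul]; abel
  rw [e] at key
  have h3 : ‖(y - x) • f' x‖ ≤ ‖f y - f x‖ + K * h * h := by
    have := norm_sub_norm_le ((y - x) • f' x) (f y - f x)
    rw [norm_sub_rev ((y - x) • f' x) (f y - f x)] at this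
    linarith
  rw [norm_smul, Real.norm_eq_abs, hxy] at h3
  have h4 : ‖f y - f x‖ ≤ 2 * A := (norm_sub_le _ _).trans (by linarith [hA x hx, hA y hy])
  have h5 : ‖f' x‖ ≤ (2 * A + K * h * h) / h := by
    rw [le_div_iff₀ h0]; linarith
  refine h5.trans (le_of_eq ?_)
  field_simp

lemma landau (k : ℕ) : ∃ C0 : ℝ, 1 ≤ C0 ∧ ∀ (F : ℕ → ℝ → E) (M A K : ℝ), Chain k M F →
    (∀ x ∈ Ioo (0:ℝ) 1, ‖F 0 x‖ ≤ A) →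
    (∀ x ∈ Ioo (0:ℝ) 1, ∀ y ∈ Ioo (0:ℝ) 1, ‖F k x - F k y‖ ≤ K * |x - y|) →
    ∀ s ≤ k, ∀ x ∈ Ioo (0:ℝ) 1, ‖F s x‖ ≤ C0 * (A + K) := by
  have hK0 : ∀ (f : ℝ → E) (K : ℝ), (∀ x ∈ Ioo (0:ℝ) 1, ∀ y ∈ Ioo (0:ℝ) 1,
      ‖f x - f y‖ ≤ K * |x - y|) → 0 ≤ K := by
    intro f K hK
    have := hK (1/2) half_mem (1/4) (by constructor <;> norm_num)
    have h2 := (norm_nonneg _).trans this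
    norm_num at h2
    exact h2
  induction k with
  | zero =>
    refine ⟨1, le_rfl, fun F M A K _ hA hK s hs x hx => ?_⟩
    obtain rfl : s = 0 := by omega
    linarith [hA x hx, hK0 _ _ hK]
  | succ k ih =>
    obtain ⟨C, hC1, hC⟩ := ih
    refine ⟨C * (16 * C + 5), by nlinarith, fun F M A K hF hA hK => ?_⟩
    have hKn := hK0 _ _ hK
    have hAn : 0 ≤ A := (norm_nonneg _).trans (hA _ half_mem)
    obtain ⟨c1, c2, c3⟩ := hF
    have hshift : ∀ B : ℝ, (∀ x ∈ Ioo (0:ℝ) 1, ‖F 1 x‖ ≤ B) → ∀ s ≤ k, ∀ x ∈ Ioo (0:ℝ) 1,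
        ‖F (s+1) x‖ ≤ C * (B + K) := by
      intro B hB
      exact hC (fun s => F (s+1)) M B K ⟨fun s hs => c1 (s+1) (by omega),
        fun s hs => c2 (s+1) (by omega), c3⟩ hB hK
    set S : Set ℝ := (fun x => ‖F 1 x‖) '' Ioo (0:ℝ) 1 with hS
    have hSb : BddAbove S := ⟨M, by rintro _ ⟨x, hx, rfl⟩; exact c2 1 (by omega) x hx⟩
    have hSn : S.Nonempty := ⟨_, 1/2, half_mem, rfl⟩
    set B := sSup S with hB
    have hBb : ∀ x ∈ Ioo (0:ℝ) 1, ‖F 1 x‖ ≤ B := fun x hx => le_csSup hSb ⟨x, hx, rfl⟩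
    have hB0 : 0 ≤ B := (norm_nonneg _).trans (hBb _ half_mem)
    have hsB := hshift B hBb
    have hlip : ∀ x ∈ Ioo (0:ℝ) 1, ∀ y ∈ Ioo (0:ℝ) 1,
        ‖F 1 x - F 1 y‖ ≤ (C * (B + K)) * |x - y| := by
      cases k with
      | zero =>
        intro x hx y hy
        refine (hK x hx y hy).trans ?_
        gcongr
        nlinarith
      | succ k => exact lip_of_deriv (c1 1 (by omega)) (hsB 1 (by omega))
    have hl := landau_two (h := 1 / (4 * C)) (by positivity)
      (by rw [div_lt_div_iff₀ (by positivity) (by norm_num)]; linarith)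
      (c1 0 (by omega)) hA hlip
    have hB2 : B ≤ 2 * A / (1 / (4 * C)) + 1 / (4 * C) * (C * (B + K)) := by
      refine csSup_le hSn ?_
      rintro _ ⟨x, hx, rfl⟩
      exact hl x hx
    have e1 : 2 * A / (1 / (4 * C)) = 8 * C * A := by field_simp; ring
    have e2 : 1 / (4 * C) * (C * (B + K)) = (B + K) / 4 := by field_simp
    rw [e1, e2] at hB2
    have hB3 : B ≤ 16 * C * A + K := by nlinarith
    intro s hs x hx
    match s with
    | 0 =>
      refine (hA x hx).trans ?_
      have : 1 ≤ C * (16 * C + 5) := by nlinarith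
      nlinarith
    | s+1 =>
      refine (hsB s (by omega) x hx).trans ?_
      rw [mul_assoc]
      gcongr
      nlinarith [mul_nonneg hAn (by linarith : 0 ≤ C), mul_nonneg hKn (by linarith : 0 ≤ C)]

end
end RS

namespace RS

lemma rolle_finset {f f' : ℝ → ℝ} {a b : ℝ} (hd : ∀ x ∈ Ioo a b, HasDerivAt f (f' x) x)
    (k : ℕ) (s : Finset ℝ) (hs : ∀ x ∈ s, x ∈ Ioo a b ∧ f x = 0) (hk : s.card = k + 1) :
    ∃ s' : Finset ℝ, (∀ x ∈ s', x ∈ Ioo a b ∧ f' x = 0) ∧ s'.card = k := by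
  set e := s.orderEmbOfFin hk with he
  have hmem : ∀ i, e i ∈ s := fun i => s.orderEmbOfFin_mem hk i
  have : ∀ i : Fin k, ∃ z ∈ Ioo (e i.castSucc) (e i.succ), f' z = 0 := by
    intro i
    have hlt : e i.castSucc < e i.succ := e.strictMono (Fin.castSucc_lt_succ)
    have hsub : Icc (e i.castSucc) (e i.succ) ⊆ Ioo a b := fun x hx =>
      ⟨(hs _ (hmem _)).1.1.trans_le hx.1, hx.2.trans_lt (hs _ (hmem _)).1.2⟩
    refine exists_hasDerivAt_eq_zero hlt
      (fun x hx => (hd x (hsub hx)).continuousAt.continuousWithinAt) ?_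
      (fun x hx => hd x (hsub (Ioo_subset_Icc_self hx)))
    rw [(hs _ (hmem _)).2, (hs _ (hmem _)).2]
  choose z hz hz0 using this
  have hmono : StrictMono z := by
    intro i j hij
    have h1 : e i.succ ≤ e j.castSucc := e.monotone (by
      rw [Fin.le_def]; simp; exact hij)
    exact (hz i).2.trans_le (h1.trans (hz j).1.le)
  refine ⟨Finset.univ.map ⟨z, hmono.injective⟩, ?_, by simp⟩
  intro x hx
  simp only [Finset.mem_map, Finset.mem_univ, true_and, Function.Embedding.coeFn_mk] at hx
  obtain ⟨i, rfl⟩ := hx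
  exact ⟨⟨(hs _ (hmem i.castSucc)).1.1.trans (hz i).1, (hz i).2.trans (hs _ (hmem i.succ)).1.2⟩, hz0 i⟩

lemma window {a b Λ : ℝ} (hab : a ≤ b) (hΛ : 0 ≤ Λ) (k : ℕ) : ∀ (H : ℕ → ℝ → ℝ),
    (∀ s < k, ∀ x ∈ Ioo a b, HasDerivAt (H s) (H (s+1) x) x) →
    (∀ x ∈ Ioo a b, ∀ y ∈ Ioo a b, |H k x - H k y| ≤ Λ * |x - y|) →
    ∀ s : Finset ℝ, (∀ x ∈ s, x ∈ Ioo a b ∧ H 0 x = 0) → s.card = k + 1 →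
    ∀ x ∈ Ioo a b, |H 0 x| ≤ Λ * (b - a) ^ (k+1) := by
  have hdist : ∀ x ∈ Ioo a b, ∀ y ∈ Ioo a b, |x - y| ≤ b - a := by
    intro x hx y hy
    rw [abs_le]; constructor <;> linarith [hx.1, hx.2, hy.1, hy.2]
  induction k with
  | zero =>
    intro H _ hL s hs hc x hx
    obtain ⟨z, hz⟩ := Finset.card_pos.1 (by omega : 0 < s.card)
    obtain ⟨hz1, hz2⟩ := hs z hz
    have := hL x hx z hz1
    rw [hz2, sub_zero] at this
    refine this.trans ?_
    simp only [zero_add, pow_one]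
    gcongr
    exact hdist x hx z hz1
  | succ k ih =>
    intro H hd hL s hs hc x hx
    obtain ⟨s', hs', hc'⟩ := rolle_finset (hd 0 (by omega)) (k+1) s hs hc
    have h1 := ih (fun i => H (i+1)) (fun i hi => hd (i+1) (by omega)) hL s' hs' hc'
    obtain ⟨z, hz⟩ := Finset.card_pos.1 (by omega : 0 < s.card)
    obtain ⟨hz1, hz2⟩ := hs z hz
    have := (convex_Ioo a b).norm_image_sub_le_of_norm_hasDerivWithin_le
      (fun x hx => (hd 0 (by omega) x hx).hasDerivWithinAt) h1 hz1 hx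
    rw [hz2, sub_zero, Real.norm_eq_abs, Real.norm_eq_abs] at this
    refine this.trans ?_
    have : Λ * (b - a) ^ (k + 1 + 1) = Λ * (b - a) ^ (k + 1) * (b - a) := by ring
    rw [this]
    have hba : 0 ≤ b - a := by linarith
    gcongr
    exact hdist x hx z hz1

lemma lint_pos {γ : ℝ} (h1 : γ < 1) {l : ℝ} (hl : 0 ≤ l) :
    ∫⁻ y in Ioc 0 l, ‖y‖ₑ ^ (-γ) = ENNReal.ofReal (l ^ (1 - γ) / (1 - γ)) := by
  have hi : IntervalIntegrable (fun y : ℝ => y ^ (-γ)) volume 0 l :=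
    intervalIntegral.intervalIntegrable_rpow' (by linarith)
  have e : ∫ y in (0:ℝ)..l, y ^ (-γ) = l ^ (1 - γ) / (1 - γ) := by
    rw [integral_rpow (Or.inl (by linarith)), Real.zero_rpow (by linarith)]
    ring_nf
  rw [← e, intervalIntegral.integral_of_le hl, ofReal_integral_eq_lintegral_ofReal hi.1]
  · refine setLIntegral_congr_fun measurableSet_Ioc fun y hy => ?_
    simp only [Real.enorm_eq_ofReal hy.1.le]
    rw [ENNReal.ofReal_rpow_of_pos hy.1]
  · refine (ae_restrict_iff' measurableSet_Ioc).2 (Filter.Eventually.of_forall fun y hy => ?_)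
    exact Real.rpow_nonneg hy.1.le _

lemma lint_sym {γ : ℝ} (h1 : γ < 1) {l : ℝ} (hl : 0 ≤ l) :
    ∫⁻ y in Icc (-l) l, ‖y‖ₑ ^ (-γ) ≤ 2 * ENNReal.ofReal (l ^ (1 - γ) / (1 - γ)) := by
  have hsub : Icc (-l) l ⊆ ((fun y => -y) '' Ioc 0 l ∪ {0}) ∪ Ioc 0 l := by
    intro y hy
    rcases lt_trichotomy y 0 with h | h | h
    · left; left; exact ⟨-y, ⟨by linarith, by linarith [hy.1]⟩, by simp⟩
    · left; right; exact h
    · right; exact ⟨h, hy.2⟩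
  refine (lintegral_mono_set hsub).trans ?_
  refine (lintegral_union_le _ _ _).trans ?_
  have h2 : ∫⁻ y in ((fun y : ℝ => -y) '' Ioc 0 l) ∪ {0}, ‖y‖ₑ ^ (-γ) ≤
      ENNReal.ofReal (l ^ (1 - γ) / (1 - γ)) := by
    refine (lintegral_union_le _ _ _).trans ?_
    rw [lintegral_image_eq_lintegral_abs_deriv_mul (f' := fun _ => -1) measurableSet_Ioc
      (fun x _ => (hasDerivAt_neg x).hasDerivWithinAt) (fun x _ y _ h => by simpa using h)]
    simp only [enorm_neg, abs_neg, abs_one, ENNReal.ofReal_one, one_mul]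
    rw [lint_pos h1 hl]
    simp
  rw [lint_pos h1 hl, two_mul]
  gcongr

lemma lint_ball {γ : ℝ} (h0 : 0 ≤ γ) (h1 : γ < 1) {l : ℝ} (hl : 0 ≤ l) (c : ℝ) :
    ∫⁻ y in Icc (c - l) (c + l), ‖y‖ₑ ^ (-γ) ≤
      ENNReal.ofReal ((2 / (1 - γ) + 2) * l ^ (1 - γ)) := by
  rcases hl.eq_or_lt with rfl | hl'
  · simp
  have hsub : Icc (c - l) (c + l) ⊆ Icc (-l) l ∪ (Icc (c - l) (c + l) \ Icc (-l) l) := by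
    intro y hy
    by_cases h : y ∈ Icc (-l) l
    · left; exact h
    · right; exact ⟨hy, h⟩
  refine (lintegral_mono_set hsub).trans ?_
  refine (lintegral_union_le _ _ _).trans ?_
  have h2 : ∫⁻ y in Icc (c - l) (c + l) \ Icc (-l) l, ‖y‖ₑ ^ (-γ) ≤
      ENNReal.ofReal (2 * l ^ (1 - γ)) := by
    calc _ ≤ ∫⁻ y in Icc (c - l) (c + l) \ Icc (-l) l, ENNReal.ofReal (l ^ (-γ)) := by
          refine setLIntegral_mono' (measurableSet_Icc.diff measurableSet_Icc) fun y hy => ?_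
          have hy2 : l ≤ |y| := by
            by_contra hcon
            exact hy.2 (abs_le.1 (not_le.1 hcon).le)
          rw [← ENNReal.ofReal_rpow_of_pos hl', Real.enorm_eq_ofReal_abs,
            ENNReal.rpow_neg, ENNReal.rpow_neg]
          gcongr
      _ ≤ ∫⁻ y in Icc (c - l) (c + l), ENNReal.ofReal (l ^ (-γ)) := lintegral_mono_set sdiff_subset
      _ = _ := by
        rw [setLIntegral_const, Real.volume_Icc, ← ENNReal.ofReal_mul (by positivity)]
        congr 1
        rw [show (1 - γ) = -γ + 1 by ring, Real.rpow_add hl', Real.rpow_one]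
        ring
  refine (add_le_add (lint_sym h1 hl) h2).trans ?_
  have h3 : 0 < 1 - γ := by linarith
  rw [show (2 : ENNReal) = ENNReal.ofReal 2 by simp, ← ENNReal.ofReal_mul (by norm_num),
    ← ENNReal.ofReal_add (by positivity) (by positivity)]
  apply ENNReal.ofReal_le_ofReal
  apply le_of_eq
  ring

/-- integrand of the radical lemma -/
def Grad (u u' : ℝ → ℝ) (q : ℝ) (x : ℝ) : ENNReal := ‖u' x‖ₑ * ‖u x‖ₑ ^ (-q)

lemma gap_bound {u u' : ℝ → ℝ} {a b K p q : ℝ} (hp : 1 ≤ p) (hq : 0 ≤ q) (hpq : q * p < 1)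
    (hd : ∀ x ∈ Ioo a b, HasDerivAt u (u' x) x) (hK : ∀ x ∈ Ioo a b, |u' x| ≤ K)
    (hz : ∀ x ∈ Ioo a b, u' x ≠ 0) :
    ∫⁻ x in Ioo a b, Grad u u' q x ^ p ≤
      ENNReal.ofReal (K ^ (p - 1) * ((2 / (1 - q * p) + 2) * (K * (b - a)) ^ (1 - q * p))) := by
  rcases le_or_gt b a with hba | hab
  · simp [Ioo_eq_empty (not_lt.2 hba)]
  obtain ⟨x0, hx0⟩ := nonempty_Ioo.2 hab
  have hK0 : 0 ≤ K := (abs_nonneg _).trans (hK x0 hx0)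
  have hinj : InjOn u (Ioo a b) := by
    have key : ∀ x ∈ Ioo a b, ∀ y ∈ Ioo a b, x < y → u x ≠ u y := by
      intro x hx y hy hxy h
      have hsub : Icc x y ⊆ Ioo a b := fun t ht => ⟨hx.1.trans_le ht.1, ht.2.trans_lt hy.2⟩
      obtain ⟨c, hc, hc0⟩ := exists_hasDerivAt_eq_zero hxy
        (fun t ht => (hd t (hsub ht)).continuousAt.continuousWithinAt) h
        (fun t ht => hd t (hsub (Ioo_subset_Icc_self ht)))
      exact hz c (hsub (Ioo_subset_Icc_self hc)) hc0
    intro x hx y hy h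
    rcases lt_trichotomy x y with h' | h' | h'
    · exact (key x hx y hy h' h).elim
    · exact h'
    · exact (key y hy x hx h' h.symm).elim
  have himg : u '' Ioo a b ⊆ Icc (u x0 - K * (b - a)) (u x0 + K * (b - a)) := by
    rintro _ ⟨x, hx, rfl⟩
    have := (convex_Ioo a b).norm_image_sub_le_of_norm_hasDerivWithin_le
      (fun x hx => (hd x hx).hasDerivWithinAt) hK hx0 hx
    rw [Real.norm_eq_abs, Real.norm_eq_abs] at this
    have h2 : |x - x0| ≤ b - a := by
      rw [abs_le]; constructor <;> linarith [hx.1, hx.2, hx0.1, hx0.2]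
    have h3 : |u x - u x0| ≤ K * (b - a) := this.trans (by gcongr)
    rw [abs_le] at h3
    constructor <;> linarith [h3.1, h3.2]
  calc ∫⁻ x in Ioo a b, Grad u u' q x ^ p
      ≤ ∫⁻ x in Ioo a b, ENNReal.ofReal (K ^ (p - 1)) *
          (ENNReal.ofReal |u' x| * ‖u x‖ₑ ^ (-(q * p))) := by
        refine setLIntegral_mono' measurableSet_Ioo fun x hx => ?_
        have hpos : 0 < |u' x| := abs_pos.2 (hz x hx)
        rw [Grad, ENNReal.mul_rpow_of_nonneg _ _ (by linarith), ← ENNReal.rpow_mul,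
          ← mul_assoc, Real.enorm_eq_ofReal_abs, neg_mul]
        gcongr
        rw [ENNReal.ofReal_rpow_of_pos hpos, ← ENNReal.ofReal_mul (by positivity)]
        apply ENNReal.ofReal_le_ofReal
        have : |u' x| ^ p = |u' x| ^ (p - 1) * |u' x| := by
          conv_lhs => rw [show p = (p - 1) + 1 by ring]
          rw [Real.rpow_add hpos, Real.rpow_one]
        rw [this]
        gcongr
        exact hK x hx
    _ = ENNReal.ofReal (K ^ (p - 1)) * ∫⁻ y in u '' Ioo a b, ‖y‖ₑ ^ (-(q * p)) := by
        rw [lintegral_const_mul' _ _ ENNReal.ofReal_ne_top,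
          lintegral_image_eq_lintegral_abs_deriv_mul measurableSet_Ioo
          (fun x hx => (hd x hx).hasDerivWithinAt) hinj]
    _ ≤ _ := by
        rw [ENNReal.ofReal_mul (by positivity)]
        gcongr
        refine (lintegral_mono_set himg).trans ?_
        exact lint_ball (by positivity) hpq (by
          have : 0 ≤ b - a := by linarith
          positivity) _

lemma multi_gap {u u' : ℝ → ℝ} {p q D : ℝ} (hp : 1 ≤ p) (hq : 0 ≤ q) (hpq : q * p < 1)
    (K ℓ : ℝ)
    (hD : D = K ^ (p - 1) * ((2 / (1 - q * p) + 2) * (K * ℓ) ^ (1 - q * p))) (c : ℕ) :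
    ∀ a b : ℝ, b - a ≤ ℓ →
    (∀ x ∈ Ioo a b, HasDerivAt u (u' x) x) → (∀ x ∈ Ioo a b, |u' x| ≤ K) →
    (¬ ∃ s : Finset ℝ, (∀ x ∈ s, x ∈ Ioo a b ∧ u' x = 0) ∧ s.card = c + 1) →
    ∫⁻ x in Ioo a b, Grad u u' q x ^ p ≤ 2 ^ c * ENNReal.ofReal D := by
  have base : ∀ a b : ℝ, b - a ≤ ℓ →
    (∀ x ∈ Ioo a b, HasDerivAt u (u' x) x) → (∀ x ∈ Ioo a b, |u' x| ≤ K) →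
    (∀ x ∈ Ioo a b, u' x ≠ 0) →
    ∫⁻ x in Ioo a b, Grad u u' q x ^ p ≤ ENNReal.ofReal D := by
    intro a b hl hd hK hz
    rcases le_or_gt b a with hba | hab
    · simp [Ioo_eq_empty (not_lt.2 hba)]
    obtain ⟨x0, hx0⟩ := nonempty_Ioo.2 hab
    have hK0 : 0 ≤ K := (abs_nonneg _).trans (hK x0 hx0)
    refine (gap_bound hp hq hpq hd hK hz).trans ?_
    apply ENNReal.ofReal_le_ofReal
    rw [hD]
    have h3 : 0 < 1 - q * p := by linarith
    have h4 : 0 ≤ b - a := by linarith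
    gcongr
  induction c with
  | zero =>
    intro a b hl hd hK hz
    rw [pow_zero, one_mul]
    refine base a b hl hd hK fun x hx h => hz ⟨{x}, ?_, by simp⟩
    simpa using ⟨hx, h⟩
  | succ c ih =>
    intro a b hl hd hK hz
    by_cases hzz : ∃ z ∈ Ioo a b, u' z = 0
    · obtain ⟨z, hz1, hz2⟩ := hzz
      have hsub1 : Ioo a z ⊆ Ioo a b := Ioo_subset_Ioo_right hz1.2.le
      have hsub2 : Ioo z b ⊆ Ioo a b := Ioo_subset_Ioo_left hz1.1.le
      have i1 := ih a z (by linarith [hz1.2]) (fun x hx => hd x (hsub1 hx))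
        (fun x hx => hK x (hsub1 hx)) (by
          rintro ⟨s, hs, hc⟩
          refine hz ⟨insert z s, ?_, ?_⟩
          · intro x hx
            rcases Finset.mem_insert.1 hx with rfl | hx
            · exact ⟨hz1, hz2⟩
            · exact ⟨hsub1 (hs x hx).1, (hs x hx).2⟩
          · rw [Finset.card_insert_of_notMem, hc]
            intro h; exact lt_irrefl _ (hs z h).1.2)
      have i2 := ih z b (by linarith [hz1.1]) (fun x hx => hd x (hsub2 hx))
        (fun x hx => hK x (hsub2 hx)) (by
          rintro ⟨s, hs, hc⟩
          refine hz ⟨insert z s, ?_, ?_⟩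
          · intro x hx
            rcases Finset.mem_insert.1 hx with rfl | hx
            · exact ⟨hz1, hz2⟩
            · exact ⟨hsub2 (hs x hx).1, (hs x hx).2⟩
          · rw [Finset.card_insert_of_notMem, hc]
            intro h; exact lt_irrefl _ (hs z h).1.1)
      have hcov : Ioo a b ⊆ (Ioo a z ∪ {z}) ∪ Ioo z b := by
        intro x hx
        rcases lt_trichotomy x z with h | h | h
        · left; left; exact ⟨hx.1, h⟩
        · left; right; exact h
        · right; exact ⟨h, hx.2⟩
      refine (lintegral_mono_set hcov).trans ((lintegral_union_le _ _ _).trans ?_)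
      have h5 : ∫⁻ x in Ioo a z ∪ {z}, Grad u u' q x ^ p ≤ 2 ^ c * ENNReal.ofReal D := by
        refine (lintegral_union_le _ _ _).trans ?_
        simpa using i1
      rw [pow_succ, mul_assoc, mul_comm (2:ENNReal), mul_two, mul_add]
      rw [← mul_add, mul_add]
      gcongr
    · push Not at hzz
      refine (base a b hl hd hK hzz).trans ?_
      have : (1 : ENNReal) ≤ 2 ^ (c+1) := one_le_pow₀ (by norm_num)
      calc _ = 1 * ENNReal.ofReal D := by rw [one_mul]
        _ ≤ _ := by gcongr

end RS

namespace RS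

lemma exhaust {α : Type} [MeasurableSpace α] {μ : Measure α} {f : α → ENNReal} {S : ℕ → Set α}
    (hS : Monotone S) {C : ENNReal} (h : ∀ k, ∫⁻ x in S k, f x ∂μ ≤ C) :
    ∫⁻ x in ⋃ k, S k, f x ∂μ ≤ C := by
  rw [setLIntegral_iUnion_of_directed f hS.directed_le]
  exact iSup_le h

lemma radical_pow {Λ c p q : ℝ} (N : ℕ) (hΛ : 0 ≤ Λ) (hp : 1 ≤ p) 
    (hqN : q * (N + 1) ≤ N) (hpq : q * p < 1) (hc : 0 ≤ c) {l : ℝ} (hl0 : 0 < l) (hl1 : l ≤ 1) :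
    (Λ * l ^ N) ^ (p - 1) * (c * (Λ * l ^ N * l) ^ (1 - q * p)) ≤
      (Λ ^ (p - 1) * (c * Λ ^ (1 - q * p))) * l := by
  have h3 : 0 < 1 - q * p := by linarith
  rw [mul_assoc Λ, ← pow_succ, Real.mul_rpow hΛ (by positivity), Real.mul_rpow hΛ (by positivity),
    ← Real.rpow_natCast, ← Real.rpow_natCast, ← Real.rpow_mul hl0.le, ← Real.rpow_mul hl0.le]
  have : Λ ^ (p - 1) * l ^ (↑N * (p - 1)) * (c * (Λ ^ (1 - q * p) * l ^ ((↑(N+1) : ℝ) * (1 - q * p))))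
    = (Λ ^ (p - 1) * (c * Λ ^ (1 - q * p))) * l ^ ((N : ℝ) * (p - 1) + (↑(N+1) : ℝ) * (1 - q * p)) := by
    rw [Real.rpow_add hl0]; ring
  rw [this]
  gcongr
  calc l ^ ((N : ℝ) * (p - 1) + (↑(N+1) : ℝ) * (1 - q * p)) ≤ l ^ (1:ℝ) := by
        apply Real.rpow_le_rpow_of_exponent_ge hl0 hl1
        push_cast
        nlinarith
    _ = l := Real.rpow_one l

lemma radical (N : ℕ) (hN : 1 ≤ N) (p q M : ℝ) (hp : 1 ≤ p) (hq : 0 ≤ q)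
    (hqN : q * (N + 1) ≤ N) (hpq : q * p < 1) :
    ∃ C : ENNReal, C ≠ ⊤ ∧ ∀ u u' : ℝ → ℝ, LC N M u →
      (∀ x ∈ Ioo (0:ℝ) 1, HasDerivAt u (u' x) x) →
      ∫⁻ x in Ioo (0:ℝ) 1, Grad u u' q x ^ p ≤ C := by
  obtain ⟨N, rfl⟩ : ∃ N', N = N' + 1 := ⟨N - 1, by omega⟩
  set Λ := M * 2 ^ (N+1) with hΛ
  set D0 := Λ ^ (p - 1) * ((2 / (1 - q * p) + 2) * Λ ^ (1 - q * p)) with hD0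
  set C0 : ENNReal := 2 ^ N * ENNReal.ofReal D0 with hC0
  have h3 : 0 < 1 - q * p := by linarith
  refine ⟨C0, by finiteness, fun u u' hu hd => ?_⟩
  have hM : 0 ≤ M := hu.nonneg
  have hΛ0 : 0 ≤ Λ := by positivity
  have hD00 : 0 ≤ D0 := by positivity
  obtain ⟨F, rfl, c1, c2, c3⟩ := hu
  have hF1 : ∀ x ∈ Ioo (0:ℝ) 1, F 1 x = u' x := fun x hx => (c1 0 (by omega) x hx).unique (hd x hx)
  have main : ∀ δ : ℝ, 0 < δ → ∀ K : ℕ, ∀ a b : ℝ, 0 ≤ a → a < b → b ≤ 1 →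
      (∀ x ∈ Ioo a b, |u' x| ≤ Λ * (b - a) ^ (N+1)) →
      Λ * (b - a) ^ (N+1) ≤ (2 ^ (N+1)) ^ K * δ →
      ∫⁻ x in Ioo a b ∩ {x | δ < |u' x|}, Grad (F 0) u' q x ^ p ≤ C0 * ENNReal.ofReal (b - a) := by
    intro δ hδ K
    induction K with
    | zero =>
      intro a b ha hab hb h1 h2
      have : Ioo a b ∩ {x | δ < |u' x|} = ∅ := by
        rw [eq_empty_iff_forall_notMem]
        rintro x ⟨hx, hx2⟩
        have := h1 x hx
        simp only [mem_ofPred_eq] at hx2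
        simp at h2
        linarith
      simp [this]
    | succ K ih =>
      intro a b ha hab hb h1 h2
      have hsub : Ioo a b ⊆ Ioo 0 1 := Ioo_subset_Ioo ha hb
      by_cases hz : ∃ s : Finset ℝ, (∀ x ∈ s, x ∈ Ioo a b ∧ u' x = 0) ∧ s.card = N + 1
      · obtain ⟨s, hs, hsc⟩ := hz
        have hw := window hab.le hM N (fun i => F (i+1))
          (fun i hi x hx => c1 (i+1) (by omega) x (hsub hx))
          (fun x hx y hy => c3 x (hsub hx) y (hsub hy)) s
          (fun x hx => ⟨(hs x hx).1, by rw [← (hs x hx).2]; exact hF1 x (hsub (hs x hx).1)⟩) hsc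
        set c := (a + b) / 2 with hc
        have hac : a < c := by rw [hc]; linarith
        have hcb : c < b := by rw [hc]; linarith
        have e1 : c - a = (b - a) / 2 := by rw [hc]; ring
        have e2 : b - c = (b - a) / 2 := by rw [hc]; ring
        have e3 : Λ * ((b - a) / 2) ^ (N+1) = M * (b - a) ^ (N+1) := by
          rw [hΛ, div_pow]; field_simp
        have hK2 : M * (b - a) ^ (N+1) ≤ (2 ^ (N+1)) ^ K * δ := by
          have : Λ * (b - a) ^ (N+1) = 2 ^ (N+1) * (M * (b - a) ^ (N+1)) := by rw [hΛ]; ring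
          rw [this, pow_succ' (2 ^ (N+1) : ℝ) K, mul_assoc] at h2
          exact le_of_mul_le_mul_left h2 (by positivity)
        have hw' : ∀ x ∈ Ioo a b, |u' x| ≤ M * (b - a) ^ (N+1) := fun x hx => by
          rw [← hF1 x (hsub hx)]; exact hw x hx
        have i1 := ih a c ha hac (by linarith)
          (fun x hx => by rw [e1, e3]; exact hw' x ⟨hx.1, hx.2.trans hcb⟩) (by rw [e1, e3]; exact hK2)
        have i2 := ih c b (by linarith) hcb hb
          (fun x hx => by rw [e2, e3]; exact hw' x ⟨hac.trans hx.1, hx.2⟩) (by rw [e2, e3]; exact hK2)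
        have hcov : Ioo a b ∩ {x | δ < |u' x|} ⊆
            ((Ioo a c ∩ {x | δ < |u' x|}) ∪ {c}) ∪ (Ioo c b ∩ {x | δ < |u' x|}) := by
          rintro x ⟨hx, hx2⟩
          rcases lt_trichotomy x c with h | h | h
          · left; left; exact ⟨⟨hx.1, h⟩, hx2⟩
          · left; right; exact h
          · right; exact ⟨⟨h, hx.2⟩, hx2⟩
        refine (lintegral_mono_set hcov).trans ((lintegral_union_le _ _ _).trans ?_)
        have h5 := lintegral_union_le (μ := volume) (fun x => Grad (F 0) u' q x ^ p)
          (Ioo a c ∩ {x | δ < |u' x|}) {c}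
        have h6 : ∫⁻ x in ({c} : Set ℝ), Grad (F 0) u' q x ^ p = 0 := by simp
        rw [h6, add_zero] at h5
        refine (add_le_add (h5.trans i1) i2).trans ?_
        rw [← mul_add, ← ENNReal.ofReal_add (by linarith) (by linarith)]
        apply le_of_eq
        congr 2
        ring
      · have := multi_gap hp hq hpq (Λ * (b - a) ^ (N+1)) (b - a) rfl N a b le_rfl
          (fun x hx => hd x (hsub hx)) h1 hz
        refine (lintegral_mono_set inter_subset_left).trans (this.trans ?_)
        rw [hC0, mul_assoc (2 ^ N : ENNReal)]
        refine mul_le_mul' le_rfl ?_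
        rw [← ENNReal.ofReal_mul hD00]
        apply ENNReal.ofReal_le_ofReal
        exact radical_pow (N+1) hΛ0 hp hqN hpq (by positivity) (by linarith) (by linarith)
  have hcont : ContinuousOn u' (Ioo 0 1) := by
    have : ContinuousOn (F 1) (Ioo 0 1) := by
      rcases Nat.eq_zero_or_pos N with rfl | h
      · refine (LipschitzOnWith.of_dist_le_mul (K := ⟨M, hM⟩) (fun x hx y hy => ?_)).continuousOn
        rw [dist_eq_norm, dist_eq_norm]
        exact c3 x hx y hy
      · exact fun x hx => (c1 1 (by omega) x hx).continuousAt.continuousWithinAt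
    exact this.congr fun x hx => (hF1 x hx).symm
  have hδ : ∀ k : ℕ, ∫⁻ x in Ioo 0 1 ∩ {x | 1 / ((k:ℝ) + 1) < |u' x|}, Grad (F 0) u' q x ^ p ≤ C0 := by
    intro k
    have hpos : (0:ℝ) < 1 / ((k:ℝ) + 1) := by positivity
    obtain ⟨K, hK⟩ := pow_unbounded_of_one_lt (Λ / (1 / ((k:ℝ)+1))) (one_lt_pow₀ (by norm_num : (1:ℝ) < 2) (by omega : N + 1 ≠ 0))
    have := main _ hpos K 0 1 le_rfl one_pos le_rfl (fun x hx => by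
      rw [← hF1 x hx, sub_zero, one_pow, mul_one, hΛ]
      have h1 : (1:ℝ) ≤ 2 ^ (N+1) := one_le_pow₀ (by norm_num)
      exact (c2 1 (by omega) x hx).trans (by nlinarith)) (by
      rw [sub_zero, one_pow, mul_one]
      rw [div_lt_iff₀ hpos] at hK
      exact hK.le)
    simpa using this
  have hopen : IsOpen (Ioo 0 1 ∩ {x | u' x ≠ 0}) :=
    hcont.isOpen_inter_preimage isOpen_Ioo isOpen_ne
  have hun : Ioo (0:ℝ) 1 ⊆ (⋃ k : ℕ, Ioo 0 1 ∩ {x | 1 / ((k:ℝ) + 1) < |u' x|}) ∪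
      (Ioo 0 1 \ (Ioo 0 1 ∩ {x | u' x ≠ 0})) := by
    intro x hx
    by_cases h : u' x = 0
    · right; exact ⟨hx, fun h' => h'.2 h⟩
    · left
      obtain ⟨k, hk⟩ := exists_nat_one_div_lt (abs_pos.2 h)
      exact mem_iUnion.2 ⟨k, hx, hk⟩
  refine (lintegral_mono_set hun).trans ((lintegral_union_le _ _ _).trans ?_)
  have h0 : ∫⁻ x in Ioo 0 1 \ (Ioo 0 1 ∩ {x | u' x ≠ 0}), Grad (F 0) u' q x ^ p = 0 := by
    rw [setLIntegral_congr_fun (g := fun _ => 0) (measurableSet_Ioo.diff hopen.measurableSet)]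
    · simp
    · intro x hx
      have : u' x = 0 := by
        by_contra h
        exact hx.2 ⟨hx.1, h⟩
      simp only [Grad, this, enorm_zero, zero_mul]
      exact ENNReal.zero_rpow_of_pos (by linarith)
  rw [h0, add_zero]
  refine exhaust ?_ hδ
  intro k l hkl x hx
  refine ⟨hx.1, ?_⟩
  have h2 : 1 / ((k:ℝ) + 1) < |u' x| := hx.2
  show 1 / ((l:ℝ) + 1) < |u' x|
  refine lt_of_le_of_lt ?_ h2
  gcongr

end RS

namespace RS
open Polynomial

/-- lower order part -/
def Lp (d : ℕ) (c : Fin d → ℂ) : ℂ[X] := ∑ i : Fin d, C (c i) * X ^ (i : ℕ)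
/-- monic polynomial -/
def Pp (d : ℕ) (c : Fin d → ℂ) : ℂ[X] := X ^ d + Lp d c

lemma Lp_coeff (d : ℕ) (c : Fin d → ℂ) (s : ℕ) :
    (Lp d c).coeff s = if h : s < d then c ⟨s, h⟩ else 0 := by
  rw [Lp, finsetSum_coeff]
  simp only [coeff_C_mul, coeff_X_pow, mul_ite, mul_one, mul_zero]
  split_ifs with h
  · rw [Finset.sum_eq_single ⟨s, h⟩]
    · simp
    · intro b _ hb
      rw [if_neg]
      rintro rfl
      exact hb rfl
    · simp
  · apply Finset.sum_eq_zero
    intro i _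
    rw [if_neg]
    rintro rfl
    exact h i.2

lemma Lp_degree_lt (d : ℕ) (c : Fin d → ℂ) : (Lp d c).degree < d := by
  rw [degree_lt_iff_coeff_zero]
  intro m hm
  rw [Lp_coeff, dif_neg (by omega)]

lemma Lp_eq_zero {d : ℕ} {c : Fin d → ℂ} (h : Lp d c = 0) : c = 0 := by
  ext i
  have := Lp_coeff d c i
  rw [h] at this
  simp at this
  exact this.symm

lemma Lp_add (d : ℕ) (c c' : Fin d → ℂ) : Lp d (c + c') = Lp d c + Lp d c' := by
  simp [Lp, add_mul, Finset.sum_add_distrib]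

lemma Lp_smul (d : ℕ) (t : ℂ) (c : Fin d → ℂ) : Lp d (t • c) = C t * Lp d c := by
  simp [Lp, Finset.mul_sum, mul_assoc]

lemma Pp_monic (d : ℕ) (c : Fin d → ℂ) : (Pp d c).Monic := monic_X_pow_add (Lp_degree_lt d c)

lemma Pp_natDegree (d : ℕ) (c : Fin d → ℂ) : (Pp d c).natDegree = d :=
  natDegree_eq_of_degree_eq_some (by
    rw [Pp, degree_add_eq_left_of_degree_lt] <;> rw [degree_X_pow]
    exact Lp_degree_lt d c)

lemma Pp_coeff (d : ℕ) (c : Fin d → ℂ) (s : ℕ) :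
    (Pp d c).coeff s = if h : s < d then c ⟨s, h⟩ else if s = d then 1 else 0 := by
  rw [Pp, coeff_add, Lp_coeff, coeff_X_pow]
  split_ifs <;> first | omega | simp

lemma eq_Pp {d : ℕ} {Q : ℂ[X]} (h : Q.Monic) (hd : Q.natDegree = d) :
    Q = Pp d (fun i => Q.coeff i) := by
  ext s
  rw [Pp_coeff]
  split_ifs with h1 h2
  · rfl
  · rw [h2, ← hd]; exact h
  · exact coeff_eq_zero_of_natDegree_lt (by omega)

lemma Pp_inj {d : ℕ} {c c' : Fin d → ℂ} (h : Pp d c = Pp d c') : c = c' := by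
  ext i
  have := congrArg (fun Q => Q.coeff (i : ℕ)) h
  simpa [Pp_coeff] using this

/-- product map on coefficients -/
def mulMap (k e : ℕ) (x : (Fin k → ℂ) × (Fin e → ℂ)) : Fin (k + e) → ℂ :=
  fun i => (Pp k x.1 * Pp e x.2).coeff i

lemma Pp_mulMap (k e : ℕ) (x : (Fin k → ℂ) × (Fin e → ℂ)) :
    Pp (k + e) (mulMap k e x) = Pp k x.1 * Pp e x.2 := by
  symm
  refine eq_Pp ((Pp_monic _ _).mul (Pp_monic _ _)) ?_
  rw [(Pp_monic _ _).natDegree_mul (Pp_monic _ _), Pp_natDegree, Pp_natDegree]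

lemma contDiff_coeff (d : ℕ) (s : ℕ) {n : WithTop ℕ∞} :
    ContDiff ℂ n (fun c : Fin d → ℂ => (Pp d c).coeff s) := by
  simp only [Pp_coeff]
  split_ifs
  · fun_prop
  · fun_prop
  · fun_prop

lemma contDiff_mulMap (k e : ℕ) {n : WithTop ℕ∞} : ContDiff ℂ n (mulMap k e) := by
  rw [contDiff_pi]
  intro i
  simp only [mulMap, coeff_mul]
  apply ContDiff.sum
  intro s _
  exact ((contDiff_coeff k s.1).comp contDiff_fst).mul ((contDiff_coeff e s.2).comp contDiff_snd)

lemma fderiv_mulMap (k e : ℕ) (x y : (Fin k → ℂ) × (Fin e → ℂ)) :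
    fderiv ℂ (mulMap k e) x y =
      fun i : Fin (k+e) => (Lp k y.1 * Pp e x.2 + Pp k x.1 * Lp e y.2).coeff i := by
  have h1 : HasFDerivAt (mulMap k e) (fderiv ℂ (mulMap k e) x) (x + (0:ℂ) • y) := by
    rw [zero_smul, add_zero]
    exact ((contDiff_mulMap k e (n := 1)).differentiable (by simp) x).hasFDerivAt
  have h2 : HasDerivAt (fun t : ℂ => x + t • y) y 0 := by
    have := ((hasDerivAt_id (0:ℂ)).smul_const y).const_add x
    simpa using this
  have h3 := h1.comp_hasDerivAt (0:ℂ) h2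
  refine h3.unique ?_
  rw [hasDerivAt_pi]
  intro i
  have e1 : ∀ t : ℂ, (mulMap k e ∘ fun t : ℂ => x + t • y) t i = (Pp k x.1 * Pp e x.2).coeff i +
      t * (Lp k y.1 * Pp e x.2 + Pp k x.1 * Lp e y.2).coeff i
      + t ^ 2 * (Lp k y.1 * Lp e y.2).coeff i := by
    intro t
    simp only [Function.comp, mulMap, ← coeff_C_mul, ← coeff_add]
    congr 1
    simp only [Pp, Prod.fst_add, Prod.snd_add, Prod.smul_fst, Prod.smul_snd, Lp_add, Lp_smul, C_pow]
    ring
  simp only [e1]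
  have hid := hasDerivAt_id (0:ℂ)
  have := ((hid.mul_const ((Lp k y.1 * Pp e x.2 + Pp k x.1 * Lp e y.2).coeff (i:ℕ))).const_add
    ((Pp k x.1 * Pp e x.2).coeff (i:ℕ))).fun_add ((hid.pow 2).mul_const ((Lp k y.1 * Lp e y.2).coeff (i:ℕ)))
  simpa using this

lemma fderiv_mulMap_injective (k e : ℕ) (x : (Fin k → ℂ) × (Fin e → ℂ))
    (hx : IsCoprime (Pp k x.1) (Pp e x.2)) : Function.Injective (fderiv ℂ (mulMap k e) x) := by
  rw [injective_iff_map_eq_zero]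
  intro y hy
  rw [fderiv_mulMap] at hy
  have hdeg : (Lp k y.1 * Pp e x.2 + Pp k x.1 * Lp e y.2).degree < ((k + e : ℕ) : WithBot ℕ) := by
    have d1 : (Pp e x.2).degree = e := by
      rw [degree_eq_natDegree (Pp_monic _ _).ne_zero, Pp_natDegree]
    have d2 : (Pp k x.1).degree = k := by
      rw [degree_eq_natDegree (Pp_monic _ _).ne_zero, Pp_natDegree]
    refine (degree_add_le _ _).trans_lt (max_lt ?_ ?_)
    · rw [degree_mul, d1]
      push_cast
      exact WithBot.add_lt_add_right (by simp) (Lp_degree_lt _ _)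
    · rw [degree_mul, d2]
      push_cast
      exact WithBot.add_lt_add_left (by simp) (Lp_degree_lt _ _)
  have h0 : Lp k y.1 * Pp e x.2 + Pp k x.1 * Lp e y.2 = 0 := by
    ext s
    by_cases hs : s < k + e
    · exact congrFun hy ⟨s, hs⟩
    · rw [coeff_zero]
      exact coeff_eq_zero_of_degree_lt (hdeg.trans_le (by exact_mod_cast not_lt.1 hs))
  have hdvd1 : Pp k x.1 ∣ Lp k y.1 := by
    refine hx.dvd_of_dvd_mul_right (⟨- Lp e y.2, ?_⟩)
    linear_combination h0
  have hdvd2 : Pp e x.2 ∣ Lp e y.2 := by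
    refine hx.symm.dvd_of_dvd_mul_left (⟨- Lp k y.1, ?_⟩)
    linear_combination h0
  have z1 : Lp k y.1 = 0 := by
    refine eq_zero_of_dvd_of_degree_lt hdvd1 ?_
    rw [degree_eq_natDegree (Pp_monic _ _).ne_zero, Pp_natDegree]
    exact Lp_degree_lt _ _
  have z2 : Lp e y.2 = 0 := by
    refine eq_zero_of_dvd_of_degree_lt hdvd2 ?_
    rw [degree_eq_natDegree (Pp_monic _ _).ne_zero, Pp_natDegree]
    exact Lp_degree_lt _ _
  exact Prod.ext (Lp_eq_zero z1) (Lp_eq_zero z2)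

lemma local_split (N k e : ℕ) (x : (Fin k → ℂ) × (Fin e → ℂ))
    (hx : IsCoprime (Pp k x.1) (Pp e x.2)) :
    ∃ R > 0, ∃ Ψ : (Fin (k+e) → ℂ) → (Fin k → ℂ) × (Fin e → ℂ),
      ContDiffOn ℝ N Ψ (Metric.ball (mulMap k e x) R) ∧
      ∀ a ∈ Metric.ball (mulMap k e x) R, Pp (k+e) a = Pp k (Ψ a).1 * Pp e (Ψ a).2 := by
  have hinj := fderiv_mulMap_injective k e x hx
  have hfr : Module.finrank ℂ ((Fin k → ℂ) × (Fin e → ℂ)) = Module.finrank ℂ (Fin (k+e) → ℂ) := by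
    simp
  set eq0 := LinearEquiv.ofInjectiveOfFinrankEq (fderiv ℂ (mulMap k e) x).toLinearMap hinj hfr
  set E := eq0.toContinuousLinearEquiv with hE
  have hcd : ContDiffAt ℂ (N : WithTop ℕ∞) (mulMap k e) x := (contDiff_mulMap k e).contDiffAt
  have hcd1 : ContDiffAt ℂ (N + 1 : ℕ) (mulMap k e) x := (contDiff_mulMap k e).contDiffAt
  have hEf : HasFDerivAt (mulMap k e) (E : _ →L[ℂ] _) x := by
    have : (E : ((Fin k → ℂ) × (Fin e → ℂ)) →L[ℂ] (Fin (k+e) → ℂ)) = fderiv ℂ (mulMap k e) x := by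
      exact ContinuousLinearMap.ext fun y => rfl
    rw [this]
    exact ((contDiff_mulMap k e (n := 1)).differentiable (by simp) x).hasFDerivAt
  have hn : ((N + 1 : ℕ) : WithTop ℕ∞) ≠ 0 := by simp
  have hΨ := hcd1.to_localInverse hEf hn
  set Ψ := hcd1.localInverse hEf hn with hΨd
  obtain ⟨U, hU, hUc⟩ := hΨ.contDiffOn le_rfl (by simp)
  have hright : ∀ᶠ a in nhds (mulMap k e x), mulMap k e (Ψ a) = a :=
    (hcd1.hasStrictFDerivAt' hEf hn).eventually_right_inverse
  obtain ⟨R, hR, hRs⟩ := Metric.mem_nhds_iff.1 (Filter.inter_mem hU hright)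
  refine ⟨R, hR, Ψ, ?_, fun a ha => ?_⟩
  · refine ((hUc.mono fun a ha => (hRs ha).1).restrict_scalars ℝ).of_le ?_
    norm_cast; omega
  · rw [← Pp_mulMap, (hRs ha).2]

lemma exists_split (N d : ℕ) (hd : 2 ≤ d) (c : Fin d → ℂ) (hc0 : c ≠ 0)
    (hc : c ⟨d - 1, by omega⟩ = 0) :
    ∃ k e : ℕ, 1 ≤ k ∧ 1 ≤ e ∧ k < d ∧ e < d ∧ 
    ∃ R > 0, ∃ Ψ : (Fin d → ℂ) → (Fin k → ℂ) × (Fin e → ℂ),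
      ContDiffOn ℝ N Ψ (Metric.ball c R) ∧
      ∀ a ∈ Metric.ball c R, Pp d a = Pp k (Ψ a).1 * Pp e (Ψ a).2 := by
  have hne := (Pp_monic d c).ne_zero
  obtain ⟨z, hz⟩ := IsAlgClosed.exists_root (Pp d c) (by
    rw [degree_eq_natDegree hne, Pp_natDegree]; simp; omega)
  obtain ⟨B, hB, hBz⟩ := exists_eq_pow_rootMultiplicity_mul_and_not_dvd (Pp d c) hne z
  set k := (Pp d c).rootMultiplicity z with hk
  have hk1 : 1 ≤ k := (rootMultiplicity_pos hne).2 hz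
  have hA : ((X - C z) ^ k : ℂ[X]).Monic := (monic_X_sub_C z).pow k
  have hBm : B.Monic := hA.of_mul_monic_left (hB ▸ Pp_monic d c)
  have hdeg : d = k + B.natDegree := by
    have := congrArg natDegree hB
    rw [Pp_natDegree, hA.natDegree_mul hBm, natDegree_pow, natDegree_X_sub_C, mul_one] at this
    exact this
  have hAd : ((X - C z) ^ k : ℂ[X]).natDegree = k := by
    rw [natDegree_pow, natDegree_X_sub_C, mul_one]
  have he1 : 1 ≤ B.natDegree := by
    by_contra hcon
    have hB1 : B = 1 := by
      refine hBm.natDegree_eq_zero.1 (by omega)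
    rw [hB1, mul_one] at hB
    have hkd : k = d := by omega
    have hco := Pp_coeff d c (d - 1)
    rw [dif_pos (by omega), hc, hB, hkd, sub_eq_add_neg, ← C_neg, coeff_X_add_C_pow] at hco
    have h1 : d - (d - 1) = 1 := by omega
    have h2 : d.choose (d - 1) = d := by
      rw [Nat.choose_symm (by omega : 1 ≤ d)]; simp
    rw [h1, h2, pow_one] at hco
    have hz0 : z = 0 := by
      have : (d : ℂ) ≠ 0 := by exact_mod_cast (by omega : d ≠ 0)
      simpa [this] using hco
    apply hc0
    apply Lp_eq_zero
    rw [hkd, hz0, C_0, sub_zero, Pp] at hB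
    simpa using hB
  obtain ⟨e, he⟩ : ∃ e, B.natDegree = e := ⟨_, rfl⟩
  rw [he] at hdeg he1
  clear_value k
  subst hdeg
  refine ⟨k, e, hk1, he1, by omega, by omega, ?_⟩
  set x : (Fin k → ℂ) × (Fin e → ℂ) := (fun i => ((X - C z) ^ k : ℂ[X]).coeff i, fun i => B.coeff i)
    with hx
  have p1 : Pp k x.1 = (X - C z) ^ k := (eq_Pp hA hAd).symm
  have p2 : Pp e x.2 = B := (eq_Pp hBm he).symm
  have hcop : IsCoprime (Pp k x.1) (Pp e x.2) := by
    rw [p1, p2]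
    exact (((irreducible_X_sub_C z).coprime_iff_not_dvd).2 hBz).pow_left
  have hcx : mulMap k e x = c := by
    apply Pp_inj
    rw [Pp_mulMap, p1, p2, hB]
  have := local_split N k e x hcop
  rw [hcx] at this
  exact this

end RS

namespace RS
open Polynomial

/-- implicit derivative of a simple root -/
def Sq (d : ℕ) (a a' : Fin d → ℂ) (z : ℂ) : ℂ :=
  eval z (Lp d a') / eval z (derivative (Pp d a))

/-- admissible data -/
def Adm (d : ℕ) (a : ℝ → Fin d → ℂ) (Ω : Set ℝ) (l : ℝ → ℂ) : Prop :=
  MeasurableSet Ω ∧ Ω ⊆ Ioo (0:ℝ) 1 ∧ ContinuousOn l Ω ∧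
    ∀ t ∈ Ω, eval (l t) (Pp d (a t)) = 0 ∧ eval (l t) (derivative (Pp d (a t))) ≠ 0

/-- the inductive statement -/
def TT (N : ℕ) (p : ℝ) (d : ℕ) : Prop := ∀ M : ℝ, ∃ C : ENNReal, C ≠ ⊤ ∧
  ∀ (a a' : ℝ → Fin d → ℂ) (Ω : Set ℝ) (l : ℝ → ℂ), LC N M a →
    (∀ t ∈ Ioo (0:ℝ) 1, HasDerivAt a (a' t) t) → Adm d a Ω l →
    ∫⁻ t in Ω, ‖Sq d (a t) (a' t) (l t)‖ₑ ^ p ≤ C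

lemma eval_Lp (d : ℕ) (c : Fin d → ℂ) (z : ℂ) : eval z (Lp d c) = ∑ i : Fin d, c i * z ^ (i:ℕ) := by
  simp [Lp, eval_finsetSum]

lemma eval_Pp (d : ℕ) (c : Fin d → ℂ) (z : ℂ) :
    eval z (Pp d c) = z ^ d + ∑ i : Fin d, c i * z ^ (i:ℕ) := by
  simp [Pp, eval_Lp]

lemma hasDeriv_eval {d : ℕ} {a : ℝ → Fin d → ℂ} {a' : Fin d → ℂ} {t : ℝ}
    (h : HasDerivAt a a' t) (z : ℂ) :
    HasDerivAt (fun s => eval z (Pp d (a s))) (eval z (Lp d a')) t := by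
  simp only [eval_Pp, eval_Lp]
  apply HasDerivAt.const_add
  apply HasDerivAt.fun_sum
  intro i _
  exact ((hasDerivAt_pi.1 h) i).mul_const _

lemma continuousOn_eval {d : ℕ} {a : ℝ → Fin d → ℂ} {l : ℝ → ℂ} {s : Set ℝ}
    (ha : ContinuousOn a s) (hl : ContinuousOn l s) :
    ContinuousOn (fun t => eval (l t) (Pp d (a t))) s := by
  simp only [eval_Pp]
  refine (hl.pow d).add (continuousOn_finsetSum _ fun i _ => ?_)
  exact ((continuousOn_pi.1 ha) i).mul (hl.pow _)

lemma measurableSet_zero {f : ℝ → ℂ} {s : Set ℝ} (hs : MeasurableSet s) (hf : ContinuousOn f s) :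
    MeasurableSet {t ∈ s | f t = 0} := by
  obtain ⟨u, hu, hu2⟩ := continuousOn_iff_isClosed.1 hf {0} isClosed_singleton
  have : {t ∈ s | f t = 0} = u ∩ s := by
    rw [← hu2]; ext t; simp [and_comm]
  rw [this]
  exact hu.measurableSet.inter hs

lemma LC.continuousOn {E : Type} [NormedAddCommGroup E] [NormedSpace ℝ E] {k : ℕ} {M : ℝ}
    {f : ℝ → E} (h : LC k M f) : ContinuousOn f (Ioo 0 1) := by
  have h0 : LC 0 M f := by
    induction k with
    | zero => exact h
    | succ k ih => exact ih h.of_succ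
  have hM := h0.nonneg
  rw [LC_zero_iff] at h0
  refine (LipschitzOnWith.of_dist_le_mul (K := ⟨M, hM⟩) (fun x hx y hy => ?_)).continuousOn
  rw [dist_eq_norm, dist_eq_norm]
  exact h0.2 x hx y hy

lemma split_step {N : ℕ} (hN : 1 ≤ N) {p : ℝ} {d k e : ℕ} {Mb Mc : ℝ} {Ck Ce : ENNReal}
    (hk : ∀ (a a' : ℝ → Fin k → ℂ) (Ω : Set ℝ) (l : ℝ → ℂ), LC N Mb a →
      (∀ t ∈ Ioo (0:ℝ) 1, HasDerivAt a (a' t) t) → Adm k a Ω l →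
      ∫⁻ t in Ω, ‖Sq k (a t) (a' t) (l t)‖ₑ ^ p ≤ Ck)
    (he : ∀ (a a' : ℝ → Fin e → ℂ) (Ω : Set ℝ) (l : ℝ → ℂ), LC N Mc a →
      (∀ t ∈ Ioo (0:ℝ) 1, HasDerivAt a (a' t) t) → Adm e a Ω l →
      ∫⁻ t in Ω, ‖Sq e (a t) (a' t) (l t)‖ₑ ^ p ≤ Ce)
    (a a' : ℝ → Fin d → ℂ) (Ω : Set ℝ) (l : ℝ → ℂ)
    (ha' : ∀ t ∈ Ioo (0:ℝ) 1, HasDerivAt a (a' t) t) (hA : Adm d a Ω l)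
    (b : ℝ → Fin k → ℂ) (c : ℝ → Fin e → ℂ) (hb : LC N Mb b) (hc : LC N Mc c)
    (hprod : ∀ t ∈ Ioo (0:ℝ) 1, Pp d (a t) = Pp k (b t) * Pp e (c t)) :
    ∫⁻ t in Ω, ‖Sq d (a t) (a' t) (l t)‖ₑ ^ p ≤ Ck + Ce := by
  obtain ⟨hΩm, hΩ, hl, hroot⟩ := hA
  obtain ⟨N, rfl⟩ : ∃ N', N = N' + 1 := ⟨N - 1, by omega⟩
  obtain ⟨-, b', hb', -⟩ := LC_succ_iff.1 hb
  obtain ⟨-, c', hc', -⟩ := LC_succ_iff.1 hc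
  have hLp : ∀ t ∈ Ioo (0:ℝ) 1, ∀ z, eval z (Lp d (a' t)) =
      eval z (Lp k (b' t)) * eval z (Pp e (c t)) + eval z (Pp k (b t)) * eval z (Lp e (c' t)) := by
    intro t ht z
    have h1 := hasDeriv_eval (ha' t ht) z
    have h2 := (hasDeriv_eval (hb' t ht) z).fun_mul (hasDeriv_eval (hc' t ht) z)
    refine h1.unique (h2.congr_of_eventuallyEq ?_)
    filter_upwards [isOpen_Ioo.mem_nhds ht] with s hs
    rw [hprod s hs, eval_mul]
  have hder : ∀ t ∈ Ioo (0:ℝ) 1, ∀ z, eval z (derivative (Pp d (a t))) =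
      eval z (derivative (Pp k (b t))) * eval z (Pp e (c t))
        + eval z (Pp k (b t)) * eval z (derivative (Pp e (c t))) := by
    intro t ht z
    rw [hprod t ht, derivative_mul, eval_add, eval_mul, eval_mul]
  set Ωb := {t ∈ Ω | eval (l t) (Pp k (b t)) = 0} with hΩb
  set Ωc := {t ∈ Ω | eval (l t) (Pp e (c t)) = 0} with hΩc
  have hmb : MeasurableSet Ωb :=
    measurableSet_zero hΩm (continuousOn_eval (hb.continuousOn.mono hΩ) hl)
  have hmc : MeasurableSet Ωc :=
    measurableSet_zero hΩm (continuousOn_eval (hc.continuousOn.mono hΩ) hl)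
  have hcov : Ω ⊆ Ωb ∪ Ωc := by
    intro t ht
    have := (hroot t ht).1
    rw [hprod t (hΩ ht), eval_mul, mul_eq_zero] at this
    exact this.imp (fun h => ⟨ht, h⟩) (fun h => ⟨ht, h⟩)
  refine (lintegral_mono_set hcov).trans ((lintegral_union_le _ _ _).trans (add_le_add ?_ ?_))
  · rw [setLIntegral_congr_fun (g := fun t => ‖Sq k (b t) (b' t) (l t)‖ₑ ^ p) hmb]
    · refine hk b b' Ωb l hb hb' ⟨hmb, fun t ht => hΩ ht.1, hl.mono fun t ht => ht.1,
        fun t ht => ⟨ht.2, fun h => (hroot t ht.1).2 ?_⟩⟩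
      rw [hder t (hΩ ht.1), h, ht.2]; ring
    · intro t ht
      have h0 := (hroot t ht.1).2
      have hz : eval (l t) (Pp k (b t)) = 0 := ht.2
      rw [hder t (hΩ ht.1), hz, zero_mul, add_zero] at h0
      simp only [Sq]
      rw [hLp t (hΩ ht.1), hder t (hΩ ht.1), hz, zero_mul, zero_mul, add_zero, add_zero,
        mul_div_mul_right _ _ (right_ne_zero_of_mul h0)]
  · rw [setLIntegral_congr_fun (g := fun t => ‖Sq e (c t) (c' t) (l t)‖ₑ ^ p) hmc]
    · refine he c c' Ωc l hc hc' ⟨hmc, fun t ht => hΩ ht.1, hl.mono fun t ht => ht.1,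
        fun t ht => ⟨ht.2, fun h => (hroot t ht.1).2 ?_⟩⟩
      rw [hder t (hΩ ht.1), h, ht.2]; ring
    · intro t ht
      have h0 := (hroot t ht.1).2
      have hz : eval (l t) (Pp e (c t)) = 0 := ht.2
      rw [hder t (hΩ ht.1), hz, mul_zero, zero_add] at h0
      simp only [Sq]
      rw [hLp t (hΩ ht.1), hder t (hΩ ht.1), hz, mul_zero, mul_zero, zero_add, zero_add,
        mul_div_mul_left _ _ (left_ne_zero_of_mul h0)]

lemma compact_split (N : ℕ) (hN : 1 ≤ N) (p : ℝ) (d : ℕ) (hd : 2 ≤ d)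
    (IH : ∀ k, 1 ≤ k → k < d → TT N p k) (κ M : ℝ) (hκ : 0 < κ) :
    ∃ ε > 0, ∃ C : ENNReal, C ≠ ⊤ ∧
      ∀ (a a' : ℝ → Fin d → ℂ) (Ω : Set ℝ) (l : ℝ → ℂ), LC N M a →
      (∀ t ∈ Ioo (0:ℝ) 1, HasDerivAt a (a' t) t) → Adm d a Ω l →
      (∃ c : Fin d → ℂ, c ⟨d - 1, by omega⟩ = 0 ∧ κ ≤ ‖c‖ ∧ ‖c‖ ≤ 1 ∧
        ∀ t ∈ Ioo (0:ℝ) 1, ‖a t - c‖ ≤ ε) →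
      ∫⁻ t in Ω, ‖Sq d (a t) (a' t) (l t)‖ₑ ^ p ≤ C := by
  set K : Set (Fin d → ℂ) := {c | c ⟨d - 1, by omega⟩ = 0} ∩ {c | κ ≤ ‖c‖} ∩ Metric.closedBall 0 1
    with hKdef
  have hK : IsCompact K := by
    refine (isCompact_closedBall 0 1).inter_left ?_
    refine IsClosed.inter (isClosed_eq (continuous_apply _) continuous_const)
      (isClosed_le continuous_const continuous_norm)
  have key : ∃ ε > 0, ∃ C : ENNReal, C ≠ ⊤ ∧
      ∀ (a a' : ℝ → Fin d → ℂ) (Ω : Set ℝ) (l : ℝ → ℂ), LC N M a →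
      (∀ t ∈ Ioo (0:ℝ) 1, HasDerivAt a (a' t) t) → Adm d a Ω l →
      (∃ c ∈ K, ∀ t ∈ Ioo (0:ℝ) 1, ‖a t - c‖ ≤ ε) →
      ∫⁻ t in Ω, ‖Sq d (a t) (a' t) (l t)‖ₑ ^ p ≤ C := by
    refine hK.induction_on (p := fun s => ∃ ε > 0, ∃ C : ENNReal, C ≠ ⊤ ∧
      ∀ (a a' : ℝ → Fin d → ℂ) (Ω : Set ℝ) (l : ℝ → ℂ), LC N M a →
      (∀ t ∈ Ioo (0:ℝ) 1, HasDerivAt a (a' t) t) → Adm d a Ω l →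
      (∃ c ∈ s, ∀ t ∈ Ioo (0:ℝ) 1, ‖a t - c‖ ≤ ε) →
      ∫⁻ t in Ω, ‖Sq d (a t) (a' t) (l t)‖ₑ ^ p ≤ C) ?_ ?_ ?_ ?_
    · exact ⟨1, one_pos, 0, by simp, fun a a' Ω l _ _ _ h => by simp at h⟩
    · rintro s t hst ⟨ε, hε, C, hC, h⟩
      exact ⟨ε, hε, C, hC, fun a a' Ω l h1 h2 h3 ⟨c, hc, h4⟩ => h a a' Ω l h1 h2 h3 ⟨c, hst hc, h4⟩⟩
    · rintro s t ⟨ε, hε, C, hC, h⟩ ⟨ε', hε', C', hC', h'⟩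
      refine ⟨min ε ε', lt_min hε hε', C + C', by finiteness, fun a a' Ω l h1 h2 h3 ⟨c, hc, h4⟩ => ?_⟩
      rcases hc with hc | hc
      · exact (h a a' Ω l h1 h2 h3 ⟨c, hc, fun t ht => (h4 t ht).trans (min_le_left _ _)⟩).trans
          le_self_add
      · exact (h' a a' Ω l h1 h2 h3 ⟨c, hc, fun t ht => (h4 t ht).trans (min_le_right _ _)⟩).trans
          le_add_self
    · rintro c ⟨⟨hc1, hc2⟩, hc3⟩
      have hc0 : c ≠ 0 := by
        rintro rfl
        have : κ ≤ ‖(0 : Fin d → ℂ)‖ := hc2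
        simp at this; linarith
      obtain ⟨k, e, hk1, he1, hkd, hed, R, hR, Ψ, hΨ, hprod⟩ := exists_split (N+1) d hd c hc0 hc1
      obtain ⟨C1, hC1⟩ := LC.comp_aux N _ Ψ c (R/2) R (by linarith) hΨ M
      obtain ⟨Ck, hCk, hk⟩ := IH k hk1 hkd
        (‖ContinuousLinearMap.fst ℝ (Fin k → ℂ) (Fin e → ℂ)‖ * C1)
      obtain ⟨Ce, hCe, he⟩ := IH e he1 hed
        (‖ContinuousLinearMap.snd ℝ (Fin k → ℂ) (Fin e → ℂ)‖ * C1)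
      refine ⟨Metric.ball c (R/4), mem_nhdsWithin_of_mem_nhds (Metric.ball_mem_nhds _ (by linarith)),
        R/4, by linarith, Ck + Ce, by finiteness, fun a a' Ω l h1 h2 h3 ⟨c', hc', h4⟩ => ?_⟩
      have hin : ∀ t ∈ Ioo (0:ℝ) 1, a t ∈ Metric.closedBall c (R/2) := by
        intro t ht
        have h5 : dist (a t) c' ≤ R/4 := by rw [dist_eq_norm]; exact h4 t ht
        have h6 : dist c' c < R/4 := hc'
        rw [Metric.mem_closedBall]
        linarith [dist_triangle (a t) c' c]
      have hLC := hC1 a h1 hin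
      refine split_step hN hk he a a' Ω l h2 h3 (fun t => (Ψ (a t)).1) (fun t => (Ψ (a t)).2)
        (LC.clm (ContinuousLinearMap.fst ℝ (Fin k → ℂ) (Fin e → ℂ)) hLC)
        (LC.clm (ContinuousLinearMap.snd ℝ (Fin k → ℂ) (Fin e → ℂ)) hLC) fun t ht => ?_
      exact hprod _ (Metric.closedBall_subset_ball (by linarith) (hin t ht))
  obtain ⟨ε, hε, C, hC, h⟩ := key
  refine ⟨ε, hε, C, hC, fun a a' Ω l h1 h2 h3 ⟨c, hc1, hc2, hc3, hc4⟩ => ?_⟩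
  exact h a a' Ω l h1 h2 h3 ⟨c, ⟨⟨hc1, hc2⟩, by simpa using hc3⟩, hc4⟩

end RS

namespace RS
open Polynomial

/-- real or imaginary part -/
def part (b : Bool) : ℂ →L[ℝ] ℝ := if b then Complex.reCLM else Complex.imCLM

lemma part_le (b : Bool) (z : ℂ) : |part b z| ≤ ‖z‖ := by
  cases b
  · exact Complex.abs_im_le_norm z
  · exact Complex.abs_re_le_norm z

lemma le_part (z : ℂ) : ‖z‖ ≤ |part true z| + |part false z| := Complex.norm_le_abs_re_add_abs_im z

lemma aemeas_Grad {u u' : ℝ → ℝ} {q : ℝ} {s : Set ℝ} (hs : MeasurableSet s)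
    (hu : ContinuousOn u s) (hu' : ContinuousOn u' s) :
    AEMeasurable (Grad u u' q) (volume.restrict s) := by
  have h1 := (hu.aemeasurable (μ := volume) hs).enorm
  have h2 := (hu'.aemeasurable (μ := volume) hs).enorm
  exact h2.mul (h1.pow_const _)

lemma Grad_le {u u' : ℝ → ℝ} {q : ℝ} {x : ℝ} (h : Grad u u' q x ≠ ⊤) (hq : 0 ≤ q) :
    |u' x| ≤ (Grad u u' q x).toReal * |u x| ^ q := by
  by_cases hu : u' x = 0
  · rw [hu, abs_zero]; positivity
  have hne : ‖u' x‖ₑ ≠ 0 := by simpa using hu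
  by_cases h0 : u x = 0
  · rcases hq.eq_or_lt with rfl | hq'
    · rw [Grad]; simp
    · exfalso; apply h
      rw [Grad, h0, enorm_zero, ENNReal.zero_rpow_of_neg (by linarith)]
      exact ENNReal.mul_top hne
  · have hpos : 0 < |u x| := abs_pos.2 h0
    rw [Grad, ENNReal.toReal_mul, ← ENNReal.toReal_rpow, toReal_enorm, toReal_enorm,
      Real.norm_eq_abs, Real.norm_eq_abs, mul_assoc, ← Real.rpow_add hpos]
    simp

lemma density (N : ℕ) (hN : 1 ≤ N) (p M : ℝ) (hp : 1 ≤ p) (hpN : p * N < N + 1) (d : ℕ)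
    (hd : d ≤ N + 1) :
    ∃ Ch : ℝ, ∀ a a' : ℝ → Fin d → ℂ, LC N M a → (∀ t ∈ Ioo (0:ℝ) 1, HasDerivAt a (a' t) t) →
    ∃ h : ℝ → ℝ, (∀ t, 1 ≤ h t) ∧ IntegrableOn h (Ioo 0 1) ∧ IntegrableOn (fun t => h t ^ p) (Ioo 0 1) ∧
      ∫ t in Ioo 0 1, h t ^ p ≤ Ch ∧
      ∀ i : Fin d, ∀ᵐ t ∂(volume.restrict (Ioo 0 1)),
        ‖a' t i‖ ≤ h t * ‖a t i‖ ^ (1 - ((d - i : ℕ) : ℝ)⁻¹) := by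
  set q : Fin d → ℝ := fun i => 1 - ((d - i : ℕ) : ℝ)⁻¹ with hqdef
  have hw : ∀ i : Fin d, 1 ≤ ((d - i : ℕ) : ℝ) ∧ ((d - i : ℕ) : ℝ) ≤ N + 1 := by
    intro i
    constructor
    · have := i.2; exact_mod_cast (by omega : 1 ≤ d - i)
    · exact_mod_cast (by omega : d - i ≤ N + 1)
  have hq0 : ∀ i, 0 ≤ q i := fun i => sub_nonneg.2 (inv_le_one_of_one_le₀ (hw i).1)
  have hNpos : (0:ℝ) < N + 1 := by positivity
  have hqN : ∀ i, q i * (N + 1) ≤ N := by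
    intro i
    have h1 : (N + 1 : ℝ)⁻¹ ≤ ((d - i : ℕ) : ℝ)⁻¹ := inv_anti₀ (by linarith [(hw i).1]) (hw i).2
    have h2 : (N + 1 : ℝ)⁻¹ * (N + 1) = 1 := by field_simp
    simp only [hqdef]
    nlinarith
  have hqp : ∀ i, q i * p < 1 := by
    intro i
    by_contra hcon
    push Not at hcon
    have := hqN i
    nlinarith
  have hrad := fun i => radical N hN p (q i) M hp (hq0 i) (hqN i) (hqp i)
  choose Cr hCr hrad using hrad
  have hnp : ∀ b, ‖part b‖ ≤ 1 := by
    intro b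
    refine ContinuousLinearMap.opNorm_le_bound _ zero_le_one fun z => ?_
    rw [one_mul]; exact part_le b z
  set K : ENNReal := (((Finset.univ : Finset (Fin d × Bool)).card : ℕ) : ENNReal) with hK
  set CE : ENNReal := 2 ^ (p - 1) * (1 + K ^ (p - 1) * ∑ x : Fin d × Bool, Cr x.1) with hCE
  have hK1 : K ^ (p - 1) ≠ ⊤ := ENNReal.rpow_ne_top_of_nonneg (by linarith) (ENNReal.natCast_ne_top _)
  have h21 : (2 : ENNReal) ^ (p - 1) ≠ ⊤ := ENNReal.rpow_ne_top_of_nonneg (by linarith) (by simp)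
  have hCEt : CE ≠ ⊤ := by
    refine ENNReal.mul_ne_top h21 (ENNReal.add_ne_top.2 ⟨by simp, ENNReal.mul_ne_top hK1 ?_⟩)
    exact (ENNReal.sum_lt_top.2 fun x _ => (hCr x.1).lt_top).ne
  refine ⟨CE.toReal, fun a a' ha hda => ?_⟩
  obtain ⟨N, rfl⟩ : ∃ N', N = N' + 1 := ⟨N - 1, by omega⟩
  have ha'c : ContinuousOn a' (Ioo 0 1) := by
    obtain ⟨-, b', hb', hb2⟩ := LC_succ_iff.1 ha
    exact hb2.continuousOn.congr fun x hx => (hda x hx).unique (hb' x hx)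
  have hac : ContinuousOn a (Ioo 0 1) := ha.continuousOn
  set G : Fin d × Bool → ℝ → ENNReal := fun x =>
    Grad (fun t => part x.2 (a t x.1)) (fun t => part x.2 (a' t x.1)) (q x.1) with hG
  have hGm : ∀ x, AEMeasurable (G x) (volume.restrict (Ioo 0 1)) := by
    intro x
    refine aemeas_Grad measurableSet_Ioo ?_ ?_
    · exact (part x.2).continuous.comp_continuousOn ((continuousOn_pi.1 hac) x.1)
    · exact (part x.2).continuous.comp_continuousOn ((continuousOn_pi.1 ha'c) x.1)
  have hGi : ∀ x, ∫⁻ t in Ioo 0 1, G x t ^ p ≤ Cr x.1 := by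
    intro x
    refine hrad x.1 _ _ ?_ ?_
    · have h1 : LC (N+1) M (fun t => a t x.1) := by
        refine (LC.clm (ContinuousLinearMap.proj (R := ℝ) (φ := fun _ : Fin d => ℂ) x.1) ha).mono ?_
        have : ‖ContinuousLinearMap.proj (R := ℝ) (φ := fun _ : Fin d => ℂ) x.1‖ ≤ 1 := by
          refine ContinuousLinearMap.opNorm_le_bound _ zero_le_one fun z => ?_
          rw [one_mul]; exact norm_le_pi_norm z x.1
        nlinarith [ha.nonneg]
      refine (LC.clm (part x.2) h1).mono ?_
      nlinarith [ha.nonneg, hnp x.2]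
    · intro t ht
      exact (part x.2).hasFDerivAt.comp_hasDerivAt t ((hasDerivAt_pi.1 (hda t ht)) x.1)
  set H : ℝ → ENNReal := fun t => 1 + ∑ x, G x t with hH
  have hHm : AEMeasurable H (volume.restrict (Ioo 0 1)) :=
    (Finset.aemeasurable_fun_sum _ fun x _ => hGm x).const_add 1
  have hHp : ∫⁻ t in Ioo 0 1, H t ^ p ≤ CE := by
    calc ∫⁻ t in Ioo 0 1, H t ^ p ≤ ∫⁻ t in Ioo 0 1, 2 ^ (p - 1) * (1 + K ^ (p - 1) * ∑ x, G x t ^ p) := by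
          refine lintegral_mono fun t => ?_
          refine (ENNReal.rpow_add_le_mul_rpow_add_rpow 1 (∑ x, G x t) hp).trans ?_
          rw [ENNReal.one_rpow]
          gcongr
          exact ENNReal.rpow_sum_le_const_mul_sum_rpow _ _ hp
      _ = 2 ^ (p - 1) * (1 + K ^ (p - 1) * ∑ x, ∫⁻ t in Ioo 0 1, G x t ^ p) := by
          rw [lintegral_const_mul' _ _ h21, lintegral_add_left measurable_const, lintegral_const_mul' _ _ hK1,
            lintegral_finsetSum' _ fun x _ => (hGm x).pow_const p]
          simp
      _ ≤ _ := by
          rw [hCE]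
          gcongr with x
          exact hGi x
  have hHfin : ∀ᵐ t ∂(volume.restrict (Ioo (0:ℝ) 1)), H t < ⊤ := by
    have := ae_lt_top' (hHm.pow_const p) (ne_top_of_le_ne_top hCEt hHp)
    filter_upwards [this] with t ht
    by_contra hcon
    rw [not_lt_top_iff.1 hcon, ENNReal.top_rpow_of_pos (by linarith)] at ht
    exact lt_irrefl _ ht
  have h1 : ∀ t, H t ≠ ⊤ → 1 ≤ (H t).toReal := by
    intro t ht
    rw [← ENNReal.toReal_one]
    exact ENNReal.toReal_mono ht le_self_add
  have hae : (fun t => max 1 (H t).toReal) =ᵐ[volume.restrict (Ioo (0:ℝ) 1)] fun t => (H t).toReal := by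
    filter_upwards [hHfin] with t ht
    exact max_eq_right (h1 t ht.ne)
  have haep : (fun t => (max 1 (H t).toReal) ^ p) =ᵐ[volume.restrict (Ioo (0:ℝ) 1)]
      fun t => (H t ^ p).toReal := by
    filter_upwards [hae] with t ht
    rw [ht, ENNReal.toReal_rpow]
  have hint1 : ∫⁻ t in Ioo 0 1, H t ≠ ⊤ := by
    refine ne_top_of_le_ne_top hCEt (le_trans (lintegral_mono fun t => ?_) hHp)
    have : (1 : ENNReal) ≤ H t := le_self_add
    calc H t = H t ^ (1:ℝ) := (ENNReal.rpow_one _).symm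
      _ ≤ H t ^ p := ENNReal.rpow_le_rpow_of_exponent_le this hp
  refine ⟨fun t => max 1 (H t).toReal, fun t => le_max_left _ _, ?_, ?_, ?_, ?_⟩
  · exact (integrable_toReal_of_lintegral_ne_top hHm hint1).congr hae.symm
  · exact (integrable_toReal_of_lintegral_ne_top (hHm.pow_const p)
      (ne_top_of_le_ne_top hCEt hHp)).congr haep.symm
  · rw [integral_congr_ae haep, integral_toReal (hHm.pow_const p)]
    · exact ENNReal.toReal_mono hCEt hHp
    · exact ae_lt_top' (hHm.pow_const p) (ne_top_of_le_ne_top hCEt hHp)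
  · intro i
    filter_upwards [hHfin] with t ht
    have hGt : ∀ x, G x t ≠ ⊤ := fun x => by
      refine ne_top_of_le_ne_top ht.ne ?_
      exact (Finset.single_le_sum (f := fun x => G x t) (fun _ _ => zero_le) (Finset.mem_univ x)).trans le_add_self
    have hle : ∀ b, |part b (a' t i)| ≤ (G (i, b) t).toReal * ‖a t i‖ ^ q i := by
      intro b
      refine (Grad_le (hGt (i, b)) (hq0 i)).trans ?_
      gcongr
      · exact hq0 i
      · exact part_le b (a t i)
    refine (le_part _).trans ((add_le_add (hle true) (hle false)).trans ?_)
    rw [← add_mul]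
    gcongr
    refine le_trans ?_ (le_max_right _ _)
    rw [← ENNReal.toReal_add (hGt _) (hGt _)]
    refine ENNReal.toReal_mono ht.ne ?_
    refine le_trans ?_ (le_add_self : ∑ x, G x t ≤ _)
    have : ({(i, true), (i, false)} : Finset (Fin d × Bool)).sum (fun x => G x t) ≤ ∑ x, G x t :=
      Finset.sum_le_sum_of_subset (Finset.subset_univ _)
    rwa [Finset.sum_pair (by simp)] at this

end RS

namespace RS
open Polynomial

lemma eval_Lp_scale (d : ℕ) (a : Fin d → ℂ) (s z : ℂ) (hs : s ≠ 0) :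
    eval (z / s) (Lp d (fun i => a i / s ^ (d - (i:ℕ)))) = eval z (Lp d a) / s ^ d := by
  rw [eval_Lp, eval_Lp, Finset.sum_div]
  refine Finset.sum_congr rfl fun i _ => ?_
  have : s ^ d = s ^ (d - (i:ℕ)) * s ^ (i:ℕ) := by
    rw [← pow_add]; congr 1; have := i.2; omega
  rw [this, div_pow]
  field_simp

lemma eval_Pp_scale (d : ℕ) (a : Fin d → ℂ) (s z : ℂ) (hs : s ≠ 0) :
    eval (z / s) (Pp d (fun i => a i / s ^ (d - (i:ℕ)))) = eval z (Pp d a) / s ^ d := by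
  rw [Pp, eval_add, eval_Lp_scale d a s z hs, Pp, eval_add]
  simp only [eval_pow, eval_X]
  rw [div_pow]; ring

lemma eval_dPp_scale (d : ℕ) (a : Fin d → ℂ) (s z : ℂ) (hs : s ≠ 0) :
    eval (z / s) (derivative (Pp d (fun i => a i / s ^ (d - (i:ℕ))))) =
      eval z (derivative (Pp d a)) / s ^ d * s := by
  have : Pp d (fun i => a i / s ^ (d - (i:ℕ))) = C ((s ^ d)⁻¹) * (Pp d a).comp (C s * X) := by
    apply Polynomial.funext
    intro w
    have := eval_Pp_scale d a s (w * s) hs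
    rw [mul_div_cancel_right₀ _ hs] at this
    rw [this]
    simp only [eval_mul, eval_C, eval_comp, eval_X]
    rw [mul_comm w s, div_eq_inv_mul]
  rw [this, derivative_C_mul, derivative_comp]
  simp only [derivative_mul, derivative_C, zero_mul, derivative_X, mul_one, zero_add, eval_mul,
    eval_C, eval_comp, eval_X]
  rw [mul_div_cancel₀ _ hs]
  ring

lemma Sq_scale (d : ℕ) (a a' : Fin d → ℂ) (s r z : ℂ) (hs : s ≠ 0) :
    Sq d (fun i => a i / s ^ (d - (i:ℕ))) (fun i => r * a' i / s ^ (d - (i:ℕ))) (z / s) =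
      r / s * Sq d a a' z := by
  have h1 : eval (z / s) (Lp d (fun i => r * a' i / s ^ (d - (i:ℕ)))) = r * eval z (Lp d a') / s ^ d := by
    rw [eval_Lp_scale d (fun i => r * a' i) s z hs]
    congr 1
    simp [eval_Lp, Finset.mul_sum, mul_assoc]
  rw [Sq, Sq, h1, eval_dPp_scale d a s z hs]
  by_cases h0 : eval z (derivative (Pp d a)) = 0
  · simp [h0]
  · field_simp

lemma affine_lint {u ℓ : ℝ} (hℓ : 0 < ℓ) {Ω : Set ℝ} (hΩ : MeasurableSet Ω) (f : ℝ → ENNReal) :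
    ∫⁻ t in Ω, f t = ENNReal.ofReal ℓ * ∫⁻ x in {x | u + ℓ * x ∈ Ω}, f (u + ℓ * x) := by
  have himg : Ω = (fun x => u + ℓ * x) '' {x | u + ℓ * x ∈ Ω} := by
    ext t
    constructor
    · intro ht
      have : u + ℓ * ((t - u) / ℓ) = t := by field_simp; ring
      exact ⟨(t - u) / ℓ, by show _ ∈ Ω; rw [this]; exact ht, this⟩
    · rintro ⟨x, hx, rfl⟩; exact hx
  have hm : MeasurableSet {x | u + ℓ * x ∈ Ω} := (by fun_prop : Measurable fun x : ℝ => u + ℓ * x) hΩ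
  conv_lhs => rw [himg]
  rw [lintegral_image_eq_lintegral_abs_deriv_mul (f' := fun _ => ℓ) hm
    (fun x _ => by
      have := ((hasDerivAt_id x).const_mul ℓ).const_add u
      simpa using this.hasDerivWithinAt)
    (fun x _ y _ h => by simpa [hℓ.ne'] using h)]
  rw [abs_of_pos hℓ, lintegral_const_mul' _ _ ENNReal.ofReal_ne_top]

lemma ivl_int {h : ℝ → ℝ} (hi : IntegrableOn h (Ioo 0 1)) {u v : ℝ} (h0 : 0 ≤ u) (huv : u ≤ v)
    (h1 : v ≤ 1) : IntervalIntegrable h volume u v := by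
  rw [intervalIntegrable_iff_integrableOn_Ioo_of_le huv]
  exact hi.mono_set (Ioo_subset_Ioo h0 h1)

lemma len_le {h : ℝ → ℝ} (hge : ∀ t, 1 ≤ h t) (hi : IntegrableOn h (Ioo 0 1)) {u v : ℝ} (h0 : 0 ≤ u)
    (huv : u ≤ v) (h1 : v ≤ 1) : v - u ≤ ∫ t in u..v, h t := by
  have := intervalIntegral.integral_mono_on huv (intervalIntegrable_const (c := (1:ℝ)))
    (ivl_int hi h0 huv h1) (fun t _ => hge t)
  simpa using this

lemma osc {N : ℕ} (hN : 1 ≤ N) {M : ℝ} {d : ℕ} {a a' : ℝ → Fin d → ℂ} (ha : LC N M a)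
    (hda : ∀ t ∈ Ioo (0:ℝ) 1, HasDerivAt a (a' t) t) {h : ℝ → ℝ} (hge : ∀ t, 1 ≤ h t)
    (hi : IntegrableOn h (Ioo 0 1))
    (hae : ∀ i : Fin d, ∀ᵐ t ∂(volume.restrict (Ioo 0 1)),
        ‖a' t i‖ ≤ h t * ‖a t i‖ ^ (1 - ((d - i : ℕ) : ℝ)⁻¹))
    {u v A0 : ℝ} (h0 : 0 ≤ u) (huv : u < v) (h1 : v ≤ 1) (hA0 : 0 < A0)
    (hA : ∀ t ∈ Ioo u v, ∀ i : Fin d, ‖a t i‖ ≤ A0 ^ (d - (i:ℕ))) (i : Fin d) :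
    ∀ s ∈ Ioo u v, ∀ t ∈ Ioo u v, ‖a t i - a s i‖ ≤ A0 ^ (d - (i:ℕ)) / A0 * ∫ t in u..v, h t := by
  intro s hs t ht
  have hsub : Ioo u v ⊆ Ioo 0 1 := Ioo_subset_Ioo h0 h1
  have hsub2 : uIcc s t ⊆ Ioo u v := (convex_Ioo u v).ordConnected.uIcc_subset hs ht
  have hsub3 : uIoc s t ⊆ Ioo u v := uIoc_subset_uIcc.trans hsub2
  obtain ⟨N, rfl⟩ : ∃ N', N = N' + 1 := ⟨N - 1, by omega⟩
  have ha'c : ContinuousOn a' (Ioo 0 1) := by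
    obtain ⟨-, b', hb', hb2⟩ := LC_succ_iff.1 ha
    exact hb2.continuousOn.congr fun x hx => (hda x hx).unique (hb' x hx)
  have ftc : ∫ x in s..t, a' x i = a t i - a s i := by
    apply intervalIntegral.integral_eq_sub_of_hasDerivAt
    · intro x hx
      exact (hasDerivAt_pi.1 (hda x (hsub (hsub2 hx)))) i
    · apply ContinuousOn.intervalIntegrable
      exact ((continuousOn_pi.1 ha'c) i).mono (hsub2.trans hsub)
  have hw1 : (1:ℝ) ≤ ((d - i : ℕ) : ℝ) := by
    have := i.2; exact_mod_cast (by omega : 1 ≤ d - (i:ℕ))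
  have hq0 : 0 ≤ 1 - ((d - i : ℕ) : ℝ)⁻¹ := sub_nonneg.2 (inv_le_one_of_one_le₀ hw1)
  have hpw : (A0 ^ (d - (i:ℕ))) ^ (1 - ((d - i : ℕ) : ℝ)⁻¹) = A0 ^ (d - (i:ℕ)) / A0 := by
    rw [← Real.rpow_natCast, ← Real.rpow_mul hA0.le, mul_sub, mul_one,
      mul_inv_cancel₀ (by linarith), Real.rpow_sub hA0, Real.rpow_one]
  have hii : IntervalIntegrable h volume u v := ivl_int hi h0 huv.le h1
  have hin : uIoc s t ⊆ uIoc u v := by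
    rw [uIoc_of_le huv.le]; exact hsub3.trans Ioo_subset_Ioc_self
  rw [← ftc]
  have key := intervalIntegral.norm_integral_le_abs_of_norm_le (f := fun x => a' x i)
    (g := fun x => A0 ^ (d - (i:ℕ)) / A0 * h x) (a := s) (b := t) (μ := volume) (by
      have := ae_restrict_of_ae_restrict_of_subset (hsub3.trans hsub) (hae i)
      filter_upwards [this, ae_restrict_mem measurableSet_uIoc] with x hx hx2
      refine hx.trans ?_
      rw [mul_comm, ← hpw]
      have := hge x
      have := hA x (hsub3 hx2) i
      gcongr) ((hii.mono_set' hin).const_mul _)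
  refine key.trans ?_
  rw [intervalIntegral.integral_const_mul, abs_mul, abs_of_nonneg (by positivity)]
  gcongr
  have h5 := intervalIntegral.abs_integral_mono_interval hin
    (Filter.Eventually.of_forall fun x => by simpa using (zero_le_one.trans (hge x))) hii
  rwa [abs_of_nonneg (a := ∫ t in u..v, h t) (by linarith [len_le hge hi h0 huv.le h1])] at h5

lemma good (N : ℕ) (hN : 1 ≤ N) (p : ℝ) (hp : 1 ≤ p) (d : ℕ) (hd : 2 ≤ d) (hdN : d ≤ N + 1)
    (IH : ∀ k, 1 ≤ k → k < d → TT N p k) (M : ℝ) :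
    ∃ B > 0, B ≤ 1 ∧ ∃ C : ENNReal, C ≠ ⊤ ∧
      ∀ (a a' : ℝ → Fin d → ℂ) (Ω : Set ℝ) (l : ℝ → ℂ) (h : ℝ → ℝ), LC N M a →
      (∀ t ∈ Ioo (0:ℝ) 1, HasDerivAt a (a' t) t) → Adm d a Ω l →
      (∀ t ∈ Ioo (0:ℝ) 1, a t ⟨d - 1, by omega⟩ = 0) →
      (∀ t, 1 ≤ h t) → IntegrableOn h (Ioo 0 1) →
      (∀ i : Fin d, ∀ᵐ t ∂(volume.restrict (Ioo 0 1)),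
        ‖a' t i‖ ≤ h t * ‖a t i‖ ^ (1 - ((d - i : ℕ) : ℝ)⁻¹)) →
      ∀ u v A0 : ℝ, 0 ≤ u → u < v → v ≤ 1 → 0 < A0 →
      (∀ t ∈ Ioo u v, ∀ i : Fin d, ‖a t i‖ ≤ A0 ^ (d - (i:ℕ))) →
      (∃ t ∈ Ioo u v, ∃ i : Fin d, (A0 / 2) ^ (d - (i:ℕ)) ≤ ‖a t i‖) →
      ∫ t in u..v, h t ≤ B * A0 →
      ∫⁻ t in Ω ∩ Ioo u v, ‖Sq d (a t) (a' t) (l t)‖ₑ ^ p ≤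
        C * ENNReal.ofReal ((v - u) * (A0 / (v - u)) ^ p) := by
  obtain ⟨C0, hC01, hlandau⟩ := landau (E := ℂ) N
  set M2 := C0 * (1 + M) + M with hM2
  obtain ⟨ε, hε, C, hC, hcs⟩ := compact_split N hN p d hd IH ((1/2) ^ d) M2 (by positivity)
  refine ⟨min ε 1, by positivity, min_le_right _ _, C, hC, ?_⟩
  intro a a' Ω l h ha hda hAdm htop hge hi hae u v A0 hu0 huv hv1 hA0 hAle hAge hν
  have hM : 0 ≤ M := ha.nonneg
  set ℓ := v - u with hℓ
  have hℓ0 : 0 < ℓ := by rw [hℓ]; linarith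
  have hℓ1 : ℓ ≤ 1 := by rw [hℓ]; linarith
  have hosc := osc hN ha hda hge hi hae hu0 huv hv1 hA0 hAle
  have hνl := len_le hge hi hu0 huv.le hv1
  have hνA : ∫ t in u..v, h t ≤ A0 := hν.trans (by nlinarith [min_le_right ε 1])
  have hνε : ∫ t in u..v, h t ≤ ε * A0 := hν.trans (by nlinarith [min_le_left ε 1])
  have hℓA : ℓ ≤ A0 := hνl.trans hνA
  have hsub : Ioo u v ⊆ Ioo 0 1 := Ioo_subset_Ioo hu0 hv1
  have hg : ∀ x ∈ Ioo (0:ℝ) 1, u + ℓ * x ∈ Ioo u v := by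
    intro x hx
    constructor
    · nlinarith [hx.1]
    · have : ℓ * x < ℓ := by nlinarith [hx.2]
      rw [hℓ] at this ⊢; linarith
  have hgd : ∀ x, HasDerivAt (fun x => u + ℓ * x) ℓ x := fun x => by
    have := ((hasDerivAt_id x).const_mul ℓ).const_add u
    simpa using this
  -- rescaled data
  set b : ℝ → Fin d → ℂ := fun x i => a (u + ℓ * x) i / (A0 : ℂ) ^ (d - (i:ℕ)) with hb
  set b' : ℝ → Fin d → ℂ := fun x i => (ℓ : ℂ) * a' (u + ℓ * x) i / (A0 : ℂ) ^ (d - (i:ℕ)) with hb'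
  set Ω' : Set ℝ := {x | u + ℓ * x ∈ Ω ∩ Ioo u v} with hΩ'
  have hA0c : (A0 : ℂ) ≠ 0 := by exact_mod_cast hA0.ne'
  have hbd : ∀ x ∈ Ioo (0:ℝ) 1, HasDerivAt b (b' x) x := by
    intro x hx
    rw [hasDerivAt_pi]
    intro i
    have h1 := (hasDerivAt_pi.1 ((hda _ (hsub (hg x hx))).scomp x (hgd x))) i
    have h2 := h1.div_const ((A0 : ℂ) ^ (d - (i:ℕ)))
    simpa using h2
  have hbnorm : ∀ x i, ‖b x i‖ = ‖a (u + ℓ * x) i‖ / A0 ^ (d - (i:ℕ)) := by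
    intro x i
    simp only [hb, norm_div, norm_pow, Complex.norm_real, Real.norm_eq_abs, abs_of_pos hA0]
  have hb1 : ∀ x ∈ Ioo (0:ℝ) 1, ∀ i, ‖b x i‖ ≤ 1 := by
    intro x hx i
    rw [hbnorm, div_le_one (by positivity)]
    exact hAle _ (hg x hx) i
  have hM20 : 0 ≤ M2 := by positivity
  have hLC : LC N M2 b := by
    refine LC.pi hM20 fun i => ?_
    obtain ⟨F, hF0, c1, c2, c3⟩ := ha
    set w := d - (i:ℕ) with hw
    have hwN : w ≤ N + 1 := by omega
    have hKM : M * ℓ ^ (N+1) / A0 ^ w ≤ M := by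
      rw [div_le_iff₀ (by positivity)]
      have : ℓ ^ (N+1) ≤ A0 ^ w :=
        (pow_le_pow_of_le_one hℓ0.le hℓ1 hwN).trans (by gcongr)
      gcongr
    set Ft : ℕ → ℝ → ℂ := fun s x => (ℓ ^ s / A0 ^ w : ℝ) • F s (u + ℓ * x) i with hFt
    have f1 : ∀ s < N, ∀ x ∈ Ioo (0:ℝ) 1, HasDerivAt (Ft s) (Ft (s+1) x) x := by
      intro s hs x hx
      have h1 := (hasDerivAt_pi.1 ((c1 s hs _ (hsub (hg x hx))).scomp x (hgd x))) i
      have h2 := h1.const_smul (ℓ ^ s / A0 ^ w : ℝ)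
      have e : Ft (s+1) x = (ℓ ^ s / A0 ^ w : ℝ) • (ℓ • F (s + 1) (u + ℓ * x)) i := by
        simp only [hFt, Pi.smul_apply, smul_smul]
        congr 1
        rw [pow_succ]; ring
      rw [e]
      exact h2
    have f3 : ∀ x ∈ Ioo (0:ℝ) 1, ∀ y ∈ Ioo (0:ℝ) 1, ‖Ft N x - Ft N y‖ ≤ (M * ℓ ^ (N+1) / A0 ^ w) * |x - y| := by
      intro x hx y hy
      have h1 := c3 _ (hsub (hg x hx)) _ (hsub (hg y hy))
      have h2 : ‖F N (u + ℓ * x) i - F N (u + ℓ * y) i‖ ≤ M * (ℓ * |x - y|) := by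
        refine (norm_le_pi_norm (F N (u + ℓ * x) - F N (u + ℓ * y)) i).trans (h1.trans (le_of_eq ?_))
        rw [show u + ℓ * x - (u + ℓ * y) = ℓ * (x - y) by ring, abs_mul, abs_of_pos hℓ0]
      simp only [hFt]
      rw [← smul_sub, norm_smul, Real.norm_eq_abs, abs_of_pos (by positivity)]
      calc ℓ ^ N / A0 ^ w * ‖F N (u + ℓ * x) i - F N (u + ℓ * y) i‖
          ≤ ℓ ^ N / A0 ^ w * (M * (ℓ * |x - y|)) := by gcongr
        _ = _ := by rw [pow_succ]; ring
    have f3' : ∀ x ∈ Ioo (0:ℝ) 1, ∀ y ∈ Ioo (0:ℝ) 1, ‖Ft N x - Ft N y‖ ≤ M * |x - y| :=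
      fun x hx y hy => (f3 x hx y hy).trans (by gcongr)
    have f0 : ∀ x, Ft 0 x = b x i := by
      intro x
      simp only [hFt, hb, hF0, pow_zero]
      rw [Complex.real_smul]
      push_cast
      ring
    have f2 : ∀ s ≤ N, ∀ x ∈ Ioo (0:ℝ) 1, ‖Ft s x‖ ≤ M / A0 ^ w := by
      intro s hs x hx
      simp only [hFt]
      rw [norm_smul, Real.norm_eq_abs, abs_of_pos (by positivity)]
      have h1 : ‖F s (u + ℓ * x) i‖ ≤ M := (norm_le_pi_norm _ i).trans (c2 s hs _ (hsub (hg x hx)))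
      calc ℓ ^ s / A0 ^ w * ‖F s (u + ℓ * x) i‖ ≤ 1 / A0 ^ w * M := by
            gcongr; exact pow_le_one₀ hℓ0.le hℓ1
        _ = _ := by ring
    have hl := hlandau Ft (max (M / A0 ^ w) M) 1 M
      ⟨f1, fun s hs x hx => (f2 s hs x hx).trans (le_max_left _ _),
        fun x hx y hy => (f3' x hx y hy).trans (by gcongr; exact le_max_right _ _)⟩
      (fun x hx => by rw [f0]; exact hb1 x hx i) f3'
    refine ⟨Ft, funext f0, f1, fun s hs x hx => (hl s hs x hx).trans (by rw [hM2]; linarith),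
      fun x hx y hy => (f3' x hx y hy).trans ?_⟩
    gcongr
    rw [hM2]
    have : 0 ≤ C0 * (1 + M) := by positivity
    linarith
  obtain ⟨hΩm, hΩs, hl, hroot⟩ := hAdm
  have hΩ's : Ω' ⊆ Ioo 0 1 := by
    intro x hx
    have h1 : u + ℓ * x ∈ Ioo u v := hx.2
    constructor
    · have := h1.1; by_contra hcon; nlinarith
    · have := h1.2; by_contra hcon
      have : ℓ ≤ ℓ * x := by nlinarith
      rw [hℓ] at this h1; linarith [h1.2]
  have hΩ'm : MeasurableSet Ω' :=
    (by fun_prop : Measurable fun x : ℝ => u + ℓ * x) (hΩm.inter measurableSet_Ioo)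
  have hadm' : Adm d b Ω' (fun x => l (u + ℓ * x) / A0) := by
    refine ⟨hΩ'm, hΩ's, ?_, fun x hx => ?_⟩
    · refine ContinuousOn.div_const ?_ _
      refine hl.comp (by fun_prop) fun x hx => hx.1
    · obtain ⟨r1, r2⟩ := hroot _ hx.1
      simp only [hb]
      rw [eval_Pp_scale d _ _ _ hA0c, eval_dPp_scale d _ _ _ hA0c, r1]
      refine ⟨by simp, ?_⟩
      exact mul_ne_zero (div_ne_zero r2 (pow_ne_zero _ hA0c)) hA0c
  have hclose : ∃ c : Fin d → ℂ, c ⟨d - 1, by omega⟩ = 0 ∧ (1/2) ^ d ≤ ‖c‖ ∧ ‖c‖ ≤ 1 ∧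
        ∀ t ∈ Ioo (0:ℝ) 1, ‖b t - c‖ ≤ ε := by
    obtain ⟨t0, ht0, i0, hi0⟩ := hAge
    set x0 := (t0 - u) / ℓ with hx0
    have hgx0 : u + ℓ * x0 = t0 := by rw [hx0]; field_simp; ring
    have hx0m : x0 ∈ Ioo (0:ℝ) 1 := by
      constructor
      · rw [hx0]; exact div_pos (by linarith [ht0.1]) hℓ0
      · rw [hx0, div_lt_one hℓ0, hℓ]; linarith [ht0.2]
    refine ⟨b x0, ?_, ?_, ?_, ?_⟩
    · simp only [hb]
      rw [htop _ (hsub (hg x0 hx0m)), zero_div]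
    · refine le_trans ?_ (norm_le_pi_norm (b x0) i0)
      rw [hbnorm, hgx0, le_div_iff₀ (by positivity)]
      refine le_trans ?_ hi0
      rw [div_pow, div_pow, one_pow, div_mul_eq_mul_div, one_mul]
      gcongr
      · norm_num
      · omega
    · rw [pi_norm_le_iff_of_nonneg zero_le_one]
      exact hb1 x0 hx0m
    · intro x hx
      rw [pi_norm_le_iff_of_nonneg hε.le]
      intro i
      have h1 := hosc i _ (hg x0 hx0m) _ (hg x hx)
      have h2 : b x i - b x0 i = (a (u + ℓ * x) i - a (u + ℓ * x0) i) / (A0 : ℂ) ^ (d - (i:ℕ)) := by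
        simp only [hb]; ring
      rw [Pi.sub_apply, h2, norm_div, norm_pow, Complex.norm_real, Real.norm_eq_abs, abs_of_pos hA0,
        div_le_iff₀ (by positivity)]
      refine h1.trans ?_
      calc A0 ^ (d - (i:ℕ)) / A0 * ∫ t in u..v, h t ≤ A0 ^ (d - (i:ℕ)) / A0 * (ε * A0) := by gcongr
        _ = _ := by field_simp
  have hfin := hcs b b' Ω' (fun x => l (u + ℓ * x) / A0) hLC hbd hadm' hclose
  rw [affine_lint (u := u) hℓ0 (hΩm.inter measurableSet_Ioo)]
  have hS : ∀ x, ‖Sq d (a (u + ℓ * x)) (a' (u + ℓ * x)) (l (u + ℓ * x))‖ₑ ^ p =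
      ENNReal.ofReal ((A0 / ℓ) ^ p) * ‖Sq d (b x) (b' x) (l (u + ℓ * x) / A0)‖ₑ ^ p := by
    intro x
    simp only [hb, hb']
    rw [Sq_scale d _ _ _ _ _ hA0c, enorm_mul, ENNReal.mul_rpow_of_nonneg _ _ (by linarith),
      ← mul_assoc]
    have e1 : ‖(ℓ : ℂ) / (A0 : ℂ)‖ₑ = ENNReal.ofReal (ℓ / A0) := by
      rw [← ofReal_norm, norm_div, Complex.norm_real, Complex.norm_real, Real.norm_eq_abs,
        Real.norm_eq_abs, abs_of_pos hℓ0, abs_of_pos hA0]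
    rw [e1, ENNReal.ofReal_rpow_of_pos (by positivity), ← ENNReal.ofReal_mul (by positivity),
      ← Real.mul_rpow (by positivity) (by positivity)]
    have : A0 / ℓ * (ℓ / A0) = 1 := by field_simp
    rw [this]; simp
  simp only [hS]
  rw [lintegral_const_mul' _ _ ENNReal.ofReal_ne_top, ← mul_assoc, ← ENNReal.ofReal_mul hℓ0.le,
    mul_comm C]
  gcongr

end RS

namespace RS
open Polynomial

lemma jensen {h : ℝ → ℝ} {p : ℝ} (hp : 1 ≤ p) (hge : ∀ t, 1 ≤ h t) (hi : IntegrableOn h (Ioo 0 1))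
    (hip : IntegrableOn (fun t => h t ^ p) (Ioo 0 1)) {u v : ℝ} (h0 : 0 ≤ u) (huv : u < v)
    (h1 : v ≤ 1) :
    (v - u) * ((∫ t in u..v, h t) / (v - u)) ^ p ≤ ∫ t in u..v, h t ^ p := by
  set ν := ∫ t in u..v, h t with hν
  have hl := len_le hge hi h0 huv.le h1
  have hℓ : 0 < v - u := by linarith
  set c := ν / (v - u) with hc
  have hc0 : 0 < c := div_pos (by linarith) hℓ
  have hcl : c * (v - u) = ν := by rw [hc]; field_simp
  have key : ∀ t, c ^ p + p * c ^ p / c * (h t - c) ≤ h t ^ p := by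
    intro t
    have hh := hge t
    have h1 := one_add_mul_self_le_rpow_one_add (s := h t / c - 1)
      (by have : 0 ≤ h t / c := by positivity
          linarith) hp
    have h2 : (1 + (h t / c - 1)) = h t / c := by ring
    rw [h2, Real.div_rpow (by linarith) hc0.le, le_div_iff₀ (by positivity)] at h1
    refine le_trans (le_of_eq ?_) h1
    field_simp
  have hii := ivl_int hi h0 huv.le h1
  have := intervalIntegral.integral_mono_on huv.le
    (((intervalIntegrable_const (c := c ^ p)).add
      ((hii.sub (intervalIntegrable_const (c := c))).const_mul (p * c ^ p / c))))
    (ivl_int hip h0 huv.le h1) (fun t _ => key t)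
  refine le_trans (le_of_eq ?_) this
  rw [intervalIntegral.integral_add (by simp) ((hii.sub (by simp)).const_mul _),
    intervalIntegral.integral_const_mul, intervalIntegral.integral_sub hii (by simp)]
  simp only [intervalIntegral.integral_const, smul_eq_mul]
  rw [← hν, ← hcl]; ring

lemma bisect {h : ℝ → ℝ} {p : ℝ} (hp : 1 ≤ p) (hge : ∀ t, 1 ≤ h t) (hi : IntegrableOn h (Ioo 0 1))
    (hip : IntegrableOn (fun t => h t ^ p) (Ioo 0 1)) {A : ℝ → ℝ} {f : ℝ → ENNReal} {Ω : Set ℝ}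
    {B : ℝ} (hB : 0 < B) {C : ENNReal} (hA0 : ∀ t, 0 ≤ A t) (hAb : ∀ t ∈ Ioo (0:ℝ) 1, A t ≤ 2 / B)
    (hg : ∀ u v A0 : ℝ, 0 ≤ u → u < v → v ≤ 1 → 0 < A0 → (∀ t ∈ Ioo u v, A t ≤ A0) →
      (∃ t ∈ Ioo u v, A0 / 2 ≤ A t) → ∫ t in u..v, h t ≤ B * A0 →
      ∫⁻ t in Ω ∩ Ioo u v, f t ≤ C * ENNReal.ofReal ((v - u) * (A0 / (v - u)) ^ p))
    {δ : ℝ} (hδ : 0 < δ) :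
    ∫⁻ t in (Ω ∩ {t | δ < A t}) ∩ Ioo 0 1, f t ≤
      C * ENNReal.ofReal ((2 / B) ^ p * ∫ t in (0:ℝ)..1, h t ^ p) := by
  have claim : ∀ K : ℕ, ∀ u v : ℝ, 0 ≤ u → u < v → v ≤ 1 →
      (∀ t ∈ Ioo u v, A t ≤ 2 / B * ∫ t in u..v, h t) → ∫ t in u..v, h t ≤ 2 ^ K * B * δ →
      ∫⁻ t in (Ω ∩ {t | δ < A t}) ∩ Ioo u v, f t ≤
        C * ENNReal.ofReal ((2 / B) ^ p * ∫ t in u..v, h t ^ p) := by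
    intro K
    induction K with
    | zero =>
      intro u v hu huv hv hA hK
      set ν := ∫ t in u..v, h t with hν
      have hbd : BddAbove (A '' Ioo u v) := ⟨_, by rintro _ ⟨t, ht, rfl⟩; exact hA t ht⟩
      have hne : (A '' Ioo u v).Nonempty := (nonempty_Ioo.2 huv).image _
      set A0 := sSup (A '' Ioo u v) with hA0d
      have hle : ∀ t ∈ Ioo u v, A t ≤ A0 := fun t ht => le_csSup hbd ⟨t, ht, rfl⟩
      by_cases hδA : A0 ≤ δ
      · have : (Ω ∩ {t | δ < A t}) ∩ Ioo u v = ∅ := by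
          ext t; simp only [mem_inter_iff, mem_empty_iff_false, iff_false]
          rintro ⟨⟨-, h1⟩, h2⟩
          have := hle t h2
          have h1 : δ < A t := h1
          linarith
        rw [this]; simp
      push Not at hδA
      have hA0p : 0 < A0 := hδ.trans hδA
      obtain ⟨_, ⟨t0, ht0, rfl⟩, ht0'⟩ := exists_lt_of_lt_csSup hne (show A0 / 2 < A0 by linarith)
      have h3 := hg u v A0 hu huv hv hA0p hle ⟨t0, ht0, ht0'.le⟩ (by nlinarith)
      refine (lintegral_mono_set (inter_subset_inter_left _ inter_subset_left)).trans (h3.trans ?_)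
      refine mul_le_mul' le_rfl (ENNReal.ofReal_le_ofReal ?_)
      have h4 := jensen hp hge hi hip hu huv hv
      have h5 : A0 ≤ 2 / B * ν := csSup_le hne (by rintro _ ⟨t, ht, rfl⟩; exact hA t ht)
      have hl := len_le hge hi hu huv.le hv
      have hℓ : 0 < v - u := by linarith
      calc (v - u) * (A0 / (v - u)) ^ p ≤ (v - u) * ((2 / B) * (ν / (v - u))) ^ p := by
            gcongr
            rw [← mul_div_assoc]; gcongr
        _ = (2 / B) ^ p * ((v - u) * (ν / (v - u)) ^ p) := by
            rw [Real.mul_rpow (by positivity) (by apply div_nonneg <;> linarith)]; ring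
        _ ≤ _ := by gcongr
    | succ K ih =>
      intro u v hu huv hv hA hK
      set ν := ∫ t in u..v, h t with hν
      have hl := len_le hge hi hu huv.le hv
      have hℓ : 0 < v - u := by linarith
      have hbd : BddAbove (A '' Ioo u v) := ⟨_, by rintro _ ⟨t, ht, rfl⟩; exact hA t ht⟩
      have hne : (A '' Ioo u v).Nonempty := (nonempty_Ioo.2 huv).image _
      set A0 := sSup (A '' Ioo u v) with hA0d
      have hle : ∀ t ∈ Ioo u v, A t ≤ A0 := fun t ht => le_csSup hbd ⟨t, ht, rfl⟩
      by_cases hcase : ν ≤ B * A0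
      · have hA0p : 0 < A0 := by
          by_contra hcon; nlinarith
        obtain ⟨_, ⟨t0, ht0, rfl⟩, ht0'⟩ := exists_lt_of_lt_csSup hne (show A0 / 2 < A0 by linarith)
        have h3 := hg u v A0 hu huv hv hA0p hle ⟨t0, ht0, ht0'.le⟩ hcase
        refine (lintegral_mono_set (inter_subset_inter_left _ inter_subset_left)).trans (h3.trans ?_)
        refine mul_le_mul' le_rfl (ENNReal.ofReal_le_ofReal ?_)
        have h4 := jensen hp hge hi hip hu huv hv
        have h5 : A0 ≤ 2 / B * ν := csSup_le hne (by rintro _ ⟨t, ht, rfl⟩; exact hA t ht)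
        calc (v - u) * (A0 / (v - u)) ^ p ≤ (v - u) * ((2 / B) * (ν / (v - u))) ^ p := by
              gcongr
              rw [← mul_div_assoc]; gcongr
          _ = (2 / B) ^ p * ((v - u) * (ν / (v - u)) ^ p) := by
              rw [Real.mul_rpow (by positivity) (by apply div_nonneg <;> linarith)]; ring
          _ ≤ _ := by gcongr
      · push Not at hcase
        have hii := ivl_int hi hu huv.le hv
        have hcont : ContinuousOn (fun x => ∫ t in u..x, h t) (Icc u v) := by
          have := intervalIntegral.continuousOn_primitive_interval (a := u) (b := v) (f := h) (μ := volume)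
            (by rw [uIcc_of_le huv.le, integrableOn_Icc_iff_integrableOn_Ioc]
                exact (intervalIntegrable_iff_integrableOn_Ioc_of_le huv.le).1 hii)
          rwa [uIcc_of_le huv.le] at this
        obtain ⟨w, hw, hwν⟩ : ∃ w ∈ Icc u v, ∫ t in u..w, h t = ν / 2 := by
          have := intermediate_value_Icc huv.le hcont
          obtain ⟨w, hw, h2⟩ := this (show ν / 2 ∈ Icc _ _ from by
            simp only [intervalIntegral.integral_same]
            constructor <;> linarith)
          exact ⟨w, hw, h2⟩
        have huw : u < w := by
          refine lt_of_le_of_ne hw.1 ?_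
          rintro rfl
          simp only [intervalIntegral.integral_same] at hwν
          linarith
        have hadd := intervalIntegral.integral_add_adjacent_intervals
          (ivl_int hi hu huw.le (hw.2.trans hv)) (ivl_int hi (hu.trans huw.le) hw.2 hv)
        have hwv2 : ∫ t in w..v, h t = ν / 2 := by linarith
        have hwv : w < v := by
          refine lt_of_le_of_ne hw.2 ?_
          rintro rfl
          simp only [intervalIntegral.integral_same] at hwv2
          linarith
        have hAν : ∀ t ∈ Ioo u v, A t ≤ 2 / B * (ν / 2) := by
          intro t ht
          have := hle t ht
          rw [show 2 / B * (ν / 2) = ν / B by field_simp, le_div_iff₀ hB]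
          nlinarith
        have i1 := ih u w hu huw (hwv.le.trans hv)
          (fun t ht => by rw [hwν]; exact hAν t ⟨ht.1, ht.2.trans hwv⟩)
          (by rw [hwν]; rw [pow_succ] at hK; linarith)
        have i2 := ih w v (hu.trans huw.le) hwv hv
          (fun t ht => by rw [hwv2]; exact hAν t ⟨huw.trans ht.1, ht.2⟩)
          (by rw [hwv2]; rw [pow_succ] at hK; linarith)
        have haddp := intervalIntegral.integral_add_adjacent_intervals
          (ivl_int hip hu huw.le (hw.2.trans hv)) (ivl_int hip (hu.trans huw.le) hw.2 hv)
        set S := Ω ∩ {t | δ < A t} with hS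
        have hsub : S ∩ Ioo u v ⊆ (S ∩ Ioo u w) ∪ ((S ∩ Ioo w v) ∪ {w}) := by
          rintro t ⟨h1, h2⟩
          rcases lt_trichotomy t w with h3 | h3 | h3
          · exact Or.inl ⟨h1, h2.1, h3⟩
          · exact Or.inr (Or.inr h3)
          · exact Or.inr (Or.inl ⟨h1, h3, h2.2⟩)
        have hInt : ∫⁻ t in S ∩ Ioo u v, f t ≤ (∫⁻ t in S ∩ Ioo u w, f t) + ∫⁻ t in S ∩ Ioo w v, f t := by
          refine (lintegral_mono_set hsub).trans ((lintegral_union_le _ _ _).trans ?_)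
          refine add_le_add le_rfl ?_
          refine (lintegral_union_le _ _ _).trans ?_
          simp
        have hnn : ∀ x y : ℝ, x ≤ y → 0 ≤ (2 / B) ^ p * ∫ t in x..y, h t ^ p := by
          intro x y hxy
          have : 0 ≤ ∫ t in x..y, h t ^ p := intervalIntegral.integral_nonneg hxy fun t _ => by
            have := hge t; positivity
          positivity
        refine hInt.trans ((add_le_add i1 i2).trans (le_of_eq ?_))
        rw [← mul_add, ← ENNReal.ofReal_add (hnn _ _ huw.le) (hnn _ _ hwv.le), ← mul_add, haddp]
  have hl := len_le hge hi le_rfl zero_le_one le_rfl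
  obtain ⟨K, hK⟩ := pow_unbounded_of_one_lt ((∫ t in (0:ℝ)..1, h t) / (B * δ)) (one_lt_two)
  refine claim K 0 1 le_rfl one_pos le_rfl ?_ ?_
  · intro t ht
    refine (hAb t ht).trans ?_
    have : 0 < 2 / B := by positivity
    nlinarith
  · rw [div_lt_iff₀ (by positivity)] at hK
    linarith
end RS

namespace RS
open Polynomial

lemma tsch (N : ℕ) (hN : 1 ≤ N) (p : ℝ) (hp : 1 ≤ p) (hpN : p * N < N + 1) (d : ℕ) (hd : 2 ≤ d)
    (hdN : d ≤ N + 1) (IH : ∀ k, 1 ≤ k → k < d → TT N p k) (M : ℝ) :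
    ∃ C : ENNReal, C ≠ ⊤ ∧
      ∀ (a a' : ℝ → Fin d → ℂ) (Ω : Set ℝ) (l : ℝ → ℂ), LC N M a →
      (∀ t ∈ Ioo (0:ℝ) 1, HasDerivAt a (a' t) t) → Adm d a Ω l →
      (∀ t ∈ Ioo (0:ℝ) 1, a t ⟨d - 1, by omega⟩ = 0) →
      ∫⁻ t in Ω, ‖Sq d (a t) (a' t) (l t)‖ₑ ^ p ≤ C := by
  obtain ⟨B, hB, hB1, C, hC, hgood⟩ := good N hN p hp d hd hdN IH M
  obtain ⟨Ch, hdens⟩ := density N hN p M hp hpN d hdN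
  set B' := min B (2 / (1 + |M|)) with hB'
  have hB'0 : 0 < B' := by positivity
  refine ⟨C * ENNReal.ofReal ((2 / B') ^ p * Ch), ENNReal.mul_ne_top hC ENNReal.ofReal_ne_top, ?_⟩
  intro a a' Ω l ha hda hAdm htop
  obtain ⟨h, hge, hi, hip, hhp, hae⟩ := hdens a a' ha hda
  have hM : 0 ≤ M := ha.nonneg
  have : Nonempty (Fin d) := ⟨⟨0, by omega⟩⟩
  set A : ℝ → ℝ := fun t => ⨆ i : Fin d, ‖a t i‖ ^ ((d - i : ℕ) : ℝ)⁻¹ with hA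
  have hw : ∀ i : Fin d, d - (i:ℕ) ≠ 0 := fun i => by have := i.2; omega
  have hAi : ∀ t i, ‖a t i‖ ^ ((d - i : ℕ) : ℝ)⁻¹ ≤ A t := fun t i =>
    le_ciSup (f := fun i : Fin d => ‖a t i‖ ^ ((d - i : ℕ) : ℝ)⁻¹) (Set.finite_range _).bddAbove i
  have hpow : ∀ t i, (‖a t i‖ ^ ((d - i : ℕ) : ℝ)⁻¹) ^ (d - (i:ℕ)) = ‖a t i‖ := fun t i =>
    Real.rpow_inv_natCast_pow (norm_nonneg _) (hw i)
  have hA0 : ∀ t, 0 ≤ A t := fun t => Real.iSup_nonneg fun i => by positivity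
  have hAle : ∀ t A0, A t ≤ A0 → ∀ i : Fin d, ‖a t i‖ ≤ A0 ^ (d - (i:ℕ)) := by
    intro t A0 h1 i
    rw [← hpow t i]
    have := (hAi t i).trans h1
    gcongr
  have hAge : ∀ t A0, 0 ≤ A0 → A0 ≤ A t → ∃ i : Fin d, A0 ^ (d - (i:ℕ)) ≤ ‖a t i‖ := by
    intro t A0 h0 h1
    obtain ⟨i, hi⟩ := exists_eq_ciSup_of_finite (f := fun i : Fin d => ‖a t i‖ ^ ((d - i : ℕ) : ℝ)⁻¹)
    refine ⟨i, ?_⟩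
    rw [← hpow t i]
    have hi : ‖a t i‖ ^ ((d - i : ℕ) : ℝ)⁻¹ = A t := hi
    rw [hi]
    gcongr
  have hAb : ∀ t ∈ Ioo (0:ℝ) 1, A t ≤ 2 / B' := by
    intro t ht
    have h1 : A t ≤ 1 + |M| := by
      refine ciSup_le fun i => ?_
      have h2 : ‖a t i‖ ≤ 1 + |M| :=
        (norm_le_pi_norm (a t) i).trans ((ha.bound t ht).trans (by linarith [le_abs_self M]))
      calc ‖a t i‖ ^ ((d - i : ℕ) : ℝ)⁻¹ ≤ (1 + |M|) ^ ((d - i : ℕ) : ℝ)⁻¹ := by gcongr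
        _ ≤ (1 + |M|) ^ (1:ℝ) := by
            apply Real.rpow_le_rpow_of_exponent_le
            · linarith [abs_nonneg M]
            · apply inv_le_one_of_one_le₀
              have := hw i
              exact_mod_cast (by omega : 1 ≤ d - (i:ℕ))
        _ = _ := Real.rpow_one _
    refine h1.trans ?_
    rw [le_div_iff₀ hB'0]
    have h2 : B' ≤ 2 / (1 + |M|) := min_le_right _ _
    rw [le_div_iff₀ (by positivity)] at h2
    linarith
  have hbis : ∀ k : ℕ, ∫⁻ t in (Ω ∩ {t | ((k:ℝ)+1)⁻¹ < A t}) ∩ Ioo 0 1,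
      ‖Sq d (a t) (a' t) (l t)‖ₑ ^ p ≤ C * ENNReal.ofReal ((2 / B') ^ p * Ch) := by
    intro k
    have := bisect (A := A) (Ω := Ω) (f := fun t => ‖Sq d (a t) (a' t) (l t)‖ₑ ^ p) hp hge hi hip hB'0
      (C := C) hA0 hAb (by
      intro u v A0 hu huv hv hA0 h1 ⟨t, ht, h2⟩ h3
      refine hgood a a' Ω l h ha hda hAdm htop hge hi hae u v A0 hu huv hv hA0
        (fun t ht i => hAle t A0 (h1 t ht) i) ⟨t, ht, hAge t (A0/2) (by positivity) h2⟩
        (h3.trans ?_)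
      have : B' ≤ B := min_le_left _ _
      gcongr) (δ := ((k:ℝ)+1)⁻¹) (by positivity)
    refine this.trans ?_
    rw [intervalIntegral.integral_of_le zero_le_one, integral_Ioc_eq_integral_Ioo]
    gcongr
  have := exhaust (S := fun k : ℕ => (Ω ∩ {t | ((k:ℝ)+1)⁻¹ < A t}) ∩ Ioo 0 1) (by
    intro j k hjk t ht
    refine ⟨⟨ht.1.1, ?_⟩, ht.2⟩
    refine lt_of_le_of_lt ?_ (show _ < A t from ht.1.2)
    gcongr) hbis
  refine (lintegral_mono_set ?_).trans this
  intro t ht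
  obtain ⟨hΩm, hΩs, hl, hroot⟩ := hAdm
  have hApos : 0 < A t := by
    refine lt_of_le_of_ne (hA0 t) fun h0 => ?_
    have hz : a t = 0 := by
      ext i
      have := hAle t 0 h0.symm.le i
      rw [zero_pow (hw i)] at this
      simpa using this
    obtain ⟨r1, r2⟩ := hroot t ht
    rw [hz] at r1 r2
    have e : Pp d (0 : Fin d → ℂ) = X ^ d := by simp [Pp, Lp]
    rw [e] at r1 r2
    simp only [eval_pow, eval_X] at r1
    have : l t = 0 := by
      by_contra h; exact pow_ne_zero _ h r1
    apply r2
    rw [this, derivative_X_pow]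
    simp
    right; omega
  obtain ⟨k, hk⟩ := exists_nat_one_div_lt hApos
  rw [one_div] at hk
  exact mem_iUnion.2 ⟨k, ⟨ht, hk⟩, hΩs ht⟩

lemma eval_dPp (d : ℕ) (c : Fin d → ℂ) (z : ℂ) :
    eval z (derivative (Pp d c)) = d * z ^ (d - 1) + ∑ i : Fin d, c i * ((i:ℕ) * z ^ ((i:ℕ) - 1)) := by
  simp [Pp, Lp, eval_finsetSum, derivative_sum, derivative_X_pow]

lemma hasDeriv_eval2 {d : ℕ} {a : ℝ → Fin d → ℂ} {a' : Fin d → ℂ} {t : ℝ} {z : ℝ → ℂ} {z' : ℂ}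
    {s : Set ℝ} (h : HasDerivWithinAt a a' s t) (hz : HasDerivWithinAt z z' s t) :
    HasDerivWithinAt (fun s => eval (z s) (Pp d (a s)))
      (eval (z t) (Lp d a') + eval (z t) (derivative (Pp d (a t))) * z') s t := by
  simp only [eval_Pp]
  have h1 := (hz.fun_pow d).fun_add (HasDerivWithinAt.fun_sum (u := Finset.univ)
    (A := fun (i : Fin d) s => a s i * z s ^ (i:ℕ)) (fun i _ =>
    ((hasDerivWithinAt_pi.1 h) i).fun_mul (hz.fun_pow (i:ℕ))))
  refine h1.congr_deriv ?_
  symm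
  rw [eval_Lp, eval_dPp, Finset.sum_add_distrib, add_mul, Finset.sum_mul]
  rw [← add_assoc, add_comm (∑ i : Fin d, a' i * z t ^ (i:ℕ)), add_assoc]
  congr 2
  refine Finset.sum_congr rfl fun i _ => by ring

/-- Tschirnhausen transformation of the coefficients -/
def Ts (d : ℕ) (hd : 1 ≤ d) (a : Fin d → ℂ) : Fin d → ℂ :=
  fun i => ((Pp d a).comp (X + C (- (a ⟨d - 1, by omega⟩ / d)))).coeff i

lemma Pp_Ts (d : ℕ) (hd : 1 ≤ d) (a : Fin d → ℂ) :
    Pp d (Ts d hd a) = (Pp d a).comp (X + C (- (a ⟨d - 1, by omega⟩ / d))) := by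
  symm
  refine eq_Pp ?_ ?_
  · exact (Pp_monic _ _).comp (monic_X_add_C _) (by rw [natDegree_X_add_C]; exact one_ne_zero)
  · rw [natDegree_comp, Pp_natDegree, natDegree_X_add_C, mul_one]

lemma Ts_eq (d : ℕ) (hd : 1 ≤ d) (a : Fin d → ℂ) (i : Fin d) :
    Ts d hd a i = (- (a ⟨d - 1, by omega⟩ / d)) ^ (d - (i:ℕ)) * (d.choose i : ℂ) +
      ∑ j : Fin d, a j * ((- (a ⟨d - 1, by omega⟩ / d)) ^ ((j:ℕ) - (i:ℕ)) * ((j:ℕ).choose i : ℂ)) := by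
  rw [Ts, Pp, Lp, add_comp, X_pow_comp, Polynomial.sum_comp, coeff_add, finsetSum_coeff,
    coeff_X_add_C_pow]
  congr 1
  refine Finset.sum_congr rfl fun j _ => ?_
  rw [mul_comp, C_comp, X_pow_comp, coeff_C_mul, coeff_X_add_C_pow]

lemma contDiff_Ts (d : ℕ) (hd : 1 ≤ d) {n : WithTop ℕ∞} : ContDiff ℝ n (Ts d hd) := by
  rw [contDiff_pi]
  intro i
  simp only [Ts_eq]
  fun_prop

lemma Ts_top (d : ℕ) (hd : 1 ≤ d) (a : Fin d → ℂ) : Ts d hd a ⟨d - 1, by omega⟩ = 0 := by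
  rw [Ts_eq]
  rw [Finset.sum_eq_single ⟨d - 1, by omega⟩]
  · have e : d - (d - 1) = 1 := by omega
    have e2 : d.choose (d - 1) = d := by
      obtain ⟨e, rfl⟩ : ∃ e, d = e + 1 := ⟨d - 1, by omega⟩
      simp
    simp only [e, e2, pow_one, Nat.sub_self, pow_zero, Nat.choose_self]
    have : (d:ℂ) ≠ 0 := by exact_mod_cast (by omega)
    field_simp
    simp
  · intro j _ hj
    have : (j:ℕ) < d - 1 := by
      have h1 := j.2
      have h2 : (j:ℕ) ≠ d - 1 := fun h => hj (Fin.ext h)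
      omega
    simp [Nat.choose_eq_zero_of_lt this]
  · simp

lemma TT_one (N : ℕ) (hN : 1 ≤ N) (p : ℝ) (hp : 1 ≤ p) : TT N p 1 := by
  intro M
  refine ⟨ENNReal.ofReal |M| ^ p, by finiteness, ?_⟩
  intro a a' Ω l ha hda ⟨hΩm, hΩs, hl, hroot⟩
  obtain ⟨N, rfl⟩ : ∃ N', N = N' + 1 := ⟨N - 1, by omega⟩
  obtain ⟨-, b', hb', hb2⟩ := LC_succ_iff.1 ha
  have : ∀ t ∈ Ω, ‖Sq 1 (a t) (a' t) (l t)‖ₑ ^ p ≤ ENNReal.ofReal |M| ^ p := by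
    intro t ht
    have e : a' t = b' t := (hda t (hΩs ht)).unique (hb' t (hΩs ht))
    have h1 : ‖Sq 1 (a t) (a' t) (l t)‖ ≤ |M| := by
      rw [Sq, eval_Lp, eval_dPp, e]
      simp only [Finset.univ_unique, Finset.sum_singleton, Fin.default_eq_zero, Fin.isValue]
      simp
      exact (norm_le_pi_norm (b' t) 0).trans ((hb2.bound t (hΩs ht)).trans (le_abs_self M))
    gcongr
    rw [← ofReal_norm]
    exact ENNReal.ofReal_le_ofReal h1
  calc ∫⁻ t in Ω, ‖Sq 1 (a t) (a' t) (l t)‖ₑ ^ p ≤ ∫⁻ t in Ω, ENNReal.ofReal |M| ^ p :=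
        setLIntegral_mono measurable_const this
    _ = ENNReal.ofReal |M| ^ p * volume Ω := by simp
    _ ≤ ENNReal.ofReal |M| ^ p * volume (Ioo (0:ℝ) 1) := by gcongr
    _ = _ := by simp

theorem TT_all (N : ℕ) (hN : 1 ≤ N) (p : ℝ) (hp : 1 ≤ p) (hpN : p * N < N + 1) :
    ∀ d, 1 ≤ d → d ≤ N + 1 → TT N p d := by
  intro d
  induction d using Nat.strong_induction_on with
  | _ d ih =>
    intro hd1 hdN
    rcases Nat.lt_or_ge d 2 with h2 | hd
    · obtain rfl : d = 1 := by omega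
      exact TT_one N hN p hp
    intro M
    obtain ⟨M2, hM2⟩ := LC.comp_aux N (Fin d → ℂ) (Ts d hd1) 0 (|M|) (|M| + 1) (by linarith)
      (contDiff_Ts d hd1).contDiffOn M
    obtain ⟨C, hC, hts⟩ := tsch N hN p hp hpN d hd hdN (fun k hk hkd => ih k hkd hk (by omega)) M2
    refine ⟨2 ^ (p - 1) * (C + ENNReal.ofReal |M| ^ p), by finiteness, ?_⟩
    intro a a' Ω l ha hda hAdm
    have hb : LC N M2 (fun x => Ts d hd1 (a x)) := hM2 a ha fun x hx => by
      rw [mem_closedBall_zero_iff]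
      exact (ha.bound x hx).trans (le_abs_self M)
    obtain ⟨N, rfl⟩ : ∃ N', N = N' + 1 := ⟨N - 1, by omega⟩
    obtain ⟨-, b', hb', hb2⟩ := LC_succ_iff.1 hb
    obtain ⟨-, a'', ha'', ha2⟩ := LC_succ_iff.1 ha
    set s : ℝ → ℂ := fun t => a t ⟨d - 1, by omega⟩ / d with hs
    set s' : ℝ → ℂ := fun t => a' t ⟨d - 1, by omega⟩ / d with hs'
    have hsd : ∀ t ∈ Ioo (0:ℝ) 1, HasDerivAt s (s' t) t := fun t ht =>
      ((hasDerivAt_pi.1 (hda t ht)) _).div_const _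
    have hev : ∀ t w, eval w (Pp d (Ts d hd1 (a t))) = eval (w + - s t) (Pp d (a t)) := by
      intro t w
      rw [Pp_Ts, eval_comp]; simp [hs]
    have hdev : ∀ t w, eval w (derivative (Pp d (Ts d hd1 (a t)))) =
        eval (w + - s t) (derivative (Pp d (a t))) := by
      intro t w
      rw [Pp_Ts, derivative_comp, eval_mul, eval_comp]; simp [hs]
    have hL : ∀ t ∈ Ioo (0:ℝ) 1, ∀ w, eval w (Lp d (b' t)) =
        eval (w + - s t) (Lp d (a' t)) + eval (w + - s t) (derivative (Pp d (a t))) * (- s' t) := by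
      intro t ht w
      have h1 := hasDeriv_eval (hb' t ht) w
      have h2 := hasDeriv_eval2 (s := univ) (hda t ht).hasDerivWithinAt
        (((hsd t ht).neg.const_add w).hasDerivWithinAt (s := univ))
      rw [hasDerivWithinAt_univ] at h2
      refine h1.unique ?_
      simp only [hev]
      exact h2
    obtain ⟨hΩm, hΩs, hl, hroot⟩ := hAdm
    have hac := ha.continuousOn
    have hadm' : Adm d (fun x => Ts d hd1 (a x)) Ω (fun t => l t + s t) := by
      refine ⟨hΩm, hΩs, ?_, ?_⟩
      · exact hl.add ((((continuousOn_pi.1 hac) _).mono hΩs).div_const _)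
      · intro t ht
        rw [hev, hdev]
        simpa using hroot t ht
    have hfin := hts _ b' Ω _ hb hb' hadm' (fun t ht => Ts_top d hd1 (a t))
    have hpt : ∀ t ∈ Ω, ‖Sq d (a t) (a' t) (l t)‖ₑ ^ p ≤
        2 ^ (p - 1) * (‖Sq d (Ts d hd1 (a t)) (b' t) (l t + s t)‖ₑ ^ p + ENNReal.ofReal |M| ^ p) := by
      intro t ht
      have e : Sq d (a t) (a' t) (l t) = Sq d (Ts d hd1 (a t)) (b' t) (l t + s t) + s' t := by
        have := (hroot t ht).2
        rw [Sq, Sq, hL t (hΩs ht), hdev]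
        simp only [add_neg_cancel_right]
        field_simp
        ring
      have hs'b : ‖s' t‖ₑ ≤ ENNReal.ofReal |M| := by
        rw [← ofReal_norm]
        apply ENNReal.ofReal_le_ofReal
        have h1 : ‖a' t ⟨d - 1, by omega⟩‖ ≤ |M| := by
          rw [(hda t (hΩs ht)).unique (ha'' t (hΩs ht))]
          exact (norm_le_pi_norm (a'' t) _).trans ((ha2.bound t (hΩs ht)).trans (le_abs_self M))
        simp only [hs', norm_div, Complex.norm_natCast]
        have hd' : (1:ℝ) ≤ d := by exact_mod_cast hd1
        exact (div_le_self (norm_nonneg _) hd').trans h1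
      rw [e]
      refine le_trans ?_ (mul_le_mul' le_rfl (add_le_add le_rfl (ENNReal.rpow_le_rpow hs'b (by linarith))))
      refine (ENNReal.rpow_le_rpow (enorm_add_le _ _) (by linarith)).trans ?_
      exact ENNReal.rpow_add_le_mul_rpow_add_rpow _ _ hp
    calc ∫⁻ t in Ω, ‖Sq d (a t) (a' t) (l t)‖ₑ ^ p
        ≤ ∫⁻ t in Ω, 2 ^ (p - 1) * (‖Sq d (Ts d hd1 (a t)) (b' t) (l t + s t)‖ₑ ^ p + ENNReal.ofReal |M| ^ p) :=
          setLIntegral_mono' hΩm hpt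
      _ = 2 ^ (p - 1) * ((∫⁻ t in Ω, ‖Sq d (Ts d hd1 (a t)) (b' t) (l t + s t)‖ₑ ^ p) + ∫⁻ t in Ω, ENNReal.ofReal |M| ^ p) := by
          rw [lintegral_const_mul' _ _ (by finiteness), lintegral_add_right _ measurable_const]
      _ ≤ _ := by
          refine mul_le_mul' le_rfl (add_le_add hfin ?_)
          simp only [lintegral_const, MeasurableSet.univ, Measure.restrict_apply, univ_inter]
          calc _ ≤ ENNReal.ofReal |M| ^ p * volume (Ioo (0:ℝ) 1) := by gcongr
            _ = _ := by simp
end RS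

namespace RS
open Polynomial

/-- coefficients of the normalized `k`-th derivative -/
def sh (n k : ℕ) (a : Fin n → ℂ) : Fin (n - k) → ℂ := fun i =>
  a ⟨i + k, by have := i.2; omega⟩ * (((i + k : ℕ).descFactorial k : ℕ) : ℂ) / ((n.descFactorial k : ℕ) : ℂ)

lemma descF_ne {n k : ℕ} (h : k ≤ n) : ((n.descFactorial k : ℕ) : ℂ) ≠ 0 := by
  have := Nat.descFactorial_pos.2 h
  exact_mod_cast this.ne'

lemma sh_iter {n k : ℕ} (h : k ≤ n) (a : Fin n → ℂ) :
    derivative^[k] (Pp n a) = C ((n.descFactorial k : ℕ) : ℂ) * Pp (n - k) (sh n k a) := by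
  ext m
  rw [coeff_iterate_derivative, coeff_C_mul, Pp_coeff, Pp_coeff, nsmul_eq_mul]
  have h0 := descF_ne h
  split_ifs with h1 h2 h3 h4 h5 h6 <;> try omega
  · simp only [sh]
    field_simp
  · obtain rfl : m = n - k := by omega
    simp [Nat.sub_add_cancel h]
  · simp

lemma eval_iter_zero {n k : ℕ} (h : k ≤ n) (a : Fin n → ℂ) (z : ℂ) :
    eval z (derivative^[k] (Pp n a)) = 0 ↔ eval z (Pp (n - k) (sh n k a)) = 0 := by
  rw [sh_iter h, eval_mul, eval_C, mul_eq_zero]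
  simp [descF_ne h]

/-- index -/
def mu (n : ℕ) (a : Fin n → ℂ) (z : ℂ) : ℕ := rootMultiplicity z (Pp n a) - 1

lemma mult_pos {n : ℕ} {a : Fin n → ℂ} {z : ℂ} (h : eval z (Pp n a) = 0) :
    0 < rootMultiplicity z (Pp n a) :=
  (rootMultiplicity_pos (Pp_monic n a).ne_zero).2 h

lemma mu_lt {n : ℕ} {a : Fin n → ℂ} {z : ℂ} (h : eval z (Pp n a) = 0) : mu n a z < n := by
  have h1 := mult_pos h
  have h2 : rootMultiplicity z (Pp n a) ≤ n := by
    have h3 := natDegree_le_of_dvd (pow_rootMultiplicity_dvd (Pp n a) z) (Pp_monic n a).ne_zero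
    rw [Pp_natDegree, natDegree_pow, natDegree_X_sub_C, mul_one] at h3
    exact h3
  unfold mu; omega

lemma mu_eq_iff {n k : ℕ} {a : Fin n → ℂ} {z : ℂ} (h : eval z (Pp n a) = 0) (hk : k < n) :
    mu n a z = k ↔ (∀ j ≤ k, eval z (Pp (n - j) (sh n j a)) = 0) ∧
      eval z (derivative (Pp (n - k) (sh n k a))) ≠ 0 := by
  have h1 := mult_pos h
  have hne := (Pp_monic n a).ne_zero
  have e1 : k < rootMultiplicity z (Pp n a) ↔ ∀ j ≤ k, eval z (Pp (n - j) (sh n j a)) = 0 := by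
    rw [lt_rootMultiplicity_iff_isRoot_iterate_derivative hne]
    refine forall₂_congr fun j hj => ?_
    exact eval_iter_zero (by omega) a z
  have e2 : k + 1 < rootMultiplicity z (Pp n a) ↔ (∀ j ≤ k, eval z (Pp (n - j) (sh n j a)) = 0) ∧
      eval z (derivative (Pp (n - k) (sh n k a))) = 0 := by
    rw [lt_rootMultiplicity_iff_isRoot_iterate_derivative hne]
    have : (∀ m ≤ k + 1, (derivative^[m] (Pp n a)).IsRoot z) ↔
      (∀ m ≤ k, (derivative^[m] (Pp n a)).IsRoot z) ∧ (derivative^[k+1] (Pp n a)).IsRoot z := by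
      constructor
      · intro h; exact ⟨fun m hm => h m (by omega), h _ le_rfl⟩
      · rintro ⟨h, h'⟩ m hm
        rcases Nat.lt_or_ge k m with h2 | h2
        · obtain rfl : m = k + 1 := by omega
          exact h'
        · exact h m h2
    rw [this]
    refine and_congr (forall₂_congr fun j hj => eval_iter_zero (by omega) a z) ?_
    rw [Function.iterate_succ_apply', sh_iter hk.le, derivative_C_mul, IsRoot.def, eval_mul, eval_C,
      mul_eq_zero]
    simp [descF_ne hk.le]
  constructor
  · intro hm
    have h3 : k < rootMultiplicity z (Pp n a) := by unfold mu at hm; omega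
    refine ⟨e1.1 h3, fun h4 => ?_⟩
    have := e2.2 ⟨e1.1 h3, h4⟩
    unfold mu at hm; omega
  · rintro ⟨h3, h4⟩
    have h5 := e1.2 h3
    have h6 : ¬ (k + 1 < rootMultiplicity z (Pp n a)) := fun h6 => h4 (e2.1 h6).2
    unfold mu; omega

/-- the candidate derivative -/
def Gd (n : ℕ) (a a' : Fin n → ℂ) (z : ℂ) : ℂ :=
  - Sq (n - mu n a z) (sh n (mu n a z) a) (sh n (mu n a z) a') z

lemma sh_hasDeriv {n k : ℕ} {a : ℝ → Fin n → ℂ} {a' : Fin n → ℂ} {t : ℝ} (h : HasDerivAt a a' t) :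
    HasDerivAt (fun s => sh n k (a s)) (sh n k a') t := by
  rw [hasDerivAt_pi]
  intro i
  exact (((hasDerivAt_pi.1 h) _).mul_const _).div_const _

/-- divided difference -/
def dd (d : ℕ) (c : Fin d → ℂ) (z w : ℂ) : ℂ :=
  (∑ j ∈ Finset.range d, z ^ j * w ^ (d - 1 - j)) +
    ∑ i : Fin d, c i * ∑ j ∈ Finset.range (i:ℕ), z ^ j * w ^ ((i:ℕ) - 1 - j)

lemma dd_spec (d : ℕ) (c : Fin d → ℂ) (z w : ℂ) :
    eval z (Pp d c) - eval w (Pp d c) = dd d c z w * (z - w) := by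
  have : ∀ i : Fin d, c i * (∑ j ∈ Finset.range (i:ℕ), z ^ j * w ^ ((i:ℕ) - 1 - j)) * (z - w)
    = c i * z ^ (i:ℕ) - c i * w ^ (i:ℕ) := by
    intro i; rw [mul_assoc, geom_sum₂_mul]; ring
  rw [dd, add_mul, geom_sum₂_mul, Finset.sum_mul, Finset.sum_congr rfl fun i _ => this i,
    Finset.sum_sub_distrib, eval_Pp, eval_Pp]
  ring

lemma dd_self (d : ℕ) (c : Fin d → ℂ) (z : ℂ) : dd d c z z = eval z (derivative (Pp d c)) := by
  rw [eval_dPp, dd]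
  have : ∀ k : ℕ, ∑ j ∈ Finset.range k, z ^ j * z ^ (k - 1 - j) = k * z ^ (k - 1) := by
    intro k
    rw [Finset.sum_congr rfl (g := fun _ => z ^ (k - 1))]
    · simp
    · intro j hj
      rw [← pow_add]; congr 1
      have := Finset.mem_range.1 hj; omega
  simp only [this]

lemma impl {d : ℕ} {b : ℝ → Fin d → ℂ} {b' : Fin d → ℂ} {l : ℝ → ℂ} {E : Set ℝ} {t : ℝ}
    (hb : HasDerivAt b b' t) (hl : ContinuousWithinAt l E t) 
    (h0 : ∀ s ∈ E, eval (l s) (Pp d (b s)) = 0) (ht : t ∈ E)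
    (h1 : eval (l t) (derivative (Pp d (b t))) ≠ 0) :
    HasDerivWithinAt l (- Sq d (b t) b' (l t)) E t := by
  rw [hasDerivWithinAt_iff_tendsto_slope]
  have hF := (hasDeriv_eval hb (l t)).hasDerivWithinAt (s := E)
  rw [hasDerivWithinAt_iff_tendsto_slope] at hF
  have hl' : Filter.Tendsto l (nhdsWithin t (E \ {t})) (nhds (l t)) :=
    (hl.mono sdiff_subset).tendsto
  have hb2 : Filter.Tendsto b (nhdsWithin t (E \ {t})) (nhds (b t)) :=
    hb.continuousAt.continuousWithinAt.tendsto
  have hq : Filter.Tendsto (fun s => dd d (b s) (l s) (l t)) (nhdsWithin t (E \ {t}))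
      (nhds (dd d (b t) (l t) (l t))) := by
    unfold dd
    refine Filter.Tendsto.add ?_ ?_
    · refine tendsto_finsetSum _ fun j _ => (hl'.pow _).mul_const _
    · refine tendsto_finsetSum _ fun i _ => ((tendsto_pi_nhds.1 hb2) i).mul ?_
      refine tendsto_finsetSum _ fun j _ => (hl'.pow _).mul_const _
  rw [dd_self] at hq
  have hmain := (hF.div hq h1).neg
  have e0 : - Sq d (b t) b' (l t) = -(eval (l t) (Lp d b') / eval (l t) (derivative (Pp d (b t)))) := rfl
  rw [e0]
  refine hmain.congr' ?_
  filter_upwards [hq.eventually_ne h1, self_mem_nhdsWithin] with s hs hsE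
  have := dd_spec d (b s) (l s) (l t)
  rw [h0 s hsE.1] at this
  have h3 : eval (l t) (Pp d (b s)) = - (dd d (b s) (l s) (l t) * (l s - l t)) := by
    rw [← this]; ring
  have e4 : slope (fun s => eval (l t) (Pp d (b s))) t s
      = -((s - t)⁻¹ • (l s - l t)) * dd d (b s) (l s) (l t) := by
    rw [slope_def_module, h0 t ht, h3, sub_zero]
    simp only [Complex.real_smul]
    ring
  rw [Pi.div_apply, e4, slope_def_module, mul_div_cancel_right₀ _ hs, neg_neg]
end RS

namespace RS

lemma cover_ftc {ι : Type} [Fintype ι] {f h : ℝ → ℝ} {x y : ℝ} (hxy : x ≤ y) (E : ι → Set ℝ)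
    (hE : ∀ k, MeasurableSet (E k)) (hcov : Icc x y ⊆ ⋃ k, E k)
    (hf : ContinuousOn f (Icc x y)) (hh : IntegrableOn h (Icc x y))
    (hd : ∀ k, ∀ t ∈ E k, HasDerivWithinAt f (h t) (E k) t) :
    ∫ t in x..y, h t = f y - f x := by
  set N : ℝ := (Fintype.card ι : ℝ)
  have hiab : IntervalIntegrable (fun t => |h t|) volume x y := by
    rw [intervalIntegrable_iff_integrableOn_Icc_of_le hxy]
    exact hh.norm
  set Φ : ℝ → ℝ := fun t => ∫ v in x..t, |h v| with hΦ
  -- step 1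
  have step1 : ∀ s ∈ Icc x y, ∀ t ∈ Icc x y, s ≤ t → dist (f s) (f t) ≤ N * dist (Φ s) (Φ t) := by
    intro s hs t ht hst
    have hsub : Icc s t ⊆ Icc x y := Icc_subset_Icc hs.1 ht.2
    have h1 : uIcc (f s) (f t) ⊆ ⋃ k, f '' (E k ∩ Icc s t) := by
      have := intermediate_value_uIcc (f := f) (a := s) (b := t) (by
        rw [uIcc_of_le hst]; exact hf.mono hsub)
      refine this.trans ?_
      rw [uIcc_of_le hst]
      rintro _ ⟨w, hw, rfl⟩
      obtain ⟨k, hk⟩ := mem_iUnion.1 (hcov (hsub hw))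
      exact mem_iUnion.2 ⟨k, w, ⟨hk, hw⟩, rfl⟩
    have h2 : ∀ k, volume (f '' (E k ∩ Icc s t)) ≤ ∫⁻ w in Icc s t, ENNReal.ofReal |h w| := by
      intro k
      have h3 := addHaar_image_le_lintegral_abs_det_fderiv volume (f := f)
        (f' := fun w => ContinuousLinearMap.toSpanSingleton ℝ (h w)) ((hE k).inter measurableSet_Icc)
        (s := E k ∩ Icc s t) (fun w hw => ((hd k w hw.1).mono inter_subset_left).hasFDerivWithinAt)
      refine h3.trans ?_
      simp only [ContinuousLinearMap.det_toSpanSingleton]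
      exact lintegral_mono_set inter_subset_right
    have hInt : IntegrableOn (fun w => |h w|) (Icc s t) := (hh.mono_set hsub).norm
    have h4 : ∫⁻ w in Icc s t, ENNReal.ofReal |h w| = ENNReal.ofReal (∫ w in s..t, |h w|) := by
      rw [intervalIntegral.integral_of_le hst, ← integral_Icc_eq_integral_Ioc,
        ofReal_integral_eq_lintegral_ofReal hInt (Filter.Eventually.of_forall fun w => abs_nonneg _)]
    have hnn : 0 ≤ ∫ w in s..t, |h w| := intervalIntegral.integral_nonneg hst fun w _ => abs_nonneg _
    have h5 : ENNReal.ofReal |f t - f s| ≤ ENNReal.ofReal (N * ∫ w in s..t, |h w|) := by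
      rw [← Real.volume_interval]
      refine (measure_mono h1).trans ((measure_iUnion_le _).trans ?_)
      rw [tsum_fintype]
      refine (Finset.sum_le_sum fun k _ => h2 k).trans ?_
      rw [h4, Finset.sum_const, nsmul_eq_mul, ENNReal.ofReal_mul (by positivity)]
      simp [N]
    have h6 := (ENNReal.ofReal_le_ofReal_iff (by positivity)).1 h5
    have h7 : Φ t - Φ s = ∫ w in s..t, |h w| := by
      rw [hΦ]
      apply intervalIntegral.integral_interval_sub_left
      · exact hiab.mono_set (by rw [uIcc_of_le hxy, uIcc_of_le ht.1]; exact Icc_subset_Icc_right ht.2)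
      · exact hiab.mono_set (by rw [uIcc_of_le hxy, uIcc_of_le hs.1]; exact Icc_subset_Icc_right hs.2)
    rw [dist_comm, Real.dist_eq, dist_comm (Φ s), Real.dist_eq, h7, abs_of_nonneg hnn]
    exact h6
  have step1' : ∀ s ∈ Icc x y, ∀ t ∈ Icc x y, dist (f s) (f t) ≤ N * dist (Φ s) (Φ t) := by
    intro s hs t ht
    rcases le_total s t with h | h
    · exact step1 s hs t ht h
    · rw [dist_comm, dist_comm (Φ s)]; exact step1 t ht s hs h
  have hAC : AbsolutelyContinuousOnInterval f x y := by
    have hΦac := hiab.absolutelyContinuousOnInterval_intervalIntegral (c := x) (by simp)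
    have hΦ2 := hΦac.const_mul N
    rw [absolutelyContinuousOnInterval_iff] at hΦ2 ⊢
    intro ε hε
    obtain ⟨δ, hδ, H⟩ := hΦ2 ε hε
    refine ⟨δ, hδ, fun I hI hI2 => lt_of_le_of_lt (Finset.sum_le_sum fun i hi => ?_) (H I hI hI2)⟩
    have hm := hI.1 i hi
    rw [uIcc_of_le hxy] at hm
    refine (step1' _ hm.1 _ hm.2).trans (le_of_eq ?_)
    rw [Real.dist_eq, Real.dist_eq, ← mul_sub, abs_mul, abs_of_nonneg (by positivity : 0 ≤ N)]
  -- a.e. derivative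
  have hae : ∀ᵐ t, t ∈ Icc x y → deriv f t = h t := by
    have hcount : ∀ k, ∀ᵐ t, t ∈ E k → AccPt t (Filter.principal (E k)) := by
      intro k
      have hc := (countable_setOfPred_isolated_right_within (s := E k)).ae_notMem volume
      filter_upwards [hc] with t ht htE
      rw [accPt_iff_nhds]
      by_contra! hcon
      obtain ⟨U, hU, hU2⟩ := hcon
      apply ht
      refine ⟨htE, ?_⟩
      rw [← Filter.empty_mem_iff_bot, mem_nhdsWithin_iff_exists_mem_nhds_inter]
      refine ⟨U, hU, fun w hw => ?_⟩
      have := hU2 w ⟨hw.1, hw.2.1⟩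
      have h3 : t < w := hw.2.2
      exact absurd this h3.ne'
    have hdf := hAC.ae_differentiableAt
    filter_upwards [hdf, ae_all_iff.2 hcount] with t h1 h2 ht
    obtain ⟨k, hk⟩ := mem_iUnion.1 (hcov ht)
    have hU : UniqueDiffWithinAt ℝ (E k) t := uniqueDiffWithinAt_iff_accPt.2 (h2 k hk)
    have h3 := (h1 (by rwa [uIcc_of_le hxy])).hasDerivAt.hasDerivWithinAt (s := E k)
    exact hU.eq_deriv _ h3 (hd k t hk)
  rw [← hAC.integral_deriv_eq_sub]
  refine intervalIntegral.integral_congr_ae ?_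
  filter_upwards [hae] with t ht ht2
  rw [uIoc_of_le hxy] at ht2
  exact (ht ⟨ht2.1.le, ht2.2⟩).symm

/-- integration by parts on a one-dimensional open set -/
lemma parts {ι : Type} [Fintype ι] {Ω : Set ℝ} (hΩ : IsOpen Ω) (E : ι → Set ℝ)
    (hE : ∀ k, MeasurableSet (E k)) (hcov : Ω = ⋃ k, E k) {l g : ℝ → ℂ}
    (hl : ContinuousOn l Ω) (hd : ∀ k, ∀ t ∈ E k, HasDerivWithinAt l (g t) (E k) t)
    (hg : IntegrableOn g Ω) {φ φ' : ℝ → ℝ} (hφ : ∀ t, HasDerivAt φ (φ' t) t)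
    (hφ' : Continuous φ') (hc : HasCompactSupport φ) (hs : tsupport φ ⊆ Ω) :
    ∫ t in Ω, l t * (φ' t : ℂ) = - ∫ t in Ω, g t * (φ t : ℂ) := by
  have hφc : Continuous φ := continuous_iff_continuousAt.2 fun t => (hφ t).continuousAt
  have hφ0 : ∀ t, t ∉ tsupport φ → φ t = 0 := fun t ht => image_eq_zero_of_notMem_tsupport ht
  have hφ'0 : ∀ t, t ∉ tsupport φ → φ' t = 0 := by
    intro t ht
    have h1 : φ =ᶠ[nhds t] 0 := notMem_tsupport_iff_eventuallyEq.1 ht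
    have h2 : HasDerivAt φ 0 t := (hasDerivAt_const t (0:ℝ)).congr_of_eventuallyEq h1
    exact (hφ t).unique h2
  have hc' : HasCompactSupport φ' := by
    refine HasCompactSupport.intro hc fun t ht => hφ'0 t ht
  set F : ℝ → ℂ := fun t => l t * (φ t : ℂ) with hF
  set H : ℝ → ℂ := fun t => l t * (φ' t : ℂ) + g t * (φ t : ℂ) with hH
  have hFcont : Continuous F := by
    rw [continuous_iff_continuousAt]
    intro t
    by_cases ht : t ∈ tsupport φ
    · exact (hl.continuousAt (hΩ.mem_nhds (hs ht))).mul (Complex.continuous_ofReal.comp hφc).continuousAt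
    · have h1 : φ =ᶠ[nhds t] 0 := notMem_tsupport_iff_eventuallyEq.1 ht
      have : F =ᶠ[nhds t] fun _ => 0 := by
        filter_upwards [h1] with w hw
        simp [hF, hw]
      exact continuousAt_const.congr this.symm
  have hI1c : Continuous fun t => l t * (φ' t : ℂ) := by
    rw [continuous_iff_continuousAt]
    intro t
    by_cases ht : t ∈ tsupport φ
    · exact (hl.continuousAt (hΩ.mem_nhds (hs ht))).mul (Complex.continuous_ofReal.comp hφ').continuousAt
    · have : (fun t => l t * (φ' t : ℂ)) =ᶠ[nhds t] fun _ => 0 := by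
        filter_upwards [(isClosed_tsupport φ).isOpen_compl.mem_nhds ht] with w hw
        simp [hφ'0 w hw]
      exact continuousAt_const.congr this.symm
  have hI1 : Integrable (fun t => l t * (φ' t : ℂ)) := by
    apply hI1c.integrable_of_hasCompactSupport
    exact HasCompactSupport.intro hc fun t ht => by simp [hφ'0 t ht]
  have hI2 : IntegrableOn (fun t => g t * (φ t : ℂ)) Ω := by
    obtain ⟨B, hB⟩ := hφc.bounded_above_of_compact_support hc
    refine Integrable.mul_bdd (c := B) hg (Complex.continuous_ofReal.comp hφc).aestronglyMeasurable
      (Filter.Eventually.of_forall fun t => ?_)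
    simpa using hB t
  have hz : ∀ t, t ∉ Ω → g t * (φ t : ℂ) = 0 := fun t ht => by
    simp [hφ0 t fun h => ht (hs h)]
  have hz1 : ∀ t, t ∉ Ω → l t * (φ' t : ℂ) = 0 := fun t ht => by
    simp [hφ'0 t fun h => ht (hs h)]
  have hI2' : Integrable (fun t => g t * (φ t : ℂ)) :=
    (integrableOn_iff_integrable_of_support_subset (fun t ht => by
      by_contra h; exact ht (hz t h))).1 hI2
  have hIH : Integrable H := hI1.add hI2'
  obtain ⟨R, hR0, hR⟩ : ∃ R : ℝ, 0 ≤ R ∧ ∀ t ∈ tsupport φ, |t| < R := by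
    obtain ⟨R, hR⟩ := hc.isCompact.isBounded.subset_ball 0
    refine ⟨max R 0, le_max_right _ _, fun t ht => ?_⟩
    have := hR ht
    simp only [mem_ball_zero_iff, Real.norm_eq_abs] at this
    exact lt_max_of_lt_left this
  have hout : ∀ t, t ∉ Ioc (-R) R → H t = 0 := by
    intro t ht
    have : t ∉ tsupport φ := fun h => ht (by
      have := abs_lt.1 (hR t h); exact ⟨this.1, this.2.le⟩)
    simp [hH, hφ0 t this, hφ'0 t this]
  -- the cover
  set E' : Option ι → Set ℝ := fun o => o.elim (tsupport φ)ᶜ E with hE'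
  have hE'm : ∀ o, MeasurableSet (E' o) := by
    rintro (_ | k)
    · exact (isClosed_tsupport φ).measurableSet.compl
    · exact hE k
  have hE'c : ∀ t, t ∈ ⋃ o, E' o := by
    intro t
    by_cases ht : t ∈ tsupport φ
    · have := hs ht
      rw [hcov] at this
      obtain ⟨k, hk⟩ := mem_iUnion.1 this
      exact mem_iUnion.2 ⟨some k, hk⟩
    · exact mem_iUnion.2 ⟨none, ht⟩
  have hE'd : ∀ o, ∀ t ∈ E' o, HasDerivWithinAt F (H t) (E' o) t := by
    rintro (_ | k) t ht
    · have h1 : φ =ᶠ[nhds t] 0 := notMem_tsupport_iff_eventuallyEq.1 ht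
      have h2 : H t = 0 := by simp [hH, hφ0 t ht, hφ'0 t ht]
      rw [h2]
      have : F =ᶠ[nhds t] fun _ => 0 := by
        filter_upwards [h1] with w hw
        simp [hF, hw]
      exact ((hasDerivAt_const t (0:ℂ)).congr_of_eventuallyEq this).hasDerivWithinAt
    · have h1 := (hd k t ht).mul ((hφ t).ofReal_comp.hasDerivWithinAt (s := E k))
      refine h1.congr_deriv ?_
      simp only [hH]; ring
  have key : ∀ L : ℂ →L[ℝ] ℝ, L (∫ t, H t) = 0 := by
    intro L
    rw [← L.integral_comp_comm hIH]
    have h1 := cover_ftc (f := fun t => L (F t)) (h := fun t => L (H t)) (x := -R) (y := R)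
      (by linarith) E' hE'm (fun t _ => hE'c t) (L.continuous.comp hFcont).continuousOn
      (L.integrable_comp hIH).integrableOn
      (fun o t ht => L.hasFDerivAt.comp_hasDerivWithinAt t (hE'd o t ht))
    rw [intervalIntegral.integral_of_le (by linarith)] at h1
    rw [← setIntegral_eq_integral_of_forall_compl_eq_zero (s := Ioc (-R) R), h1]
    · have e1 : R ∉ tsupport φ := fun h => by have := hR R h; rw [abs_of_nonneg hR0] at this; linarith
      have e2 : -R ∉ tsupport φ := fun h => by
        have := hR (-R) h; rw [abs_neg, abs_of_nonneg hR0] at this; linarith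
      simp [hF, hφ0 _ e1, hφ0 _ e2]
    · intro t ht
      simp [hout t ht]
  have hH0 : ∫ t, H t = 0 := Complex.ext (key Complex.reCLM) (key Complex.imCLM)
  rw [integral_add hI1 hI2'] at hH0
  rw [setIntegral_eq_integral_of_forall_compl_eq_zero hz, setIntegral_eq_integral_of_forall_compl_eq_zero hz1]
  exact eq_neg_of_add_eq_zero_left hH0
end RS

namespace RS
open Polynomial

lemma Gd_of_mu {n k : ℕ} {a : Fin n → ℂ} {z : ℂ} (h : mu n a z = k) (a' : Fin n → ℂ) :
    Gd n a a' z = - Sq (n - k) (sh n k a) (sh n k a') z := by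
  subst h; rfl

section meas
variable {X : Type} [TopologicalSpace X] 

lemma cont_eval' {d : ℕ} {a : X → Fin d → ℂ} {l : X → ℂ} {s : Set X}
    (ha : ContinuousOn a s) (hl : ContinuousOn l s) :
    ContinuousOn (fun t => eval (l t) (Pp d (a t))) s := by
  simp only [eval_Pp]
  refine (hl.pow d).add (continuousOn_finsetSum _ fun i _ => ?_)
  exact ((continuousOn_pi.1 ha) i).mul (hl.pow _)

lemma cont_evalL' {d : ℕ} {a : X → Fin d → ℂ} {l : X → ℂ} {s : Set X}
    (ha : ContinuousOn a s) (hl : ContinuousOn l s) :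
    ContinuousOn (fun t => eval (l t) (Lp d (a t))) s := by
  simp only [eval_Lp]
  refine (continuousOn_finsetSum _ fun i _ => ?_)
  exact ((continuousOn_pi.1 ha) i).mul (hl.pow _)

lemma cont_evald' {d : ℕ} {a : X → Fin d → ℂ} {l : X → ℂ} {s : Set X}
    (ha : ContinuousOn a s) (hl : ContinuousOn l s) :
    ContinuousOn (fun t => eval (l t) (derivative (Pp d (a t)))) s := by
  simp only [eval_dPp]
  refine (continuousOn_const.mul (hl.pow _)).add (continuousOn_finsetSum _ fun i _ => ?_)
  exact ((continuousOn_pi.1 ha) i).mul (continuousOn_const.mul (hl.pow _))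

lemma cont_sh {n k : ℕ} {a : X → Fin n → ℂ} {s : Set X} (ha : ContinuousOn a s) :
    ContinuousOn (fun t => sh n k (a t)) s := by
  rw [continuousOn_pi]
  intro i
  exact (((continuousOn_pi.1 ha) _).mul continuousOn_const).div_const _

variable [MeasurableSpace X] [OpensMeasurableSpace X]

lemma meas_zero' {f : X → ℂ} {s : Set X} (hs : MeasurableSet s) (hf : ContinuousOn f s) :
    MeasurableSet {t ∈ s | f t = 0} := by
  obtain ⟨u, hu, hu2⟩ := continuousOn_iff_isClosed.1 hf {0} isClosed_singleton
  have : {t ∈ s | f t = 0} = u ∩ s := by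
    rw [← hu2]; ext t; simp [and_comm]
  rw [this]
  exact hu.measurableSet.inter hs

/-- strata -/
def Es (n : ℕ) (a : X → Fin n → ℂ) (l : X → ℂ) (s : Set X) (k : ℕ) : Set X :=
  {x ∈ s | mu n (a x) (l x) = k}

lemma mu_meas {n : ℕ} {a : X → Fin n → ℂ} {l : X → ℂ} {s : Set X} (hs : MeasurableSet s)
    (ha : ContinuousOn a s) (hl : ContinuousOn l s) (h0 : ∀ x ∈ s, eval (l x) (Pp n (a x)) = 0)
    {k : ℕ} (hk : k < n) : MeasurableSet (Es n a l s k) := by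
  have : Es n a l s k = (⋂ j ∈ Finset.range (k+1), {x ∈ s | eval (l x) (Pp (n - j) (sh n j (a x))) = 0}) \
      {x ∈ s | eval (l x) (derivative (Pp (n - k) (sh n k (a x)))) = 0} := by
    ext x
    simp only [Es, mem_ofPred_eq, mem_sdiff, mem_iInter, Finset.mem_range, Nat.lt_succ_iff]
    constructor
    · rintro ⟨hx, hm⟩
      have := (mu_eq_iff (h0 x hx) hk).1 hm
      exact ⟨fun j hj => ⟨hx, this.1 j hj⟩, fun h => this.2 h.2⟩
    · rintro ⟨h1, h2⟩
      have hx := (h1 0 (by omega)).1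
      exact ⟨hx, (mu_eq_iff (h0 x hx) hk).2 ⟨fun j hj => (h1 j hj).2, fun h => h2 ⟨hx, h⟩⟩⟩
  rw [this]
  refine MeasurableSet.diff ?_ (meas_zero' hs (cont_evald' (cont_sh ha) hl))
  exact Finset.measurableSet_biInter _ fun j _ => meas_zero' hs (cont_eval' (cont_sh ha) hl)

lemma Es_cover {n : ℕ} {a : X → Fin n → ℂ} {l : X → ℂ} {s : Set X}
    (h0 : ∀ x ∈ s, eval (l x) (Pp n (a x)) = 0) : s = ⋃ k : Fin n, Es n a l s k := by
  ext x
  simp only [mem_iUnion, Es, mem_ofPred_eq]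
  constructor
  · intro hx
    exact ⟨⟨_, mu_lt (h0 x hx)⟩, hx, rfl⟩
  · rintro ⟨k, hx, _⟩
    exact hx

lemma Gd_cont {n : ℕ} {a a' : X → Fin n → ℂ} {l : X → ℂ} {s : Set X} 
    (ha : ContinuousOn a s) (ha' : ContinuousOn a' s) (hl : ContinuousOn l s)
    (h0 : ∀ x ∈ s, eval (l x) (Pp n (a x)) = 0) {k : ℕ} (hk : k < n) :
    ContinuousOn (fun x => Gd n (a x) (a' x) (l x)) (Es n a l s k) := by
  have hsub : Es n a l s k ⊆ s := fun x hx => hx.1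
  have : ContinuousOn (fun x => - Sq (n - k) (sh n k (a x)) (sh n k (a' x)) (l x)) (Es n a l s k) := by
    unfold Sq
    refine ContinuousOn.neg (ContinuousOn.div ?_ ?_ ?_)
    · exact (cont_evalL' (cont_sh ha') hl).mono hsub
    · exact (cont_evald' (cont_sh ha) hl).mono hsub
    · intro x hx
      exact ((mu_eq_iff (h0 x hx.1) hk).1 hx.2).2
  refine this.congr fun x hx => ?_
  have : mu n (a x) (l x) = k := hx.2
  exact Gd_of_mu this _

lemma Gd_meas {n : ℕ} {a a' : X → Fin n → ℂ} {l : X → ℂ} {s : Set X} (hs : MeasurableSet s)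
    (ha : ContinuousOn a s) (ha' : ContinuousOn a' s) (hl : ContinuousOn l s)
    (h0 : ∀ x ∈ s, eval (l x) (Pp n (a x)) = 0) :
    Measurable (s.indicator fun x => Gd n (a x) (a' x) (l x)) := by
  have : (s.indicator fun x => Gd n (a x) (a' x) (l x)) =
    fun x => ∑ k : Fin n, (Es n a l s k).indicator (fun x => Gd n (a x) (a' x) (l x)) x := by
    ext x
    by_cases hx : x ∈ s
    · rw [indicator_of_mem hx, Finset.sum_eq_single ⟨_, mu_lt (h0 x hx)⟩]
      · rw [indicator_of_mem]; exact ⟨hx, rfl⟩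
      · intro b _ hb
        rw [indicator_of_notMem]
        rintro ⟨_, h⟩
        exact hb (Fin.ext h.symm)
      · simp
    · rw [indicator_of_notMem hx]
      symm
      apply Finset.sum_eq_zero
      intro k _
      rw [indicator_of_notMem]
      exact fun h => hx h.1
  rw [this]
  refine Finset.measurable_sum _ fun k _ => ?_
  classical
  rw [← piecewise_eq_indicator]
  exact (Gd_cont ha ha' hl h0 k.2).measurable_piecewise continuousOn_const (mu_meas hs ha hl h0 k.2)
end meas

/-- `sh` as a linear map -/
def shL (n k : ℕ) : (Fin n → ℂ) →L[ℝ] (Fin (n - k) → ℂ) :=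
  LinearMap.toContinuousLinearMap
    { toFun := sh n k
      map_add' := fun x y => by ext i; simp [sh]; ring
      map_smul' := fun c x => by ext i; simp [sh]; ring }

lemma shL_apply (n k : ℕ) (a : Fin n → ℂ) : shL n k a = sh n k a := rfl

lemma slice_bound (n : ℕ) (hn : 2 ≤ n) (p : ℝ) (hp : 1 ≤ p) (hpN : p * ((n-1:ℕ):ℝ) < ((n-1:ℕ):ℝ) + 1)
    (M : ℝ) : ∃ C : ENNReal, C ≠ ⊤ ∧
    ∀ (a a' : ℝ → Fin n → ℂ) (Ω : Set ℝ) (l : ℝ → ℂ), LC (n-1) M a →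
    (∀ t ∈ Ioo (0:ℝ) 1, HasDerivAt a (a' t) t) → MeasurableSet Ω → Ω ⊆ Ioo 0 1 →
    ContinuousOn l Ω → (∀ t ∈ Ω, eval (l t) (Pp n (a t)) = 0) →
    ∫⁻ t in Ω, ‖Gd n (a t) (a' t) (l t)‖ₑ ^ p ≤ C := by
  have H : ∀ k : Fin n, TT (n-1) p (n - k) := fun k =>
    TT_all (n-1) (by omega) p hp hpN (n-k) (by omega) (by omega)
  choose C hC hC2 using fun k : Fin n => H k (‖shL n k‖ * M)
  refine ⟨∑ k, C k, ENNReal.sum_ne_top.2 fun k _ => hC k, ?_⟩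
  intro a a' Ω l ha hd hΩ hΩ1 hl h0
  have hac : ContinuousOn a Ω := fun t ht => (hd t (hΩ1 ht)).continuousAt.continuousWithinAt
  have hcov := Es_cover (X := ℝ) h0
  conv_lhs => rw [hcov]
  refine (lintegral_iUnion_le _ _).trans ?_
  rw [tsum_fintype]
  refine Finset.sum_le_sum fun k _ => ?_
  have hm := mu_meas hΩ hac hl h0 k.2
  have hsub : Es n a l Ω k ⊆ Ω := fun x hx => hx.1
  have h1 := hC2 k (fun t => shL n k (a t)) (fun t => shL n k (a' t)) (Es n a l Ω k) l (ha.clm _)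
    (fun t ht => sh_hasDeriv (hd t ht)) ⟨hm, hsub.trans hΩ1, hl.mono hsub, fun t ht => by
      have := (mu_eq_iff (h0 t ht.1) k.2).1 ht.2
      exact ⟨this.1 k le_rfl, this.2⟩⟩
  refine le_trans (le_of_eq ?_) h1
  refine setLIntegral_congr_fun hm fun t ht => ?_
  have : mu n (a t) (l t) = k := ht.2
  simp only [Gd_of_mu this, shL_apply, enorm_neg]

lemma sh_scale {n k : ℕ} (a : Fin n → ℂ) (s : ℂ) :
    sh n k (fun i => a i / s ^ (n - (i:ℕ))) = fun i => sh n k a i / s ^ (n - k - (i:ℕ)) := by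
  ext i
  simp only [sh]
  have : n - ((i:ℕ) + k) = n - k - (i:ℕ) := by omega
  rw [this]
  ring

lemma mu_scale {n : ℕ} {a : Fin n → ℂ} {z s : ℂ} (hs : s ≠ 0) (h : eval z (Pp n a) = 0) :
    mu n (fun i => a i / s ^ (n - (i:ℕ))) (z / s) = mu n a z := by
  have hk := mu_lt h
  have h' : eval (z / s) (Pp n (fun i => a i / s ^ (n - (i:ℕ)))) = 0 := by
    rw [eval_Pp_scale n a s z hs, h, zero_div]
  rw [mu_eq_iff h' hk]
  have := (mu_eq_iff h hk).1 rfl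
  constructor
  · intro j hj
    rw [sh_scale, eval_Pp_scale _ _ _ _ hs, this.1 j hj, zero_div]
  · rw [sh_scale, eval_dPp_scale _ _ _ _ hs]
    exact mul_ne_zero (div_ne_zero this.2 (pow_ne_zero _ hs)) hs

lemma Gd_scale {n : ℕ} {a a' : Fin n → ℂ} {z s : ℂ} (r : ℂ) (hs : s ≠ 0) (h : eval z (Pp n a) = 0) :
    Gd n (fun i => a i / s ^ (n - (i:ℕ))) (fun i => r * a' i / s ^ (n - (i:ℕ))) (z / s) =
      r / s * Gd n a a' z := by
  unfold Gd
  rw [mu_scale hs h, sh_scale, sh_scale (fun i => r * a' i)]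
  have : (fun i => sh n (mu n a z) (fun i => r * a' i) i / s ^ (n - mu n a z - (i:ℕ))) =
     fun i => r * sh n (mu n a z) a' i / s ^ (n - mu n a z - (i:ℕ)) := by
    ext i; simp only [sh]; ring
  rw [this, Sq_scale _ _ _ _ _ _ hs]
  ring

lemma Gd_deriv {n : ℕ} {a a' : ℝ → Fin n → ℂ} {l : ℝ → ℂ} {Ω : Set ℝ}
    (ha : ∀ t ∈ Ω, HasDerivAt a (a' t) t) (hl : ContinuousOn l Ω)
    (h0 : ∀ t ∈ Ω, eval (l t) (Pp n (a t)) = 0) (k : Fin n) :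
    ∀ t ∈ Es n a l Ω k, HasDerivWithinAt l (Gd n (a t) (a' t) (l t)) (Es n a l Ω k) t := by
  intro t ht
  have hm : mu n (a t) (l t) = k := ht.2
  have := impl (b := fun t => sh n k (a t)) (l := l) (E := Es n a l Ω k) (sh_hasDeriv (k := k) (ha t ht.1))
    ((hl t ht.1).mono fun x hx => hx.1)
    (fun s hs => ((mu_eq_iff (h0 s hs.1) k.2).1 hs.2).1 k le_rfl) ht
    ((mu_eq_iff (h0 t ht.1) k.2).1 ht.2).2
  rw [Gd_of_mu hm]
  exact this

lemma line_bound (n : ℕ) (hn : 2 ≤ n) (p : ℝ) (hp : 1 ≤ p)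
    (hpN : p * ((n-1:ℕ):ℝ) < ((n-1:ℕ):ℝ) + 1) (α β : ℝ) :
    ∃ C : ENNReal, C ≠ ⊤ ∧ ∀ (N0 : ℝ) (B : ℕ → Fin n → ℝ → ℂ) (Ω : Set ℝ) (l : ℝ → ℂ), 0 < N0 →
    (∀ s < n - 1, ∀ i, ∀ t ∈ Ioo α β, HasDerivAt (B s i) (B (s+1) i t) t) →
    (∀ s ≤ n - 1, ∀ i, ∀ t ∈ Ioo α β, ‖B s i t‖ ≤ N0 ^ (n - (i:ℕ))) →
    (∀ i, ∀ t ∈ Ioo α β, ∀ t' ∈ Ioo α β, ‖B (n-1) i t - B (n-1) i t'‖ ≤ N0 ^ (n - (i:ℕ)) * |t - t'|) →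
    MeasurableSet Ω → Ω ⊆ Ioo α β → ContinuousOn l Ω →
    (∀ t ∈ Ω, eval (l t) (Pp n (fun i => B 0 i t)) = 0) →
    ∫⁻ t in Ω, ‖Gd n (fun i => B 0 i t) (fun i => B 1 i t) (l t)‖ₑ ^ p ≤ C * ENNReal.ofReal (N0 ^ p) := by
  rcases le_or_gt β α with hαβ | hαβ
  · refine ⟨0, by simp, ?_⟩
    intro N0 B Ω l _ _ _ _ _ hΩ _ _
    rw [Ioo_eq_empty (by linarith)] at hΩ
    have : Ω = ∅ := subset_empty_iff.1 hΩ
    simp [this]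
  set ℓ : ℝ := β - α with hℓ
  have hℓ0 : 0 < ℓ := by simp [hℓ, hαβ]
  set M : ℝ := (max 1 ℓ) ^ n with hM
  have hm1 : (1:ℝ) ≤ max 1 ℓ := le_max_left _ _
  have hpow : ∀ s ≤ n, ℓ ^ s ≤ M := fun s hs =>
    (pow_le_pow_left₀ hℓ0.le (le_max_right _ _) s).trans (pow_le_pow_right₀ hm1 hs)
  obtain ⟨C, hC, hC2⟩ := slice_bound n hn p hp hpN M
  refine ⟨ENNReal.ofReal ℓ * (ENNReal.ofReal ((1 / ℓ) ^ p) * C),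
    ENNReal.mul_ne_top (by simp) (ENNReal.mul_ne_top (by simp) hC), ?_⟩
  intro N0 B Ω l hN h1 h2 h3 hΩ hΩs hl h0
  have hNc : (N0 : ℂ) ≠ 0 := by exact_mod_cast hN.ne'
  have hmap : ∀ x ∈ Ioo (0:ℝ) 1, α + ℓ * x ∈ Ioo α β := by
    intro x hx
    refine ⟨by nlinarith [hx.1], by nlinarith [hx.2]⟩
  set b : ℝ → Fin n → ℂ := fun x i => B 0 i (α + ℓ * x) / (N0:ℂ) ^ (n - (i:ℕ)) with hb
  set b' : ℝ → Fin n → ℂ := fun x i => ℓ * B 1 i (α + ℓ * x) / (N0:ℂ) ^ (n - (i:ℕ)) with hb'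
  have hder : ∀ s < n - 1, ∀ i : Fin n, ∀ x ∈ Ioo (0:ℝ) 1,
      HasDerivAt (fun x => (ℓ:ℂ) ^ s * B s i (α + ℓ * x) / (N0:ℂ) ^ (n - (i:ℕ)))
        ((ℓ:ℂ) ^ (s+1) * B (s+1) i (α + ℓ * x) / (N0:ℂ) ^ (n - (i:ℕ))) x := by
    intro s hs i x hx
    have e1 : HasDerivAt (fun x => α + ℓ * x) ℓ x := by
      simpa using ((hasDerivAt_id x).const_mul ℓ).const_add α
    have e2 := HasDerivAt.scomp x (h1 s hs i _ (hmap x hx)) e1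
    have e3 := (e2.const_mul ((ℓ:ℂ)^s)).div_const ((N0:ℂ) ^ (n - (i:ℕ)))
    refine e3.congr_deriv ?_
    simp only [Complex.real_smul]
    ring
  have hnorm : ∀ s (i : Fin n) (w : ℂ), ‖(ℓ:ℂ) ^ s * w / (N0:ℂ) ^ (n - (i:ℕ))‖ =
      ℓ ^ s * (‖w‖ / N0 ^ (n - (i:ℕ))) := by
    intro s i w
    rw [norm_div, norm_mul, norm_pow, norm_pow, Complex.norm_real, Complex.norm_real,
      Real.norm_of_nonneg hℓ0.le, Real.norm_of_nonneg hN.le, mul_div_assoc]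
  have hLC : LC (n-1) M b := by
    refine LC.pi (by positivity) fun i => ?_
    have hNp : 0 < N0 ^ (n - (i:ℕ)) := pow_pos hN _
    refine ⟨fun s x => (ℓ:ℂ) ^ s * B s i (α + ℓ * x) / (N0:ℂ) ^ (n - (i:ℕ)), ?_, ?_, ?_, ?_⟩
    · ext x; simp [hb]
    · intro s hs x hx
      exact hder s hs i x hx
    · intro s hs x hx
      rw [hnorm]
      have := (div_le_one hNp).2 (h2 s hs i _ (hmap x hx))
      calc _ ≤ ℓ ^ s * 1 := by gcongr
        _ ≤ M := by rw [mul_one]; exact hpow s (by omega)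
    · intro x hx y hy
      have e1 := h3 i _ (hmap x hx) _ (hmap y hy)
      rw [← sub_div, ← mul_sub, hnorm]
      have e2 : |α + ℓ * x - (α + ℓ * y)| = ℓ * |x - y| := by
        rw [add_sub_add_left_eq_sub, ← mul_sub, abs_mul, abs_of_pos hℓ0]
      rw [e2] at e1
      have e3 : ‖B (n-1) i (α + ℓ * x) - B (n-1) i (α + ℓ * y)‖ / N0 ^ (n - (i:ℕ)) ≤ ℓ * |x - y| := by
        rw [div_le_iff₀ hNp]; linarith
      calc _ ≤ ℓ ^ (n-1) * (ℓ * |x - y|) := by gcongr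
        _ = ℓ ^ n * |x - y| := by
          rw [← mul_assoc, ← pow_succ]; congr 3; omega
        _ ≤ M * |x - y| := by gcongr; exact hpow n le_rfl
  rw [affine_lint (u := α) hℓ0 hΩ]
  set Ω' : Set ℝ := {x | α + ℓ * x ∈ Ω} with hΩ'
  have hcontA : Continuous fun x : ℝ => α + ℓ * x := by fun_prop
  have hΩ'm : MeasurableSet Ω' := hcontA.measurable hΩ
  have hΩ's : Ω' ⊆ Ioo 0 1 := by
    intro x hx
    have hx' : α + ℓ * x ∈ Ioo α β := hΩs hx
    constructor
    · have := hx'.1; by_contra hc; nlinarith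
    · have := hx'.2; by_contra hc; nlinarith
  have hS : ∀ x ∈ Ω', ‖Gd n (fun i => B 0 i (α + ℓ * x)) (fun i => B 1 i (α + ℓ * x)) (l (α + ℓ * x))‖ₑ ^ p =
      ENNReal.ofReal ((N0 / ℓ) ^ p) * ‖Gd n (b x) (b' x) (l (α + ℓ * x) / N0)‖ₑ ^ p := by
    intro x hx
    simp only [hb, hb']
    rw [Gd_scale _ hNc (h0 _ hx), enorm_mul, ENNReal.mul_rpow_of_nonneg _ _ (by linarith),
      ← mul_assoc]
    have e1 : ‖(ℓ : ℂ) / (N0 : ℂ)‖ₑ = ENNReal.ofReal (ℓ / N0) := by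
      rw [← Complex.ofReal_div, ← ofReal_norm, Complex.norm_real, Real.norm_of_nonneg (by positivity)]
    rw [e1, ENNReal.ofReal_rpow_of_nonneg (by positivity) (by linarith), ← ENNReal.ofReal_mul (by positivity),
      ← Real.mul_rpow (by positivity) (by positivity)]
    have : N0 / ℓ * (ℓ / N0) = 1 := by field_simp
    rw [this]; simp
  rw [setLIntegral_congr_fun hΩ'm hS, lintegral_const_mul' _ _ (by simp)]
  have h4 := hC2 b b' Ω' (fun x => l (α + ℓ * x) / N0) hLC (fun t ht => by
      rw [hasDerivAt_pi]
      intro i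
      have := hder 0 (by omega) i t ht
      simpa [hb, hb'] using this) hΩ'm hΩ's
      ((hl.comp hcontA.continuousOn (fun x hx => hx)).div_const _)
      (fun t ht => by
        simp only [hb]
        rw [eval_Pp_scale _ _ _ _ hNc, h0 _ ht, zero_div])
  calc _ ≤ ENNReal.ofReal ℓ * (ENNReal.ofReal ((N0 / ℓ) ^ p) * C) := by
        exact mul_le_mul' le_rfl (mul_le_mul' le_rfl h4)
    _ = _ := by
      have : (N0 / ℓ) ^ p = (1/ℓ) ^ p * N0 ^ p := by
        rw [← Real.mul_rpow (by positivity) hN.le]; congr 1; ring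
      rw [this, ENNReal.ofReal_mul (by positivity)]
      ring
end RS

namespace RS

lemma line_deriv {m : ℕ} {U : Set (Fin m → ℝ)} {f f' : (Fin m → ℝ) → ℂ} {i : Fin m}
    (h : ∀ x ∈ U, HasDerivAt (fun s : ℝ => f (Function.update x i s)) (f' x) (x i))
    (x : Fin m → ℝ) (s : ℝ) (hx : Function.update x i s ∈ U) :
    HasDerivAt (fun r : ℝ => f (Function.update x i r)) (f' (Function.update x i s)) s := by
  have := h _ hx
  simpa using this

lemma box_update {m : ℕ} {k : (Fin m → ℝ) × (Fin m → ℝ)} {x : Fin m → ℝ} {i : Fin m} {t : ℝ}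
    (hx : x ∈ univ.pi fun i => Ioo (k.1 i) (k.2 i)) (ht : t ∈ Ioo (k.1 i) (k.2 i)) :
    Function.update x i t ∈ univ.pi fun i => Ioo (k.1 i) (k.2 i) := by
  intro j _
  by_cases hj : j = i
  · subst hj; simpa using ht
  · simpa [hj] using hx j (mem_univ _)

lemma box_osc {m : ℕ} (k : (Fin m → ℝ) × (Fin m → ℝ)) (f : (Fin m → ℝ) → ℂ) (A : ℝ)
    (h : ∀ x ∈ univ.pi fun i => Ioo (k.1 i) (k.2 i), ∀ i, ∀ t ∈ Ioo (k.1 i) (k.2 i),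
      ‖f (Function.update x i t) - f x‖ ≤ A)
    {c x : Fin m → ℝ} (hc : c ∈ univ.pi fun i => Ioo (k.1 i) (k.2 i))
    (hx : x ∈ univ.pi fun i => Ioo (k.1 i) (k.2 i)) (S : Finset (Fin m)) :
    S.piecewise x c ∈ (univ.pi fun i => Ioo (k.1 i) (k.2 i)) ∧
    ‖f (S.piecewise x c) - f c‖ ≤ S.card * A := by
  induction S using Finset.induction_on with
  | empty => simpa using hc
  | insert j S hj ih =>
    rw [Finset.piecewise_insert]
    refine ⟨box_update ih.1 (hx j (mem_univ _)), ?_⟩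
    rw [Finset.card_insert_of_notMem hj]
    have := h _ ih.1 j (x j) (hx j (mem_univ _))
    have h2 := norm_add_le (f (Function.update (S.piecewise x c) j (x j)) - f (S.piecewise x c))
      (f (S.piecewise x c) - f c)
    rw [sub_add_sub_cancel] at h2
    push_cast
    linarith [ih.2]

lemma mem_boxUnion {m : ℕ} {𝒦 : Finset ((Fin m → ℝ) × (Fin m → ℝ))} {x : Fin m → ℝ} :
    x ∈ boxUnion 𝒦 ↔ ∃ k ∈ 𝒦, x ∈ univ.pi fun i => Ioo (k.1 i) (k.2 i) := by
  simp only [boxUnion, mem_iUnion, exists_prop]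

lemma D_bdd {m n : ℕ} {𝒦 : Finset ((Fin m → ℝ) × (Fin m → ℝ))} {U : Set (Fin m → ℝ)}
    (hWU : boxUnion 𝒦 ⊆ U) {D : List (Fin m) → (Fin m → ℝ) → ℂ}
    (hd : ∀ L : List (Fin m), L.length < n - 1 → ∀ i : Fin m, ∀ x ∈ U,
        HasDerivAt (fun s : ℝ => D L (Function.update x i s)) (D (i :: L) x) (x i))
    {K : ℝ} (hK : ∀ L : List (Fin m), L.length = n - 1 →
        ∀ x ∈ boxUnion 𝒦, ∀ y ∈ boxUnion 𝒦, ‖D L x - D L y‖ ≤ K * dist x y) (s : ℕ) :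
    ∀ L : List (Fin m), L.length + s = n - 1 → ∃ M, ∀ x ∈ boxUnion 𝒦, ‖D L x‖ ≤ M := by
  have hbox : ∀ k : (Fin m → ℝ) × (Fin m → ℝ), ∀ f : (Fin m → ℝ) → ℂ, ∀ A : ℝ, 
    (∀ x ∈ univ.pi fun i => Ioo (k.1 i) (k.2 i), ∀ i, ∀ t ∈ Ioo (k.1 i) (k.2 i),
      ‖f (Function.update x i t) - f x‖ ≤ A) → 
      ∃ M, ∀ x ∈ univ.pi fun i => Ioo (k.1 i) (k.2 i), ‖f x‖ ≤ M := by
    intro k f A h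
    rcases (univ.pi fun i => Ioo (k.1 i) (k.2 i)).eq_empty_or_nonempty with h0 | ⟨c, hc⟩
    · exact ⟨0, by simp [h0]⟩
    · refine ⟨m * A + ‖f c‖, fun x hx => ?_⟩
      have h1 := (box_osc k f A h hc hx Finset.univ).2
      simp only [Finset.piecewise_univ, Finset.card_univ, Fintype.card_fin] at h1
      have := norm_add_le (f x - f c) (f c)
      rw [sub_add_cancel] at this
      linarith
  have hunion : ∀ f : (Fin m → ℝ) → ℂ, (∀ k ∈ 𝒦, ∃ M, ∀ x ∈ univ.pi fun i => Ioo (k.1 i) (k.2 i), ‖f x‖ ≤ M) →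
      ∃ M, ∀ x ∈ boxUnion 𝒦, ‖f x‖ ≤ M := by
    intro f h
    choose! M hM using h
    refine ⟨∑ k ∈ 𝒦, |M k|, fun x hx => ?_⟩
    obtain ⟨k, hk, hx⟩ := mem_boxUnion.1 hx
    exact ((hM k hk x hx).trans (le_abs_self _)).trans
      (Finset.single_le_sum (f := fun k => |M k|) (fun _ _ => abs_nonneg _) hk)
  induction s with
  | zero =>
    intro L hL
    rw [add_zero] at hL
    apply hunion
    intro k hk
    have hkW : (univ.pi fun i => Ioo (k.1 i) (k.2 i)) ⊆ boxUnion 𝒦 := fun x hx => mem_boxUnion.2 ⟨k, hk, hx⟩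
    apply hbox k (D L) (|K| * dist k.1 k.2)
    intro x hx i t ht
    refine (hK L hL _ (hkW (box_update hx ht)) _ (hkW hx)).trans ?_
    refine (mul_le_mul_of_nonneg_right (le_abs_self K) dist_nonneg).trans ?_
    refine mul_le_mul_of_nonneg_left ?_ (abs_nonneg _)
    rw [dist_pi_le_iff dist_nonneg]
    intro j
    refine le_trans ?_ (dist_le_pi_dist k.1 k.2 j)
    have h1 := box_update hx ht j (mem_univ _)
    have h2 := hx j (mem_univ _)
    rw [Real.dist_eq, Real.dist_eq, abs_sub_comm (k.1 j)]
    simp only [mem_Ioo] at h1 h2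
    rw [abs_le, abs_of_pos (by linarith)]
    constructor <;> linarith
  | succ s ih =>
    intro L hL
    have : ∀ i, ∃ M, ∀ x ∈ boxUnion 𝒦, ‖D (i :: L) x‖ ≤ M := fun i =>
      ih (i :: L) (by simp only [List.length_cons]; omega)
    choose M hM using this
    apply hunion
    intro k hk
    have hkW : (univ.pi fun i => Ioo (k.1 i) (k.2 i)) ⊆ boxUnion 𝒦 := fun x hx => mem_boxUnion.2 ⟨k, hk, hx⟩
    apply hbox k (D L) (∑ i, |M i| * |k.2 i - k.1 i|)
    intro x hx i t ht
    have hxi := hx i (mem_univ _)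
    have h1 := (convex_Ioo (k.1 i) (k.2 i)).norm_image_sub_le_of_norm_hasDerivWithin_le
      (f := fun r => D L (Function.update x i r)) (f' := fun r => D (i :: L) (Function.update x i r))
      (C := |M i|)
      (fun r hr => (line_deriv (hd L (by omega) i) x r (hWU (hkW (box_update hx hr)))).hasDerivWithinAt)
      (fun r hr => (hM i _ (hkW (box_update hx hr))).trans (le_abs_self _)) hxi ht
    simp only [Function.update_eq_self] at h1
    refine h1.trans ?_
    refine le_trans ?_ (Finset.single_le_sum (f := fun i => |M i| * |k.2 i - k.1 i|)
      (fun _ _ => by positivity) (Finset.mem_univ i))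
    refine mul_le_mul_of_nonneg_left ?_ (abs_nonneg _)
    simp only [mem_Ioo] at hxi ht
    rw [Real.norm_eq_abs, abs_le, abs_of_pos (by linarith)]
    constructor <;> linarith

lemma CN_facts {m n : ℕ} {𝒦 : Finset ((Fin m → ℝ) × (Fin m → ℝ))} {U : Set (Fin m → ℝ)}
    (hWU : boxUnion 𝒦 ⊆ U) {D : List (Fin m) → (Fin m → ℝ) → ℂ}
    (hd : ∀ L : List (Fin m), L.length < n - 1 → ∀ i : Fin m, ∀ x ∈ U,
        HasDerivAt (fun s : ℝ => D L (Function.update x i s)) (D (i :: L) x) (x i))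
    {K : ℝ} (hK : ∀ L : List (Fin m), L.length = n - 1 →
        ∀ x ∈ boxUnion 𝒦, ∀ y ∈ boxUnion 𝒦, ‖D L x - D L y‖ ≤ K * dist x y) :
    0 ≤ CNormMulti n (boxUnion 𝒦) D ∧ 
    (∀ L : List (Fin m), L.length ≤ n - 1 → ∀ x ∈ boxUnion 𝒦, ‖D L x‖ ≤ CNormMulti n (boxUnion 𝒦) D) ∧
    ∀ L : List (Fin m), L.length = n - 1 → ∀ x ∈ boxUnion 𝒦, ∀ y ∈ boxUnion 𝒦, 
      ‖D L x - D L y‖ ≤ CNormMulti n (boxUnion 𝒦) D * dist x y := by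
  unfold CNormMulti
  set S1 := {r : ℝ | ∃ L : List (Fin m), L.length ≤ n - 1 ∧ ∃ x ∈ boxUnion 𝒦, r = ‖D L x‖} with hS1
  set S2 := {r : ℝ | ∃ L : List (Fin m), L.length = n - 1 ∧
    ∃ x ∈ boxUnion 𝒦, ∃ y ∈ boxUnion 𝒦, x ≠ y ∧ r = ‖D L x - D L y‖ / dist x y} with hS2
  have n1 : 0 ≤ sSup S1 := Real.sSup_nonneg (by rintro _ ⟨L, _, x, _, rfl⟩; positivity)
  have n2 : 0 ≤ sSup S2 := Real.sSup_nonneg (by rintro _ ⟨L, _, x, _, y, _, _, rfl⟩; positivity)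
  have b1 : BddAbove S1 := by
    have hfin : {L : List (Fin m) | L.length ≤ n - 1}.Finite := List.finite_length_le _ _
    have : S1 = ⋃ L ∈ {L : List (Fin m) | L.length ≤ n - 1}, {r : ℝ | ∃ x ∈ boxUnion 𝒦, r = ‖D L x‖} := by
      ext r; simp [hS1]
    rw [this, hfin.bddAbove_biUnion]
    intro L hL
    have hL : L.length ≤ n - 1 := hL
    obtain ⟨M, hM⟩ := D_bdd hWU hd hK (n - 1 - L.length) L (by omega)
    exact ⟨M, by rintro _ ⟨x, hx, rfl⟩; exact hM x hx⟩
  have b2 : BddAbove S2 := by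
    refine ⟨K, ?_⟩
    rintro _ ⟨L, hL, x, hx, y, hy, hxy, rfl⟩
    rw [div_le_iff₀ (dist_pos.2 hxy)]
    exact hK L hL x hx y hy
  refine ⟨add_nonneg n1 n2, ?_, ?_⟩
  · intro L hL x hx
    have := le_csSup b1 (show ‖D L x‖ ∈ S1 from ⟨L, hL, x, hx, rfl⟩)
    linarith
  · intro L hL x hx y hy
    by_cases hxy : x = y
    · subst hxy; simp
    · have := le_csSup b2 (show ‖D L x - D L y‖ / dist x y ∈ S2 from ⟨L, hL, x, hx, y, hy, hxy, rfl⟩)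
      rw [div_le_iff₀ (dist_pos.2 hxy)] at this
      refine this.trans ?_
      gcongr
      linarith
end RS

namespace RS
open Polynomial

lemma ins_cont {m : ℕ} (i : Fin (m+1)) (y : Fin m → ℝ) :
    Continuous fun t : ℝ => (i.insertNth t y : Fin (m+1) → ℝ) :=
  Continuous.finInsertNth i continuous_id continuous_const

lemma ins_update {m : ℕ} (i : Fin (m+1)) (y : Fin m → ℝ) (t : ℝ) :
    (i.insertNth t y : Fin (m+1) → ℝ) = Function.update (i.insertNth 0 y : Fin (m+1) → ℝ) i t := by
  simp

lemma lint_ins {m : ℕ} (i : Fin (m+1)) {F : (Fin (m+1) → ℝ) → ENNReal} (hF : Measurable F) :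
    ∫⁻ x, F x = ∫⁻ y : Fin m → ℝ, ∫⁻ t : ℝ, F (i.insertNth t y) := by
  have e := (volume_preserving_piFinSuccAbove (fun _ : Fin (m+1) => ℝ) i).symm
  rw [← e.lintegral_comp hF]
  exact lintegral_prod_symm' _ (hF.comp e.measurable)

lemma int_ins {m : ℕ} (i : Fin (m+1)) {F : (Fin (m+1) → ℝ) → ℂ} (hF : Integrable F) :
    ∫ x, F x = ∫ y : Fin m → ℝ, ∫ t : ℝ, F (i.insertNth t y) := by
  have e := (volume_preserving_piFinSuccAbove (fun _ : Fin (m+1) => ℝ) i).symm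
  rw [← e.integral_comp' F]
  refine integral_prod_symm (fun z => F ((MeasurableEquiv.piFinSuccAbove (fun _ : Fin (m+1) => ℝ) i).symm z)) ?_
  exact (e.integrable_comp_emb (MeasurableEquiv.measurableEmbedding _)).2 hF

lemma ae_ins {m : ℕ} (i : Fin (m+1)) {F : (Fin (m+1) → ℝ) → ℂ} (hF : Integrable F) :
    ∀ᵐ y : Fin m → ℝ, Integrable fun t : ℝ => F (i.insertNth t y) := by
  have e := (volume_preserving_piFinSuccAbove (fun _ : Fin (m+1) => ℝ) i).symm
  have := (e.integrable_comp_emb (MeasurableEquiv.measurableEmbedding _)).2 hF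
  exact Integrable.prod_left_ae this

lemma fub_bound {m : ℕ} (i : Fin (m+1)) (k : (Fin (m+1) → ℝ) × (Fin (m+1) → ℝ))
    {F : (Fin (m+1) → ℝ) → ENNReal} (hF : Measurable F) 
    (h0 : ∀ x, x ∉ (univ.pi fun i => Ioo (k.1 i) (k.2 i)) → F x = 0) {B : ENNReal}
    (hB : ∀ y, ∫⁻ t : ℝ, F (i.insertNth t y) ≤ B) :
    ∫⁻ x, F x ≤ B * volume (univ.pi fun j => Ioo (k.1 (i.succAbove j)) (k.2 (i.succAbove j))) := by
  rw [lint_ins i hF]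
  set Q := (univ.pi fun j => Ioo (k.1 (i.succAbove j)) (k.2 (i.succAbove j)))
  have hQ : MeasurableSet Q := MeasurableSet.univ_pi fun _ => measurableSet_Ioo
  rw [← lintegral_indicator_const hQ]
  refine lintegral_mono fun y => ?_
  by_cases hy : y ∈ Q
  · rw [indicator_of_mem hy]; exact hB y
  · rw [indicator_of_notMem hy]
    have : ∀ t : ℝ, F (i.insertNth t y) = 0 := fun t => h0 _ fun h => hy fun j _ => by
      simpa using h (i.succAbove j) (mem_univ _)
    simp [this]

lemma weak {m n : ℕ} (i : Fin (m+1)) {V : Set (Fin (m+1) → ℝ)} (hV : IsOpen V)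
    {a a' : (Fin (m+1) → ℝ) → Fin n → ℂ} {l : (Fin (m+1) → ℝ) → ℂ}
    (ha : ContinuousOn a V) 
    (hd : ∀ j, ∀ x ∈ V, HasDerivAt (fun s : ℝ => a (Function.update x i s) j) (a' x j) (x i))
    (hl : ContinuousOn l V) (h0 : ∀ x ∈ V, eval (l x) (Pp n (a x)) = 0)
    (hg : IntegrableOn (fun x => Gd n (a x) (a' x) (l x)) V)
    {φ : (Fin (m+1) → ℝ) → ℝ} (hφ : ContDiff ℝ (⊤ : ℕ∞) φ) (hc : HasCompactSupport φ)
    (hs : tsupport φ ⊆ V) :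
    ∫ x in V, l x * ((fderiv ℝ φ x) (Pi.single i 1) : ℂ) =
            - ∫ x in V, Gd n (a x) (a' x) (l x) * (φ x : ℂ) := by
  have hVm := hV.measurableSet
  have hφ'c : Continuous fun x => (fderiv ℝ φ x) (Pi.single i 1) :=
    (hφ.continuous_fderiv (by simp)).clm_apply continuous_const
  have hφ's : tsupport (fun x => (fderiv ℝ φ x) (Pi.single i 1)) ⊆ tsupport φ :=
    tsupport_fderiv_apply_subset ℝ _
  have hK : IsCompact (tsupport φ) := hc
  -- integrability left
  have hI1 : IntegrableOn (fun x => l x * ((fderiv ℝ φ x) (Pi.single i 1) : ℂ)) V := by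
    have h1 : IntegrableOn (fun x => l x * ((fderiv ℝ φ x) (Pi.single i 1) : ℂ)) (tsupport φ) := by
      refine ContinuousOn.integrableOn_compact hK ?_
      exact (hl.mono hs).mul (Complex.continuous_ofReal.comp hφ'c).continuousOn
    refine (integrableOn_iff_integrable_of_support_subset (s := tsupport φ) ?_).1 h1 |>.integrableOn
    intro x hx
    by_contra hx2
    apply hx
    have : (fderiv ℝ φ x) (Pi.single i 1) = 0 := image_eq_zero_of_notMem_tsupport (f := fun x => (fderiv ℝ φ x) (Pi.single i 1)) (fun h => hx2 (hφ's h))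
    simp [this]
  have hI2 : IntegrableOn (fun x => Gd n (a x) (a' x) (l x) * (φ x : ℂ)) V := by
    obtain ⟨M, hM⟩ := hφ.continuous.bounded_above_of_compact_support hc
    refine Integrable.mul_bdd (c := M) hg ?_ ?_
    · exact (Complex.continuous_ofReal.comp hφ.continuous).aestronglyMeasurable
    · exact Filter.Eventually.of_forall fun x => by simpa using hM x
  rw [← integral_indicator hVm, ← integral_indicator hVm, int_ins i ((integrable_indicator_iff hVm).2 hI1),
    int_ins i ((integrable_indicator_iff hVm).2 hI2), ← integral_neg]
  refine integral_congr_ae ?_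
  filter_upwards [ae_ins i ((integrable_indicator_iff hVm).2 hg)] with y hy
  set Ω : Set ℝ := {t | (i.insertNth t y : Fin (m+1) → ℝ) ∈ V} with hΩ
  have hγ := ins_cont i y
  have hΩo : IsOpen Ω := hV.preimage hγ
  have hind : ∀ f : (Fin (m+1) → ℝ) → ℂ, (fun t : ℝ => V.indicator f (i.insertNth t y)) =
     Ω.indicator (fun t => f (i.insertNth t y)) := fun f => rfl
  rw [hind] at hy
  rw [hind, hind, integral_indicator hΩo.measurableSet, integral_indicator hΩo.measurableSet]
  rw [integrable_indicator_iff hΩo.measurableSet] at hy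
  have hay : ContinuousOn (fun t : ℝ => a (i.insertNth t y)) Ω := ha.comp hγ.continuousOn fun t ht => ht
  have hly : ContinuousOn (fun t : ℝ => l (i.insertNth t y)) Ω := hl.comp hγ.continuousOn fun t ht => ht
  have h0y : ∀ t ∈ Ω, eval (l (i.insertNth t y)) (Pp n (a (i.insertNth t y))) = 0 := fun t ht => h0 _ ht
  have hday : ∀ t ∈ Ω, HasDerivAt (fun t : ℝ => a (i.insertNth t y)) (a' (i.insertNth t y)) t := by
    intro t ht
    rw [hasDerivAt_pi]
    intro j
    have := line_deriv (f := fun x => a x j) (f' := fun x => a' x j) (hd j) (i.insertNth 0 y) t 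
      (by rw [← ins_update]; exact ht)
    simpa only [← ins_update] using this
  have hγd : ∀ t : ℝ, HasDerivAt (fun t : ℝ => (i.insertNth t y : Fin (m+1) → ℝ)) (Pi.single i 1) t := by
    intro t
    have := hasDerivAt_update (𝕜 := ℝ) (i.insertNth 0 y : Fin (m+1) → ℝ) i t
    refine this.congr_of_eventuallyEq (Filter.Eventually.of_forall fun s => ins_update i y s)
  have hsub : tsupport (fun t : ℝ => φ (i.insertNth t y)) ⊆ (fun t : ℝ => (i.insertNth t y : Fin (m+1) → ℝ)) ⁻¹' tsupport φ :=
    tsupport_comp_subset_preimage φ hγ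
  refine parts hΩo (fun k : Fin n => Es n (fun t : ℝ => a (i.insertNth t y)) (fun t : ℝ => l (i.insertNth t y)) Ω k)
    (fun k => mu_meas hΩo.measurableSet hay hly h0y k.2) (Es_cover h0y) hly ?_ hy
    (φ := fun t : ℝ => φ (i.insertNth t y)) ?_ (hφ'c.comp hγ) ?_ ?_
  · exact fun k => Gd_deriv hday hly h0y k
  · intro t
    have h1 : HasFDerivAt φ (fderiv ℝ φ (i.insertNth t y)) (i.insertNth t y) :=
      ((hφ.differentiable (by simp)) _).hasFDerivAt
    exact h1.comp_hasDerivAt t (hγd t)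
  · refine HasCompactSupport.of_support_subset_isCompact (hK.image (continuous_apply i)) ?_
    intro t ht
    exact ⟨i.insertNth t y, hsub (subset_tsupport _ ht), by simp⟩
  · exact fun t ht => hs (hsub ht)

end RS

namespace RS
open Polynomial

lemma ins_dist {m : ℕ} (i : Fin (m+1)) (y : Fin m → ℝ) (t t' : ℝ) :
    dist (i.insertNth t y : Fin (m+1) → ℝ) (i.insertNth t' y : Fin (m+1) → ℝ) ≤ |t - t'| := by
  rw [dist_pi_le_iff (abs_nonneg _), Fin.forall_iff_succAbove i]
  simp [Real.dist_eq]

lemma box_bound {m : ℕ} (n : ℕ) (hn : 2 ≤ n) (p : ℝ) (hp : 1 ≤ p)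
    (hpN : p * ((n-1:ℕ):ℝ) < ((n-1:ℕ):ℝ) + 1) (i : Fin (m+1))
    (k : (Fin (m+1) → ℝ) × (Fin (m+1) → ℝ)) : ∃ C : ENNReal, C ≠ ⊤ ∧
    ∀ (N0 : ℝ) (D : ℕ → List (Fin (m+1)) → (Fin (m+1) → ℝ) → ℂ) (V : Set (Fin (m+1) → ℝ))
      (l : (Fin (m+1) → ℝ) → ℂ), 0 < N0 →
    (∀ j : Fin n, ∀ L : List (Fin (m+1)), L.length < n - 1 → 
      ∀ x ∈ (univ.pi fun i => Ioo (k.1 i) (k.2 i)),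
        HasDerivAt (fun s : ℝ => D (n-j) L (Function.update x i s)) (D (n-j) (i :: L) x) (x i)) →
    (∀ j : Fin n, ∀ L : List (Fin (m+1)), L.length ≤ n - 1 → 
      ∀ x ∈ (univ.pi fun i => Ioo (k.1 i) (k.2 i)), ‖D (n-j) L x‖ ≤ N0^(n-(j:ℕ))) →
    (∀ j : Fin n, ∀ L : List (Fin (m+1)), L.length = n - 1 → 
      ∀ x ∈ (univ.pi fun i => Ioo (k.1 i) (k.2 i)),
      ∀ y ∈ (univ.pi fun i => Ioo (k.1 i) (k.2 i)),
        ‖D (n-j) L x - D (n-j) L y‖ ≤ N0^(n-(j:ℕ)) * dist x y) →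
    MeasurableSet V → (∀ j : Fin n, ContinuousOn (D (n-j) []) V) →
    (∀ j : Fin n, ContinuousOn (D (n-j) [i]) V) → ContinuousOn l V →
    (∀ x ∈ V, eval (l x) (Pp n (fun j : Fin n => D (n-j) [] x)) = 0) →
    ∫⁻ x in V ∩ (univ.pi fun i => Ioo (k.1 i) (k.2 i)),
      ‖Gd n (fun j : Fin n => D (n-j) [] x) (fun j : Fin n => D (n-j) [i] x) (l x)‖ₑ^p ≤
      C * ENNReal.ofReal (N0^p) := by
  obtain ⟨C, hC, H⟩ := line_bound n hn p hp hpN (k.1 i) (k.2 i)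
  refine ⟨C * volume (univ.pi fun j => Ioo (k.1 (i.succAbove j)) (k.2 (i.succAbove j))), ?_, ?_⟩
  · refine ENNReal.mul_ne_top hC ?_
    rw [Real.volume_pi_Ioo]
    exact ENNReal.prod_ne_top fun _ _ => ENNReal.ofReal_ne_top
  intro N0 D V l hN hd hb hL hV hc hc' hl h0
  set Q := (univ.pi fun i => Ioo (k.1 i) (k.2 i)) with hQdef
  have hQ : MeasurableSet Q := MeasurableSet.univ_pi fun _ => measurableSet_Ioo
  have hp0 : 0 < p := by linarith
  have hVQ := hV.inter hQ
  have hsub : V ∩ Q ⊆ V := inter_subset_left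
  have hm := Gd_meas (n := n) (a := fun x (j : Fin n) => D (n-j) [] x) 
    (a' := fun x (j : Fin n) => D (n-j) [i] x) hVQ
    (continuousOn_pi.2 fun j => (hc j).mono hsub) (continuousOn_pi.2 fun j => (hc' j).mono hsub)
    (hl.mono hsub) (fun x hx => h0 x hx.1)
  set G := fun x => Gd n (fun j : Fin n => D (n-j) [] x) (fun j : Fin n => D (n-j) [i] x) (l x) with hG
  have e : ∀ x, (V ∩ Q).indicator (fun x => ‖G x‖ₑ^p) x = ‖(V ∩ Q).indicator G x‖ₑ^p := by
    intro x
    by_cases hx : x ∈ V ∩ Q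
    · simp only [indicator_of_mem hx]
    · simp only [indicator_of_notMem hx, enorm_zero, ENNReal.zero_rpow_of_pos hp0]
  rw [← lintegral_indicator hVQ, mul_right_comm]
  refine (lintegral_congr e).trans_le ?_
  refine fub_bound i k ((hm.enorm).pow_const p) ?_ ?_
  · intro x hx
    rw [indicator_of_notMem (fun h => hx h.2), enorm_zero, ENNReal.zero_rpow_of_pos hp0]
  intro y
  set Ω : Set ℝ := {t | (i.insertNth t y : Fin (m+1) → ℝ) ∈ V ∩ Q} with hΩ
  have hγ := ins_cont i y
  have hΩm : MeasurableSet Ω := hγ.measurable hVQ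
  have hind : (fun t : ℝ => ‖(V ∩ Q).indicator G (i.insertNth t y)‖ₑ^p) =
     Ω.indicator (fun t => ‖G (i.insertNth t y)‖ₑ^p) := by
    ext t; rw [← e]; rfl
  rw [hind, lintegral_indicator hΩm]
  rcases Ω.eq_empty_or_nonempty with hE | ⟨t0, ht0⟩
  · rw [hE]; simp
  have hin : ∀ t ∈ Ioo (k.1 i) (k.2 i), (i.insertNth t y : Fin (m+1) → ℝ) ∈ Q := by
    intro t ht
    have := box_update (i := i) (t := t) ht0.2 ht
    rwa [Fin.update_insertNth] at this
  have hrep : ∀ s, List.replicate (s+1) i = i :: List.replicate s i := fun s => rfl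
  refine H N0 (fun s j t => D (n-j) (List.replicate s i) (i.insertNth t y)) Ω
    (fun t => l (i.insertNth t y)) hN ?_ ?_ ?_ hΩm ?_ ?_ ?_
  · intro s hs j t ht
    have := line_deriv (f := D (n-j) (List.replicate s i)) (f' := D (n-j) (i :: List.replicate s i)) 
      (hd j _ (by simpa using hs)) (i.insertNth 0 y) t (by rw [← ins_update]; exact hin t ht)
    rw [hrep]; simpa only [← ins_update] using this
  · intro s hs j t ht
    exact hb j _ (by simpa using hs) _ (hin t ht)
  · intro j t ht t' ht'
    refine (hL j _ (by simp) _ (hin t ht) _ (hin t' ht')).trans ?_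
    gcongr
    exact ins_dist i y t t'
  · intro t ht
    simpa using ht.2 i (mem_univ _)
  · exact hl.comp hγ.continuousOn fun t ht => ht.1
  · intro t ht
    exact h0 _ ht.1

end RS

namespace RS
open Polynomial

lemma root_eq (n : ℕ) (D : ℕ → ℂ) (z : ℂ) :
    eval z (Pp n (fun j : Fin n => D (n-j))) = z ^ n + ∑ j ∈ Finset.Icc 1 n, D j * z ^ (n - j) := by
  rw [eval_Pp, Fin.sum_univ_eq_sum_range (fun i => D (n-i) * z^i) n]
  congr 1
  refine Finset.sum_nbij' (fun i => n - i) (fun j => n - j) ?_ ?_ ?_ ?_ ?_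
  · intro i hi; simp only [Finset.mem_range] at hi; simp only [Finset.mem_Icc]; omega
  · intro i hi; simp only [Finset.mem_Icc] at hi; simp only [Finset.mem_range]; omega
  · intro i hi; simp only [Finset.mem_range] at hi; omega
  · intro i hi; simp only [Finset.mem_Icc] at hi; omega
  · intro i hi; simp only [Finset.mem_range] at hi; congr 2; omega

lemma pow_int {X : Type} [MeasurableSpace X] {μ : Measure X} {g : X → ℂ} {p : ℝ} (hp : 1 ≤ p)
    (hg : AEStronglyMeasurable g μ) {S : ENNReal} (hS : S ≠ ⊤) (h : ∫⁻ x, ‖g x‖ₑ^p ∂μ ≤ S) :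
    Integrable (fun x => ‖g x‖^p) μ ∧ ∫ x, ‖g x‖^p ∂μ ≤ S.toReal := by
  have hp0 : 0 ≤ p := by linarith
  have e : ∀ x, ‖g x‖ₑ^p = ENNReal.ofReal (‖g x‖^p) := fun x => by
    rw [← ENNReal.ofReal_rpow_of_nonneg (norm_nonneg _) hp0, ofReal_norm]
  have hm : AEStronglyMeasurable (fun x => ‖g x‖^p) μ :=
    (hg.norm.aemeasurable.pow_const p).aestronglyMeasurable
  simp_rw [e] at h
  constructor
  · refine ⟨hm, ?_⟩
    rw [hasFiniteIntegral_iff_ofReal (Filter.Eventually.of_forall fun x => by positivity)]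
    exact lt_of_le_of_lt h hS.lt_top
  · rw [integral_eq_lintegral_of_nonneg_ae (Filter.Eventually.of_forall fun x => by positivity) hm]
    exact ENNReal.toReal_mono hS h

lemma int_of_pow {X : Type} [MeasurableSpace X] {μ : Measure X} [IsFiniteMeasure μ] {g : X → ℂ} {p : ℝ} (hp : 1 ≤ p)
    (hg : AEStronglyMeasurable g μ) (h : Integrable (fun x => ‖g x‖^p) μ) : Integrable g μ := by
  refine Integrable.mono' (h.add (integrable_const (1:ℝ))) hg (Filter.Eventually.of_forall fun x => ?_)
  simp only [Pi.add_apply]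
  rcases le_total 1 ‖g x‖ with h1 | h1
  · have := Real.rpow_le_rpow_of_exponent_le h1 hp
    rw [Real.rpow_one] at this
    linarith
  · have : 0 ≤ ‖g x‖^p := by positivity
    linarith

lemma lint_union {X ι : Type} [MeasurableSpace X] {μ : Measure X} (f : X → ENNReal) (K : Finset ι) (s : ι → Set X) :
    ∫⁻ x in ⋃ k ∈ K, s k, f x ∂μ ≤ ∑ k ∈ K, ∫⁻ x in s k, f x ∂μ := by
  classical
  induction K using Finset.induction_on with
  | empty => simp
  | insert a K ha ih =>
    rw [Finset.set_biUnion_insert, Finset.sum_insert ha]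
    exact (lintegral_union_le _ _ _).trans (add_le_add le_rfl ih)

theorem main
    (m n : ℕ) (hn : 2 ≤ n) (p : ℝ) (hp1 : 1 ≤ p)
    (hp2 : p < (n : ℝ) / ((n : ℝ) - 1))
    (𝒦 : Finset ((Fin (m+1) → ℝ) × (Fin (m+1) → ℝ))) :
    ∃ C : ℝ, 0 < C ∧
      ∀ (U : Set (Fin (m+1) → ℝ)), IsOpen U → boxUnion 𝒦 ⊆ U →
      ∀ D : ℕ → List (Fin (m+1)) → (Fin (m+1) → ℝ) → ℂ,
      (∀ j ∈ Finset.Icc 1 n, ∀ L : List (Fin (m+1)), L.length ≤ n - 1 → ContinuousOn (D j L) U) →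
      (∀ j ∈ Finset.Icc 1 n, ∀ L : List (Fin (m+1)), L.length < n - 1 → ∀ i : Fin (m+1), ∀ x ∈ U,
        HasDerivAt (fun s : ℝ => D j L (Function.update x i s)) (D j (i :: L) x) (x i)) →
      (∀ j ∈ Finset.Icc 1 n, ∃ K : ℝ, ∀ L : List (Fin (m+1)), L.length = n - 1 →
        ∀ x ∈ boxUnion 𝒦, ∀ y ∈ boxUnion 𝒦, ‖D j L x - D j L y‖ ≤ K * dist x y) →
      ∀ V : Set (Fin (m+1) → ℝ), IsOpen V → IsCompact (closure V) →
        closure V ⊆ U → closure V ⊆ boxUnion 𝒦 →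
      ∀ l : (Fin (m+1) → ℝ) → ℂ, ContinuousOn l V →
      (∀ x ∈ V, l x ^ n + ∑ j ∈ Finset.Icc 1 n, D j [] x * l x ^ (n - j) = 0) →
      ∃ g : Fin (m+1) → (Fin (m+1) → ℝ) → ℂ,
        (∀ i, IntegrableOn (fun x => ‖g i x‖ ^ p) V volume) ∧
        (∀ i : Fin (m+1), ∀ φ : (Fin (m+1) → ℝ) → ℝ,
          ContDiff ℝ (⊤ : ℕ∞) φ → HasCompactSupport φ → tsupport φ ⊆ V →
          ∫ x in V, l x * ((fderiv ℝ φ x) (Pi.single i 1) : ℂ) =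
            - ∫ x in V, g i x * (φ x : ℂ)) ∧
        (∑ i : Fin (m+1), ∫ x in V, ‖g i x‖ ^ p) ^ (1 / p) ≤
          C * (Finset.Icc 1 n).sup' (Finset.nonempty_Icc.mpr (by omega))
            (fun j => CNormMulti n (boxUnion 𝒦) (D j) ^ ((j : ℝ)⁻¹)) := by
  have hpN : p * ((n-1:ℕ):ℝ) < ((n-1:ℕ):ℝ) + 1 := by
    have h2 : (2:ℝ) ≤ n := by exact_mod_cast hn
    rw [Nat.cast_sub (by omega), Nat.cast_one]
    rw [lt_div_iff₀ (by linarith)] at hp2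
    linarith
  have hp0 : 0 < p := by linarith
  choose C hC H using fun (i : Fin (m+1)) k => box_bound n hn p hp1 hpN i k
  set T : ENNReal := ∑ i, ∑ k ∈ 𝒦, C i k with hT
  have hTi : ∀ i, ∑ k ∈ 𝒦, C i k ≠ ⊤ := fun i => ENNReal.sum_ne_top.2 fun k _ => hC i k
  have hTt : T ≠ ⊤ := ENNReal.sum_ne_top.2 fun i _ => hTi i
  refine ⟨T.toReal ^ (1/p) + 1, by positivity, ?_⟩
  intro U hU hWU D hcont hder hlip V hV hVc hVU hVW l hl hroot
  have hVU : V ⊆ U := subset_closure.trans hVU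
  have hVW : V ⊆ boxUnion 𝒦 := subset_closure.trans hVW
  have hVfin : volume V < ⊤ := lt_of_le_of_lt (measure_mono subset_closure) hVc.measure_lt_top
  have : IsFiniteMeasure (volume.restrict V) := ⟨by simpa using hVfin⟩
  set N : ℕ → ℝ := fun j => CNormMulti n (boxUnion 𝒦) (D j) with hN
  have hfacts : ∀ j ∈ Finset.Icc 1 n, 0 ≤ N j ∧
      (∀ L, L.length ≤ n-1 → ∀ x ∈ boxUnion 𝒦, ‖D j L x‖ ≤ N j) ∧
      ∀ L, L.length = n-1 → ∀ x ∈ boxUnion 𝒦, ∀ y ∈ boxUnion 𝒦, ‖D j L x - D j L y‖ ≤ N j * dist x y := by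
    intro j hj
    obtain ⟨K, hK⟩ := hlip j hj
    exact CN_facts hWU (hder j hj) hK
  set N0 := (Finset.Icc 1 n).sup' (Finset.nonempty_Icc.mpr (by omega))
            (fun j => N j ^ ((j : ℝ)⁻¹)) with hN0
  have hle : ∀ j ∈ Finset.Icc 1 n, N j ^ ((j:ℝ)⁻¹) ≤ N0 := fun j hj =>
    Finset.le_sup' (fun j => N j ^ ((j : ℝ)⁻¹)) hj
  have hN0n : 0 ≤ N0 := by
    have h1 : 1 ∈ Finset.Icc 1 n := by simp; omega
    exact (Real.rpow_nonneg (hfacts 1 h1).1 _).trans (hle 1 h1)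
  have hNj : ∀ j ∈ Finset.Icc 1 n, N j ≤ N0 ^ j := by
    intro j hj
    have hj0 : j ≠ 0 := by simp at hj; omega
    have h1 := pow_le_pow_left₀ (Real.rpow_nonneg (hfacts j hj).1 _) (hle j hj) j
    rwa [Real.rpow_inv_natCast_pow (hfacts j hj).1 hj0] at h1
  have hmem : ∀ j : Fin n, n - (j:ℕ) ∈ Finset.Icc 1 n := fun j => by
    simp only [Finset.mem_Icc]; omega
  rcases hN0n.eq_or_lt with hz | hpos
  · -- zero case
    have hl0 : ∀ x ∈ V, l x = 0 := by
      intro x hx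
      have h1 := hroot x hx
      rw [Finset.sum_eq_zero, add_zero] at h1
      · exact pow_eq_zero_iff (by omega) |>.1 h1
      · intro j hj
        have hj0 : j ≠ 0 := by simp at hj; omega
        have h2 := ((hfacts j hj).2.1 [] (by simp) x (hVW hx)).trans (hNj j hj)
        rw [← hz, zero_pow hj0] at h2
        rw [norm_le_zero_iff.1 h2, zero_mul]
    refine ⟨fun _ _ => 0, ?_, ?_, ?_⟩
    · intro i; simp [Real.zero_rpow hp0.ne']
    · intro i φ _ _ _
      rw [setIntegral_congr_fun (g := fun _ => 0) hV.measurableSet (fun x hx => by simp [hl0 x hx])]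
      simp
    · rw [← hz]; simp [Real.zero_rpow hp0.ne', Real.zero_rpow (inv_ne_zero hp0.ne')]
  · have h0 : ∀ x ∈ V, eval (l x) (Pp n (fun j : Fin n => D (n-j) [] x)) = 0 := fun x hx => by
      rw [root_eq n (fun j => D j [] x)]; exact hroot x hx
    have hca : ∀ j : Fin n, ContinuousOn (D (n-j) []) V := fun j =>
      (hcont _ (hmem j) _ (by simp)).mono hVU
    have hca' : ∀ i, ∀ j : Fin n, ContinuousOn (D (n-j) [i]) V := fun i j =>
      (hcont _ (hmem j) _ (by simp; omega)).mono hVU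
    set g : Fin (m+1) → (Fin (m+1) → ℝ) → ℂ := fun i x => 
      Gd n (fun j : Fin n => D (n-j) [] x) (fun j : Fin n => D (n-j) [i] x) (l x) with hg
    have hgm : ∀ i, AEStronglyMeasurable (g i) (volume.restrict V) := by
      intro i
      have := Gd_meas (n := n) (a := fun x (j : Fin n) => D (n-j) [] x) 
        (a' := fun x (j : Fin n) => D (n-j) [i] x) hV.measurableSet
        (continuousOn_pi.2 hca) (continuousOn_pi.2 (hca' i)) hl h0
      exact (aestronglyMeasurable_indicator_iff hV.measurableSet).1 this.aestronglyMeasurable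
    have hgb : ∀ i, ∫⁻ x in V, ‖g i x‖ₑ^p ≤ (∑ k ∈ 𝒦, C i k) * ENNReal.ofReal (N0^p) := by
      intro i
      have hVe : V ⊆ ⋃ k ∈ 𝒦, V ∩ (univ.pi fun i => Ioo (k.1 i) (k.2 i)) := by
        intro x hx
        obtain ⟨k, hk, hxk⟩ := mem_boxUnion.1 (hVW hx)
        simp only [mem_iUnion]
        exact ⟨k, hk, hx, hxk⟩
      refine (lintegral_mono_set hVe).trans ?_
      refine (lint_union _ _ _).trans ?_
      rw [Finset.sum_mul]
      refine Finset.sum_le_sum fun k hk => ?_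
      have hkW : (univ.pi fun i => Ioo (k.1 i) (k.2 i)) ⊆ boxUnion 𝒦 := fun x hx => mem_boxUnion.2 ⟨k, hk, hx⟩
      refine H i k N0 D V l hpos ?_ ?_ ?_ hV.measurableSet hca (hca' i) hl h0
      · exact fun j L hL x hx => hder _ (hmem j) L hL i x (hWU (hkW hx))
      · exact fun j L hL x hx => ((hfacts _ (hmem j)).2.1 L hL x (hkW hx)).trans (hNj _ (hmem j))
      · intro j L hL x hx y hy
        refine ((hfacts _ (hmem j)).2.2 L hL x (hkW hx) y (hkW hy)).trans ?_
        exact mul_le_mul_of_nonneg_right (hNj _ (hmem j)) dist_nonneg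
    have hfin : ∀ i, (∑ k ∈ 𝒦, C i k) * ENNReal.ofReal (N0^p) ≠ ⊤ := fun i =>
      ENNReal.mul_ne_top (hTi i) ENNReal.ofReal_ne_top
    have hres := fun i => pow_int hp1 (hgm i) (hfin i) (hgb i)
    refine ⟨g, fun i => (hres i).1, ?_, ?_⟩
    · intro i φ hφ hc hs
      refine weak i hV (a := fun x (j : Fin n) => D (n-j) [] x) 
        (a' := fun x (j : Fin n) => D (n-j) [i] x) (continuousOn_pi.2 hca) ?_ hl h0 
        (int_of_pow hp1 (hgm i) (hres i).1) hφ hc hs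
      exact fun j x hx => hder _ (hmem j) [] (by simp; omega) i x (hVU hx)
    · have hsum : ∑ i, ∫ x in V, ‖g i x‖^p ≤ T.toReal * N0^p := by
        refine (Finset.sum_le_sum fun i _ => (hres i).2).trans_eq ?_
        rw [hT, ENNReal.toReal_sum (fun i _ => hTi i), Finset.sum_mul]
        refine Finset.sum_congr rfl fun i _ => ?_
        rw [ENNReal.toReal_mul, ENNReal.toReal_ofReal (by positivity)]
      have hs0 : 0 ≤ ∑ i, ∫ x in V, ‖g i x‖^p := Finset.sum_nonneg fun i _ =>
        integral_nonneg fun x => by positivity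
      refine (Real.rpow_le_rpow hs0 hsum (by positivity)).trans ?_
      rw [Real.mul_rpow ENNReal.toReal_nonneg (by positivity), ← Real.rpow_mul hN0n, mul_one_div_cancel hp0.ne',
        Real.rpow_one, add_mul]
      linarith

end RS

/-- A continuous root `λ` on a relatively compact open `V ⊆ U` of a monic
polynomial of degree `n` whose coefficients are `(n-1)`-times continuously differentiable on
`U` with Lipschitz top partial derivatives on the box union `W ⊇ V̄` belongs to `W^{1,p}(V)`
for `1 ≤ p < n/(n-1)`: there are `g_i ∈ L^p(V)` representing the distributional partial
derivatives of `λ`, with `(∑_i ‖g_i‖_{L^p(V)}^p)^{1/p} ≤ C(m,n,p,𝒦) max_j ‖a_j‖^{1/j}`. -/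
theorem continuous_root_Sobolev_multiparameter
    (m n : ℕ) (hm : 1 ≤ m) (hn : 2 ≤ n) (p : ℝ) (hp1 : 1 ≤ p)
    (hp2 : p < (n : ℝ) / ((n : ℝ) - 1))
    (𝒦 : Finset ((Fin m → ℝ) × (Fin m → ℝ))) :
    ∃ C : ℝ, 0 < C ∧
      ∀ (U : Set (Fin m → ℝ)), IsOpen U → boxUnion 𝒦 ⊆ U →
      ∀ D : ℕ → List (Fin m) → (Fin m → ℝ) → ℂ,
      (∀ j ∈ Finset.Icc 1 n, ∀ L : List (Fin m), L.length ≤ n - 1 → ContinuousOn (D j L) U) →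
      (∀ j ∈ Finset.Icc 1 n, ∀ L : List (Fin m), L.length < n - 1 → ∀ i : Fin m, ∀ x ∈ U,
        HasDerivAt (fun s : ℝ => D j L (Function.update x i s)) (D j (i :: L) x) (x i)) →
      (∀ j ∈ Finset.Icc 1 n, ∃ K : ℝ, ∀ L : List (Fin m), L.length = n - 1 →
        ∀ x ∈ boxUnion 𝒦, ∀ y ∈ boxUnion 𝒦, ‖D j L x - D j L y‖ ≤ K * dist x y) →
      ∀ V : Set (Fin m → ℝ), IsOpen V → IsCompact (closure V) →
        closure V ⊆ U → closure V ⊆ boxUnion 𝒦 →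
      ∀ l : (Fin m → ℝ) → ℂ, ContinuousOn l V →
      (∀ x ∈ V, l x ^ n + ∑ j ∈ Finset.Icc 1 n, D j [] x * l x ^ (n - j) = 0) →
      ∃ g : Fin m → (Fin m → ℝ) → ℂ,
        (∀ i, IntegrableOn (fun x => ‖g i x‖ ^ p) V volume) ∧
        (∀ i : Fin m, ∀ φ : (Fin m → ℝ) → ℝ,
          ContDiff ℝ (⊤ : ℕ∞) φ → HasCompactSupport φ → tsupport φ ⊆ V →
          ∫ x in V, l x * ((fderiv ℝ φ x) (Pi.single i 1) : ℂ) =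
            - ∫ x in V, g i x * (φ x : ℂ)) ∧
        (∑ i : Fin m, ∫ x in V, ‖g i x‖ ^ p) ^ (1 / p) ≤
          C * (Finset.Icc 1 n).sup' (Finset.nonempty_Icc.mpr (by omega))
            (fun j => CNormMulti n (boxUnion 𝒦) (D j) ^ ((j : ℝ)⁻¹)) := by
  obtain ⟨m', rfl⟩ : ∃ m', m = m' + 1 := ⟨m - 1, by omega⟩
  exact RS.main m' n hn p hp1 hp2 𝒦
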